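/- There exists a radial Schwartz function g: ℝ⁸ → ℝ satisfying: g(x) ≤ 0 for all ‖x‖ ≥ √2; ĝ(x) ≥ 0 for all x ∈ ℝ⁸; g(0) = ĝ(0) = 1; moreover g(x) ≠ 0 and ĝ(x) ≠ 0 for every vector x with ‖x‖² ∉ 2ℤ_{>0}. -/

import Mathlib

open MeasureTheory FourierTransform

/-!
Put `φ(z) = ε z² k(-1 / z)`. If `k` satisfies suitable functional equations (`IsEigenKernel ε k`),
then integrating `k` and translates of `φ` against the Gaussians `e^{πi‖x‖²z}` along contours from
`i` to the cusps `-1, 0, 1, i∞` gives a radial Schwartz function on `ℝ⁸`. The Gaussian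
`e^{πi‖x‖²z}` has Fourier transform `z⁻⁴ e^{πi‖x‖²(-1/z)}`, so the substitution `z ↦ -1 / z`
permutes the contours and the function is an eigenfunction of the Fourier transform with eigenvalue
`ε`. For `‖x‖² > 2` the contours can be moved to the imaginary axis, where the function becomes
`sin²(π‖x‖² / 2)` times a Laplace transform; this accounts for the zeros at the vectors with
`‖x‖² ∈ 2ℤ`.

Viazovska's kernels `φ₀` (quasimodular, `ε = 1`) and `ψ_S` (built from theta functions, `ε = -1`)
give eigenfunctions `a` and `b`. In `g = a - (36 / π²) b` and its transform `a + (36 / π²) b` the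
densities of the Laplace transforms have constant signs, which follows from explicit bounds on
`q`-expansions. In `g` the term `e^{2πt}` contributes a pole at `‖x‖² = 2`, which lowers the order
of vanishing there and makes `g` change sign; in the transform this term cancels.
Since `b` vanishes at the origin, `g` and its transform agree there.
-/

namespace Viazovska

open Complex Set Filter Topology
open UpperHalfPlane (upperHalfPlaneSet ofComplex ofComplex_apply_of_im_pos)
open ArithmeticFunction (sigma)
open scoped Real SchwartzMap

/-! ### Superpositions of Gaussians -/

section SchwartzProfile

variable {h : ℂ → ℂ} {δ : ℝ}

lemma differentiableOn_iteratedDeriv {s : Set ℂ} (hs : IsOpen s) (hh : DifferentiableOn ℂ h s)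
    (n : ℕ) : DifferentiableOn ℂ (iteratedDeriv n h) s := by
  induction n with
  | zero => rwa [iteratedDeriv_zero]
  | succ n ih => rw [iteratedDeriv_succ]; exact ih.deriv hs

lemma iteratedDeriv_comp_ofReal {s : Set ℂ} (hs : IsOpen s) (hh : DifferentiableOn ℂ h s) (n : ℕ)
    {v : ℝ} (hv : (v : ℂ) ∈ s) :
    iteratedDeriv n (fun w : ℝ ↦ h w) v = iteratedDeriv n h (v : ℂ) := by
  induction n generalizing v with
  | zero => simp only [iteratedDeriv_zero]
  | succ n ih =>
    rw [iteratedDeriv_succ, iteratedDeriv_succ]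
    have hcongr : iteratedDeriv n (fun w : ℝ ↦ h w) =ᶠ[𝓝 v] fun w : ℝ ↦ iteratedDeriv n h w := by
      filter_upwards [(hs.preimage continuous_ofReal).mem_nhds hv] with w hw using ih hw
    have hdiff : DifferentiableAt ℂ (iteratedDeriv n h) v :=
      (differentiableOn_iteratedDeriv hs hh n).differentiableAt (hs.mem_nhds hv)
    exact hcongr.deriv_eq.trans hdiff.hasDerivAt.comp_ofReal.deriv

lemma contDiff_smoothTransition_mul (hδ : 0 < δ) (hh : DifferentiableOn ℂ h {u | -δ < u.re}) :
    ContDiff ℝ (⊤ : ℕ∞) fun v : ℝ ↦ (Real.smoothTransition (2 * v / δ + 1) : ℂ) * h v := by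
  have hopen : IsOpen {u : ℂ | -δ < u.re} := isOpen_lt continuous_const continuous_re
  refine contDiff_iff_contDiffAt.2 fun v ↦ ?_
  rcases lt_or_ge (-δ) v with hv | hv
  · have hcut : ContDiff ℝ (⊤ : ℕ∞) fun w : ℝ ↦ Real.smoothTransition (2 * w / δ + 1) :=
      Real.smoothTransition.contDiff.comp (by fun_prop)
    have hh' : ContDiffAt ℂ (⊤ : ℕ∞) h v :=
      (hh.contDiffOn hopen).contDiffAt (hopen.mem_nhds (by simpa using hv))
    exact (ofRealCLM.contDiff.comp hcut).contDiffAt.mul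
      ((hh'.restrict_scalars ℝ).comp v ofRealCLM.contDiff.contDiffAt)
  · refine (contDiffAt_const (c := (0 : ℂ))).congr_of_eventuallyEq ?_
    filter_upwards [Iio_mem_nhds (show v < -(δ / 2) by linarith)] with w hw
    have hw' : 2 * w / δ + 1 ≤ 0 := by
      rw [← sub_neg_eq_add, sub_nonpos, div_le_iff₀ hδ]; linarith [mem_Iio.1 hw]
    simp [Real.smoothTransition.zero_of_nonpos hw']

lemma pow_mul_norm_iteratedDeriv_le (hδ : 0 < δ) (hh : DifferentiableOn ℂ h {u | -δ < u.re})
    {k : ℕ} {C : ℝ} (hC : ∀ u : ℂ, 0 ≤ u.re → |u.im| ≤ 1 → u.re ^ k * ‖h u‖ ≤ C)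
    (n : ℕ) {v : ℝ} (hv : 1 ≤ v) :
    v ^ k * ‖iteratedDeriv n h (v : ℂ)‖ ≤ n.factorial * (2 ^ k * C) / (1 / 2) ^ n := by
  have hre {u : ℂ} (hu : ‖u - v‖ ≤ 1 / 2) : v - 1 / 2 ≤ u.re := by
    have := neg_le_of_abs_le ((abs_re_le_norm (u - v)).trans hu)
    rw [sub_re, ofReal_re] at this
    linarith
  have hcauchy := norm_iteratedDeriv_le_of_forall_mem_sphere_norm_le
    (f := fun u ↦ (v : ℂ) ^ k * h u) (c := (v : ℂ)) (R := 1 / 2) (C := 2 ^ k * C) n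
    (by norm_num) ?_ ?_
  · have hv0 : 0 ≤ v := by linarith
    simpa [iteratedDeriv_const_mul_field, abs_of_nonneg hv0] using hcauchy
  · refine ((hh.mono fun u hu ↦ ?_).const_mul _).diffContOnCl
    rw [closure_ball _ (by norm_num), mem_closedBall_iff_norm] at hu
    exact (by linarith [hre hu] : -δ < u.re)
  · intro u hu
    have hu' : ‖u - v‖ ≤ 1 / 2 := (mem_sphere_iff_norm.1 hu).le
    have him : |u.im| ≤ 1 := by
      have := (abs_im_le_norm (u - v)).trans hu'
      rw [sub_im, ofReal_im, sub_zero] at this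
      linarith
    calc ‖(v : ℂ) ^ k * h u‖ = v ^ k * ‖h u‖ := by
          rw [norm_mul, norm_pow, norm_real, Real.norm_of_nonneg (by linarith)]
      _ ≤ (2 * u.re) ^ k * ‖h u‖ := by gcongr; linarith [hre hu']
      _ = 2 ^ k * (u.re ^ k * ‖h u‖) := by ring
      _ ≤ 2 ^ k * C := by gcongr; exact hC u (by linarith [hre hu']) him

lemma exists_schwartzMap_eqOn_nonneg (hδ : 0 < δ) (hh : DifferentiableOn ℂ h {u | -δ < u.re})
    (hdecay : ∀ k : ℕ, ∃ C, ∀ u : ℂ, 0 ≤ u.re → |u.im| ≤ 1 → u.re ^ k * ‖h u‖ ≤ C) :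
    ∃ S : 𝓢(ℝ, ℂ), ∀ v : ℝ, 0 ≤ v → S v = h v := by
  set g : ℝ → ℂ := fun v ↦ (Real.smoothTransition (2 * v / δ + 1) : ℂ) * h v with hg
  have hsmooth : ContDiff ℝ (⊤ : ℕ∞) g := contDiff_smoothTransition_mul hδ hh
  have hg_nonneg {v : ℝ} (hv : 0 ≤ v) : g v = h v := by
    have : 1 ≤ 2 * v / δ + 1 := le_add_of_nonneg_left (by positivity)
    simp only [hg, Real.smoothTransition.one_of_one_le this, ofReal_one, one_mul]
  have hg_zero : EqOn g 0 (Iio (-(δ / 2))) := fun v hv ↦ by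
    have : 2 * v / δ + 1 ≤ 0 := by
      rw [← sub_neg_eq_add, sub_nonpos, div_le_iff₀ hδ]; linarith [mem_Iio.1 hv]
    simp [hg, Real.smoothTransition.zero_of_nonpos this]
  refine ⟨⟨g, hsmooth, fun k n ↦ ?_⟩, fun v hv ↦ hg_nonneg hv⟩
  obtain ⟨C, hC⟩ := hdecay k
  have hcont : Continuous fun v : ℝ ↦ ‖v‖ ^ k * ‖iteratedFDeriv ℝ n g v‖ :=
    (continuous_norm.pow k).mul (hsmooth.continuous_iteratedFDeriv (by exact_mod_cast le_top)).norm
  obtain ⟨C', hC'⟩ := (isCompact_Icc (a := -δ) (b := 1)).bddAbove_image hcont.continuousOn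
  refine ⟨max C' (n.factorial * (2 ^ k * C) / (1 / 2) ^ n), fun v ↦ ?_⟩
  rcases lt_or_ge v (-δ) with hv | hv
  · have hlocal : g =ᶠ[𝓝 v] fun _ ↦ 0 :=
      hg_zero.eventuallyEq_of_mem (Iio_mem_nhds (by linarith))
    have hzero : iteratedFDeriv ℝ n g v = 0 := by
      rw [(hlocal.iteratedFDeriv ℝ n).eq_of_nhds, iteratedFDeriv_fun_zero, Pi.zero_apply]
    have hC'0 := hC' ⟨0, ⟨by linarith, zero_le_one⟩, rfl⟩
    rw [hzero, norm_zero, mul_zero]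
    exact le_max_of_le_left (le_trans (by positivity) hC'0)
  rcases le_or_gt v 1 with hv1 | hv1
  · exact le_max_of_le_left (hC' ⟨v, ⟨hv, hv1⟩, rfl⟩)
  · have hlocal : g =ᶠ[𝓝 v] fun w : ℝ ↦ h w := by
      filter_upwards [Ioi_mem_nhds (zero_lt_one.trans hv1)] with w hw using hg_nonneg hw.le
    have hv_mem : (v : ℂ) ∈ {u : ℂ | -δ < u.re} := (by linarith : -δ < v)
    rw [norm_iteratedFDeriv_eq_norm_iteratedDeriv, hlocal.iteratedDeriv_eq,
      iteratedDeriv_comp_ofReal (isOpen_lt continuous_const continuous_re) hh n hv_mem,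
      Real.norm_of_nonneg (by linarith)]
    exact le_max_of_le_right (pow_mul_norm_iteratedDeriv_le hδ hh hC n hv1.le)

lemma exists_schwartzMap_comp_norm_sq {E : Type*} [NormedAddCommGroup E] [InnerProductSpace ℝ E]
    (hδ : 0 < δ) (hh : DifferentiableOn ℂ h {u | -δ < u.re})
    (hdecay : ∀ k : ℕ, ∃ C, ∀ u : ℂ, 0 ≤ u.re → |u.im| ≤ 1 → u.re ^ k * ‖h u‖ ≤ C) :
    ∃ S : 𝓢(E, ℂ), ∀ x, S x = h ((‖x‖ ^ 2 : ℝ) : ℂ) := by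
  obtain ⟨S, hS⟩ := exists_schwartzMap_eqOn_nonneg hδ hh hdecay
  refine ⟨SchwartzMap.compCLM ℝ (g := fun x : E ↦ ‖x‖ ^ 2)
    (Function.hasTemperateGrowth_norm_sq E) ⟨1, 1, fun x ↦ ?_⟩ S, fun x ↦ hS _ (sq_nonneg _)⟩
  rw [Real.norm_of_nonneg (sq_nonneg _)]
  nlinarith [sq_nonneg (‖x‖ - 1), norm_nonneg x]

end SchwartzProfile

/-- The superposition `∫_a^∞ c(s) e^{πi u z(s)} ds` of the Gaussians `x ↦ e^{πi ‖x‖² z(s)}` along a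
curve `z` in the upper half-plane, as a function of the complexified squared radius `u = ‖x‖²`. -/
noncomputable def gaussianSuperposition (a : ℝ) (c z : ℝ → ℂ) (u : ℂ) : ℂ :=
  ∫ s in Ioi a, c s * cexp (π * I * u * z s)

/-- Conditions on the weight `c` and the curve `z` under which `gaussianSuperposition a c z` is
holomorphic and rapidly decreasing: the weight decays exponentially, and the curve stays in a
vertical strip, approaching the real axis no faster than `1 / (2 s)`. -/
structure IsAdmissible (a C : ℝ) (c z : ℝ → ℂ) : Prop where
  half_le : 1 / 2 ≤ a
  continuousOn_weight : ContinuousOn c (Ioi a)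
  continuousOn_curve : ContinuousOn z (Ioi a)
  norm_weight_le : ∀ s ∈ Ioi a, ‖c s‖ ≤ C * rexp (-π * s)
  le_im_curve : ∀ s ∈ Ioi a, 1 / (2 * s) ≤ (z s).im
  im_curve_le : ∀ s ∈ Ioi a, (z s).im ≤ s + 1 / 2
  abs_re_curve_le : ∀ s ∈ Ioi a, |(z s).re| ≤ 2

lemma norm_cexp_pi_mul_I_mul (u z : ℂ) :
    ‖cexp (π * I * u * z)‖ = rexp (-(π * (u.re * z.im + u.im * z.re))) := by
  rw [norm_exp]
  congr 1
  simp only [mul_re, mul_im, ofReal_re, ofReal_im, I_re, I_im]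
  ring

lemma integrableOn_const_mul_exp_neg_mul (a K : ℝ) {b : ℝ} (hb : 0 < b) :
    IntegrableOn (fun s ↦ K * rexp (-b * s)) (Ioi a) :=
  (exp_neg_integrableOn_Ioi a hb).const_mul K

lemma pow_le_factorial_mul_exp {x : ℝ} (hx : 0 ≤ x) (k : ℕ) :
    x ^ k ≤ k.factorial * rexp x := by
  have := Real.pow_div_factorial_le_exp x hx k
  rwa [div_le_iff₀' (by positivity)] at this

lemma pow_le_factorial_sq_mul_exp {x s : ℝ} (hx : 0 ≤ x) (hs : 0 < s) (k : ℕ) :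
    x ^ k ≤ (k.factorial : ℝ) ^ 2 * (rexp s * rexp (π * (x * (1 / (2 * s))))) := by
  have hle : x ≤ s * (π * (x * (1 / (2 * s)))) := by
    have : s * (π * (x * (1 / (2 * s)))) = π / 2 * x := by field_simp
    rw [this]
    nlinarith [Real.pi_gt_three]
  calc x ^ k ≤ (s * (π * (x * (1 / (2 * s))))) ^ k := by gcongr
    _ = s ^ k * (π * (x * (1 / (2 * s)))) ^ k := mul_pow ..
    _ ≤ (k.factorial * rexp s) * (k.factorial * rexp (π * (x * (1 / (2 * s))))) := by
        gcongr <;> exact pow_le_factorial_mul_exp (by positivity) k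
    _ = _ := by ring

namespace IsAdmissible

variable {a C : ℝ} {c z : ℝ → ℂ} {s : ℝ} {u : ℂ}

lemma nonneg (h : IsAdmissible a C c z) : 0 ≤ C :=
  nonneg_of_mul_nonneg_left ((norm_nonneg _).trans (h.norm_weight_le (a + 1) (by simp)))
    (Real.exp_pos _)

lemma pos_of_mem (h : IsAdmissible a C c z) (hs : s ∈ Ioi a) : 0 < s :=
  (by norm_num : (0 : ℝ) < 1 / 2).trans_le (h.half_le.trans (mem_Ioi.1 hs).le)

lemma im_curve_pos (h : IsAdmissible a C c z) (hs : s ∈ Ioi a) : 0 < (z s).im := by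
  have := h.pos_of_mem hs
  exact lt_of_lt_of_le (by positivity) (h.le_im_curve s hs)

lemma continuousOn_integrand (h : IsAdmissible a C c z) (u : ℂ) :
    ContinuousOn (fun s ↦ c s * cexp (π * I * u * z s)) (Ioi a) :=
  h.continuousOn_weight.mul (continuousOn_const.mul h.continuousOn_curve).cexp

lemma neg_im_mul_re_curve_le (h : IsAdmissible a C c z) (hs : s ∈ Ioi a) {M : ℝ}
    (hM : |u.im| ≤ M) : -(u.im * (z s).re) ≤ 2 * M := by
  refine (neg_le_abs _).trans ?_
  rw [abs_mul, mul_comm]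
  exact mul_le_mul (h.abs_re_curve_le s hs) hM (abs_nonneg _) zero_le_two

lemma norm_integrand_le (h : IsAdmissible a C c z) (hs : s ∈ Ioi a) {B : ℝ}
    (hB : -(u.re * (z s).im + u.im * (z s).re) ≤ B) :
    ‖c s * cexp (π * I * u * z s)‖ ≤ C * rexp (-π * s) * rexp (π * B) := by
  rw [norm_mul, norm_cexp_pi_mul_I_mul, ← mul_neg]
  have := h.nonneg
  gcongr
  exact h.norm_weight_le s hs

lemma norm_integrand_le_of_abs_im_le (h : IsAdmissible a C c z) (hs : s ∈ Ioi a) {M : ℝ}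
    (hre : -1 / 2 ≤ u.re) (him : |u.im| ≤ M) :
    ‖c s * cexp (π * I * u * z s)‖ ≤ C * rexp (π * (2 * M + 1 / 4)) * rexp (-(π / 2) * s) := by
  have hre' : -(u.re * (z s).im) ≤ 1 / 2 * (s + 1 / 2) := by
    nlinarith [h.im_curve_pos hs, h.im_curve_le s hs]
  have hexp : -(u.re * (z s).im + u.im * (z s).re) ≤ 2 * M + 1 / 2 * (s + 1 / 2) := by
    linarith [h.neg_im_mul_re_curve_le hs him]
  refine (h.norm_integrand_le hs hexp).trans_eq ?_
  rw [mul_assoc, mul_assoc, ← Real.exp_add, ← Real.exp_add]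
  ring_nf

lemma norm_curve_le (h : IsAdmissible a C c z) (hs : s ∈ Ioi a) : ‖z s‖ ≤ 4 * rexp s := by
  have him := h.im_curve_le s hs
  calc ‖z s‖ ≤ |(z s).re| + |(z s).im| := norm_le_abs_re_add_abs_im _
    _ ≤ 2 + (s + 1 / 2) := by
        rw [abs_of_pos (h.im_curve_pos hs)]; exact add_le_add (h.abs_re_curve_le s hs) him
    _ ≤ 4 * rexp s := by linarith [Real.add_one_le_exp s, h.pos_of_mem hs]

lemma integrableOn_integrand (h : IsAdmissible a C c z) (hu : -1 / 2 ≤ u.re) :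
    IntegrableOn (fun s ↦ c s * cexp (π * I * u * z s)) (Ioi a) := by
  refine (integrableOn_const_mul_exp_neg_mul a (C * rexp (π * (2 * |u.im| + 1 / 4)))
    (half_pos Real.pi_pos)).mono'
    ((h.continuousOn_integrand u).aestronglyMeasurable measurableSet_Ioi) ?_
  filter_upwards [ae_restrict_mem measurableSet_Ioi] with s hs
  exact h.norm_integrand_le_of_abs_im_le hs hu le_rfl

lemma norm_deriv_integrand_le (h : IsAdmissible a C c z) (hs : s ∈ Ioi a) {M : ℝ}
    (hre : -1 / 2 ≤ u.re) (him : |u.im| ≤ M) :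
    ‖π * I * z s * (c s * cexp (π * I * u * z s))‖ ≤
      4 * π * (C * rexp (π * (2 * M + 1 / 4))) * rexp (-(π / 2 - 1) * s) := by
  have := h.nonneg
  calc ‖π * I * z s * (c s * cexp (π * I * u * z s))‖
      = π * ‖z s‖ * ‖c s * cexp (π * I * u * z s)‖ := by
        simp only [norm_mul, norm_real, norm_I, mul_one, Real.norm_of_nonneg Real.pi_pos.le]
    _ ≤ π * (4 * rexp s) * (C * rexp (π * (2 * M + 1 / 4)) * rexp (-(π / 2) * s)) := by
        gcongr
        · exact h.norm_curve_le hs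
        · exact h.norm_integrand_le_of_abs_im_le hs hre him
    _ = 4 * π * (C * rexp (π * (2 * M + 1 / 4))) * (rexp s * rexp (-(π / 2) * s)) := by ring
    _ = _ := by rw [← Real.exp_add]; ring_nf

lemma differentiableOn (h : IsAdmissible a C c z) :
    DifferentiableOn ℂ (gaussianSuperposition a c z) {u | -1 / 2 < u.re} := by
  intro u₀ hu₀
  have hre : IsOpen {u : ℂ | -1 / 2 < u.re} := isOpen_lt continuous_const continuous_re
  have him : IsOpen {u : ℂ | |u.im| < |u₀.im| + 1} := isOpen_lt (by fun_prop) continuous_const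
  have hderiv := hasDerivAt_integral_of_dominated_loc_of_deriv_le (μ := volume.restrict (Ioi a))
    (F := fun (u : ℂ) (s : ℝ) ↦ c s * cexp (π * I * u * z s))
    (F' := fun (u : ℂ) (s : ℝ) ↦ π * I * z s * (c s * cexp (π * I * u * z s)))
    (bound := fun s ↦ 4 * π * (C * rexp (π * (2 * (|u₀.im| + 1) + 1 / 4))) *
      rexp (-(π / 2 - 1) * s))
    (x₀ := u₀) ((hre.inter him).mem_nhds ⟨hu₀, by simp⟩)
    (.of_forall fun u ↦
      (h.continuousOn_integrand u).aestronglyMeasurable measurableSet_Ioi)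
    (h.integrableOn_integrand (le_of_lt hu₀))
    (((continuousOn_const.mul h.continuousOn_curve).mul
      (h.continuousOn_integrand u₀)).aestronglyMeasurable measurableSet_Ioi)
    ?_ (integrableOn_const_mul_exp_neg_mul a _ (by linarith [Real.pi_gt_three])) ?_
  · exact hderiv.2.differentiableAt.differentiableWithinAt
  · filter_upwards [ae_restrict_mem measurableSet_Ioi] with s hs u hu
    exact h.norm_deriv_integrand_le hs (le_of_lt hu.1) (le_of_lt hu.2)
  · filter_upwards with s u _
    have : HasDerivAt (fun u : ℂ ↦ π * I * u * z s) (π * I * z s) u := by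
      simpa using ((hasDerivAt_id u).const_mul (π * I : ℂ)).mul_const (z s)
    exact (this.cexp.const_mul (c s)).congr_deriv (by ring)

lemma exists_pow_mul_norm_le (h : IsAdmissible a C c z) (k : ℕ) :
    ∃ D, ∀ u : ℂ, 0 ≤ u.re → |u.im| ≤ 1 →
      u.re ^ k * ‖gaussianSuperposition a c z u‖ ≤ D := by
  have hrate : 0 < π - 1 := by linarith [Real.pi_gt_three]
  refine ⟨∫ s in Ioi a, (k.factorial : ℝ) ^ 2 * C * rexp (2 * π) * rexp (-(π - 1) * s),
    fun u hu him ↦ ?_⟩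
  rw [gaussianSuperposition, ← Real.norm_of_nonneg (pow_nonneg hu k), ← norm_real, ← norm_mul,
    ← integral_const_mul]
  refine norm_integral_le_of_norm_le (integrableOn_const_mul_exp_neg_mul a _ hrate) ?_
  filter_upwards [ae_restrict_mem measurableSet_Ioi] with s hs
  have hs0 := h.pos_of_mem hs
  have := h.nonneg
  set E := u.re * (1 / (2 * s))
  have hexp : -(u.re * (z s).im + u.im * (z s).re) ≤ 2 - E := by
    linarith [h.neg_im_mul_re_curve_le hs him, mul_le_mul_of_nonneg_left (h.le_im_curve s hs) hu]
  rw [norm_mul, norm_real, Real.norm_of_nonneg (pow_nonneg hu k)]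
  calc u.re ^ k * ‖c s * cexp (π * I * u * z s)‖
      ≤ (k.factorial : ℝ) ^ 2 * (rexp s * rexp (π * E)) *
        (C * rexp (-π * s) * rexp (π * (2 - E))) := by
        gcongr
        · exact pow_le_factorial_sq_mul_exp hu hs0 k
        · exact h.norm_integrand_le hs hexp
    _ = (k.factorial : ℝ) ^ 2 * C *
        (rexp s * rexp (π * E) * rexp (-π * s) * rexp (π * (2 - E))) := by ring
    _ = _ := by
        rw [mul_assoc ((k.factorial : ℝ) ^ 2 * C)]
        simp only [← Real.exp_add]
        ring_nf

lemma exists_schwartzMap {E : Type*} [NormedAddCommGroup E] [InnerProductSpace ℝ E]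
    (h : IsAdmissible a C c z) :
    ∃ S : 𝓢(E, ℂ), ∀ x, S x = gaussianSuperposition a c z ((‖x‖ ^ 2 : ℝ) : ℂ) :=
  exists_schwartzMap_comp_norm_sq (by norm_num : (0 : ℝ) < 1 / 2)
    (by simpa only [neg_div] using h.differentiableOn) h.exists_pow_mul_norm_le

end IsAdmissible

section GaussianFourier

variable {E : Type*} [NormedAddCommGroup E] [InnerProductSpace ℝ E] [FiniteDimensional ℝ E]
  [MeasurableSpace E] [BorelSpace E] {n : ℕ}

lemma fourier_cexp_pi_mul_I_mul_norm_sq (hE : Module.finrank ℝ E = 2 * n) {w : ℂ}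
    (hw : 0 < w.im) (y : E) :
    𝓕 (fun x : E ↦ cexp (π * I * ((‖x‖ ^ 2 : ℝ) : ℂ) * w)) y =
      (I * w⁻¹) ^ n * cexp (π * I * ((‖y‖ ^ 2 : ℝ) : ℂ) * (-1 / w)) := by
  have hw0 : w ≠ 0 := by rintro rfl; simp at hw
  have hgauss : (fun x : E ↦ cexp (π * I * ((‖x‖ ^ 2 : ℝ) : ℂ) * w)) =
      fun x : E ↦ cexp (-(-(π * I * w)) * ‖x‖ ^ 2) := by
    ext x; congr 1; push_cast; ring
  have hbase : (π : ℂ) / -(π * I * w) = I * w⁻¹ := by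
    field_simp [ofReal_ne_zero.2 Real.pi_ne_zero]
    rw [I_sq]
  have hexp : ((2 * n : ℕ) : ℂ) / 2 = n := by push_cast; ring
  rw [hgauss, fourier_gaussian_innerProductSpace (by simpa using mul_pos Real.pi_pos hw), hE,
    hbase, hexp, cpow_natCast]
  congr 2
  push_cast
  field_simp
  rw [I_sq]
  ring

lemma integral_rexp_neg_mul_norm_sq (hE : Module.finrank ℝ E = 2 * n) {b : ℝ} (hb : 0 < b) :
    ∫ x : E, rexp (-b * ‖x‖ ^ 2) = (π / b) ^ n := by
  have hexp : ((2 * n : ℕ) : ℝ) / 2 = n := by push_cast; ring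
  rw [GaussianFourier.integral_rexp_neg_mul_sq_norm hb, hE, hexp, Real.rpow_natCast]

lemma integrable_rexp_neg_mul_norm_sq (hE : Module.finrank ℝ E = 2 * n) {b : ℝ} (hb : 0 < b) :
    Integrable fun x : E ↦ rexp (-b * ‖x‖ ^ 2) := by
  refine .of_integral_ne_zero ?_
  rw [integral_rexp_neg_mul_norm_sq hE hb]
  positivity

namespace IsAdmissible

variable {a C : ℝ} {c z : ℝ → ℂ}

lemma norm_weight_mul_inv_im_pow_le (h : IsAdmissible a C c z) {s : ℝ} (hs : s ∈ Ioi a) (n : ℕ) :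
    ‖c s‖ * (1 / (z s).im) ^ n ≤ 2 ^ n * n.factorial * C * rexp (-(π - 1) * s) := by
  have hs0 := h.pos_of_mem hs
  have him := h.im_curve_pos hs
  have := h.nonneg
  have hinv : 1 / (z s).im ≤ 2 * s := by
    rw [one_div_le him (by positivity)]; exact h.le_im_curve s hs
  calc ‖c s‖ * (1 / (z s).im) ^ n ≤ (C * rexp (-π * s)) * (2 * s) ^ n := by
        gcongr
        exact h.norm_weight_le s hs
    _ = 2 ^ n * (C * rexp (-π * s)) * s ^ n := by ring
    _ ≤ 2 ^ n * (C * rexp (-π * s)) * (n.factorial * rexp s) := by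
        gcongr; exact pow_le_factorial_mul_exp hs0.le n
    _ = 2 ^ n * n.factorial * C * (rexp (-π * s) * rexp s) := by ring
    _ = _ := by rw [← Real.exp_add]; ring_nf

lemma integrable_prod (h : IsAdmissible a C c z) (hE : Module.finrank ℝ E = 2 * n) :
    Integrable (fun p : E × ℝ ↦ c p.2 * cexp (π * I * ((‖p.1‖ ^ 2 : ℝ) : ℂ) * z p.2))
      (volume.prod (volume.restrict (Ioi a))) := by
  have hmeas : AEStronglyMeasurable
      (fun p : E × ℝ ↦ c p.2 * cexp (π * I * ((‖p.1‖ ^ 2 : ℝ) : ℂ) * z p.2))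
      (volume.prod (volume.restrict (Ioi a))) := by
    have hrestrict : (volume : Measure E).prod (volume.restrict (Ioi a)) =
        (volume.prod volume).restrict (univ ×ˢ Ioi a) := by
      rw [← Measure.prod_restrict, Measure.restrict_univ]
    rw [hrestrict]
    have hc : ContinuousOn (fun p : E × ℝ ↦ c p.2) (univ ×ˢ Ioi a) :=
      h.continuousOn_weight.comp continuousOn_snd fun p hp ↦ hp.2
    have hz : ContinuousOn (fun p : E × ℝ ↦ z p.2) (univ ×ˢ Ioi a) :=
      h.continuousOn_curve.comp continuousOn_snd fun p hp ↦ hp.2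
    have hnorm : Continuous fun p : E × ℝ ↦ (π * I * ((‖p.1‖ ^ 2 : ℝ) : ℂ) : ℂ) := by fun_prop
    exact (hc.mul (hnorm.continuousOn.mul hz).cexp).aestronglyMeasurable
      (MeasurableSet.univ.prod measurableSet_Ioi)
  have hnorm (x : E) (s : ℝ) : ‖c s * cexp (π * I * ((‖x‖ ^ 2 : ℝ) : ℂ) * z s)‖ =
      ‖c s‖ * rexp (-(π * (z s).im) * ‖x‖ ^ 2) := by
    rw [norm_mul, norm_cexp_pi_mul_I_mul, ofReal_re, ofReal_im]
    ring_nf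
  refine (integrable_prod_iff' hmeas).2 ⟨?_, ?_⟩
  · filter_upwards [ae_restrict_mem measurableSet_Ioi] with s hs
    have hb : 0 < π * (z s).im := mul_pos Real.pi_pos (h.im_curve_pos hs)
    refine ((integrable_rexp_neg_mul_norm_sq hE hb).const_mul ‖c s‖).mono'
      (Continuous.aestronglyMeasurable (by fun_prop)) (.of_forall fun x ↦ (hnorm x s).le)
  · refine (integrableOn_const_mul_exp_neg_mul a (2 ^ n * n.factorial * C)
      (b := π - 1) (by linarith [Real.pi_gt_three])).mono'
      hmeas.norm.prod_swap.integral_prod_right' ?_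
    filter_upwards [ae_restrict_mem measurableSet_Ioi] with s hs
    have him := h.im_curve_pos hs
    have hb : 0 < π * (z s).im := mul_pos Real.pi_pos him
    have hpi : π / (π * (z s).im) = 1 / (z s).im := by field_simp
    simp_rw [hnorm]
    rw [integral_const_mul, integral_rexp_neg_mul_norm_sq hE hb, hpi,
      Real.norm_of_nonneg (by positivity)]
    exact h.norm_weight_mul_inv_im_pow_le hs n

theorem fourier_gaussianSuperposition (h : IsAdmissible a C c z)
    (hE : Module.finrank ℝ E = 2 * n) (y : E) :
    𝓕 (fun x : E ↦ gaussianSuperposition a c z ((‖x‖ ^ 2 : ℝ) : ℂ)) y =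
      gaussianSuperposition a (fun s ↦ c s * (I * (z s)⁻¹) ^ n) (fun s ↦ -1 / z s)
        ((‖y‖ ^ 2 : ℝ) : ℂ) := by
  have hprod : Integrable (Function.uncurry fun (x : E) (s : ℝ) ↦
      Real.fourierChar (-(inner ℝ x y)) • (c s * cexp (π * I * ((‖x‖ ^ 2 : ℝ) : ℂ) * z s)))
      (volume.prod (volume.restrict (Ioi a))) := by
    have hchar : Continuous fun p : E × ℝ ↦ (Real.fourierChar (-(inner ℝ p.1 y)) : ℂ) :=
      continuous_subtype_val.comp (Real.continuous_fourierChar.comp (by fun_prop))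
    exact (h.integrable_prod hE).bdd_mul (c := 1) hchar.aestronglyMeasurable
      (.of_forall fun p ↦ (Circle.norm_coe _).le)
  simp_rw [Real.fourier_eq, gaussianSuperposition, Circle.smul_def, ← integral_smul]
  refine (integral_integral_swap hprod).trans (setIntegral_congr_fun measurableSet_Ioi ?_)
  intro s hs
  have hgauss := fourier_cexp_pi_mul_I_mul_norm_sq hE (h.im_curve_pos hs) y
  rw [Real.fourier_eq] at hgauss
  simp only
  rw [mul_assoc, ← hgauss, ← integral_const_mul]
  simp only [Circle.smul_def, smul_eq_mul, mul_left_comm]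

end IsAdmissible

end GaussianFourier

/-! ### Fourier eigenfunctions from modular kernels -/

section Primitive

/-- The inverse Cayley transform, mapping the unit disc onto the upper half-plane. -/
noncomputable def invCayley (w : ℂ) : ℂ := I * (1 + w) / (1 - w)

lemma one_sub_ne_zero_of_mem_ball {w : ℂ} (hw : w ∈ Metric.ball (0 : ℂ) 1) : 1 - w ≠ 0 := by
  intro h
  rw [mem_ball_zero_iff, ← sub_eq_zero.1 h, norm_one] at hw
  exact lt_irrefl _ hw

lemma hasDerivAt_invCayley {w : ℂ} (hw : w ∈ Metric.ball (0 : ℂ) 1) :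
    HasDerivAt invCayley (2 * I / (1 - w) ^ 2) w := by
  have hne := one_sub_ne_zero_of_mem_ball hw
  have hnum : HasDerivAt (fun w : ℂ ↦ I * (1 + w)) I w := by
    simpa using ((hasDerivAt_id w).const_add 1).const_mul I
  have hden : HasDerivAt (fun w : ℂ ↦ 1 - w) (-1) w := by
    simpa using (hasDerivAt_id w).const_sub 1
  refine (hnum.div hden hne).congr_deriv ?_
  field_simp
  ring

lemma im_invCayley_pos {w : ℂ} (hw : w ∈ Metric.ball (0 : ℂ) 1) : 0 < (invCayley w).im := by
  have hden : 0 < normSq (1 - w) := normSq_pos.2 (one_sub_ne_zero_of_mem_ball hw)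
  have hnum : normSq w < 1 := by
    rw [normSq_eq_norm_sq]
    exact pow_lt_one₀ (norm_nonneg _) (mem_ball_zero_iff.1 hw) two_ne_zero
  have him : (invCayley w).im = (1 - normSq w) / normSq (1 - w) := by
    simp only [invCayley, div_im, mul_re, mul_im, add_re, add_im, sub_re, sub_im, one_re, one_im,
      I_re, I_im, normSq_apply]
    ring
  rw [him]
  exact div_pos (sub_pos.2 hnum) hden

lemma add_I_ne_zero {z : ℂ} (hz : 0 < z.im) : z + I ≠ 0 := by
  intro h
  have := congrArg im h
  rw [add_im, I_im, zero_im] at this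
  linarith

lemma sub_I_div_add_I_mem_ball {z : ℂ} (hz : 0 < z.im) :
    (z - I) / (z + I) ∈ Metric.ball (0 : ℂ) 1 := by
  rw [mem_ball_zero_iff, norm_div, div_lt_one (norm_pos_iff.2 (add_I_ne_zero hz)),
    ← sq_lt_sq₀ (norm_nonneg _) (norm_nonneg _), ← normSq_eq_norm_sq, ← normSq_eq_norm_sq]
  simp only [normSq_apply, sub_re, sub_im, add_re, add_im, I_re, I_im]
  nlinarith

lemma hasDerivAt_sub_I_div_add_I {z : ℂ} (hz : 0 < z.im) :
    HasDerivAt (fun z : ℂ ↦ (z - I) / (z + I)) (2 * I / (z + I) ^ 2) z := by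
  have hne := add_I_ne_zero hz
  refine (((hasDerivAt_id z).sub_const I).div ((hasDerivAt_id z).add_const I) hne).congr_deriv ?_
  simp only [id]
  field_simp
  ring

lemma exists_hasDerivAt_of_differentiableOn_upperHalfPlaneSet {f : ℂ → ℂ}
    (hf : DifferentiableOn ℂ f upperHalfPlaneSet) :
    ∃ Q : ℂ → ℂ, ∀ z : ℂ, 0 < z.im → HasDerivAt Q (f z) z := by
  have hdiff : DifferentiableOn ℂ (fun w ↦ f (invCayley w) * (2 * I / (1 - w) ^ 2))
      (Metric.ball (0 : ℂ) 1) := by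
    refine (hf.comp (fun w hw ↦ (hasDerivAt_invCayley hw).differentiableAt.differentiableWithinAt)
      fun w hw ↦ im_invCayley_pos hw).mul fun w hw ↦ ?_
    have hden : DifferentiableAt ℂ (fun w : ℂ ↦ (1 - w) ^ 2) w := by fun_prop
    exact ((differentiableAt_const _).div hden
      (pow_ne_zero 2 (one_sub_ne_zero_of_mem_ball hw))).differentiableWithinAt
  obtain ⟨P, hP⟩ := hdiff.isExactOn_ball
  refine ⟨fun z ↦ P ((z - I) / (z + I)), fun z hz ↦ ?_⟩
  have hne := add_I_ne_zero hz
  have hsub : 1 - (z - I) / (z + I) = 2 * I / (z + I) := by field_simp; ring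
  have hinv : invCayley ((z - I) / (z + I)) = z := by
    have : (2 * I : ℂ) ≠ 0 := by simp
    rw [invCayley, hsub]
    field_simp
    ring
  refine ((hP _ (sub_I_div_add_I_mem_ball hz)).comp z
    (hasDerivAt_sub_I_div_add_I hz)).congr_deriv ?_
  simp only [hinv, hsub]
  have := I_ne_zero
  field_simp

end Primitive

section VerticalLine

variable {G Q : ℂ → ℂ} {b C r y : ℝ}

lemma hasDerivAt_comp_vertical (hQ : ∀ z : ℂ, 0 < z.im → HasDerivAt Q (G z) z) (x : ℝ) {s : ℝ}
    (hs : 0 < s) : HasDerivAt (fun s : ℝ ↦ Q (x + s * I)) (G (x + s * I) * I) s := by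
  have hline : HasDerivAt (fun s : ℝ ↦ (x + s * I : ℂ)) I s := by
    simpa using ((ofRealCLM.hasDerivAt (x := s)).mul_const I).const_add (x : ℂ)
  exact (hQ _ (by simpa using hs)).comp s hline

lemma integrableOn_vertical (hG : ContinuousOn G upperHalfPlaneSet) (hb : 0 < b) (hy : 0 < y)
    (hbound : ∀ z : ℂ, y ≤ z.im → |z.re| ≤ r → ‖G z‖ ≤ C * rexp (-b * z.im))
    {x t : ℝ} (hx : |x| ≤ r) (ht : y ≤ t) :
    IntegrableOn (fun s : ℝ ↦ G (x + s * I)) (Ioi t) := by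
  refine (integrableOn_const_mul_exp_neg_mul t C hb).mono'
    ((hG.comp (by fun_prop) fun s hs ↦ ?_).aestronglyMeasurable measurableSet_Ioi) ?_
  · simpa using hy.trans_le (ht.trans (mem_Ioi.1 hs).le)
  · filter_upwards [ae_restrict_mem measurableSet_Ioi] with s hs
    simpa using hbound (x + s * I) (by simpa using ht.trans (mem_Ioi.1 hs).le) (by simpa using hx)

lemma norm_sub_le_of_im_eq (hQ : ∀ z : ℂ, 0 < z.im → HasDerivAt Q (G z) z) (hy : 0 < y)
    (hbound : ∀ z : ℂ, y ≤ z.im → |z.re| ≤ r → ‖G z‖ ≤ C * rexp (-b * z.im))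
    {x x' s : ℝ} (hx : |x| ≤ r) (hx' : |x'| ≤ r) (hs : y ≤ s) :
    ‖Q (x + s * I) - Q (x' + s * I)‖ ≤ C * rexp (-b * s) * |x - x'| := by
  have hconvex : Convex ℝ (Icc (-r) r ×ℂ {s}) :=
    ((convex_Icc _ _).linear_preimage reLm).inter ((convex_singleton _).linear_preimage imLm)
  have him {z : ℂ} (hz : z ∈ Icc (-r) r ×ℂ {s}) : z.im = s := hz.2
  have hmem {x : ℝ} (hx : |x| ≤ r) : (x + s * I : ℂ) ∈ Icc (-r) r ×ℂ {s} := by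
    simpa [mem_reProdIm] using abs_le.1 hx
  refine (hconvex.norm_image_sub_le_of_norm_hasDerivWithin_le (f' := G)
    (C := C * rexp (-b * s))
    (fun z hz ↦ (hQ z (by rw [him hz]; linarith)).hasDerivWithinAt)
    (fun z hz ↦ ?_) (hmem hx') (hmem hx)).trans_eq ?_
  · have := hbound z (by rwa [him hz]) (abs_le.2 hz.1)
    rwa [him hz] at this
  · rw [add_sub_add_right_eq_sub, ← ofReal_sub, norm_real, Real.norm_eq_abs]

lemma exists_tendsto_vertical (hQ : ∀ z : ℂ, 0 < z.im → HasDerivAt Q (G z) z)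
    (hG : ContinuousOn G upperHalfPlaneSet) (hb : 0 < b) (hr : 0 ≤ r) (hy : 0 < y)
    (hbound : ∀ z : ℂ, y ≤ z.im → |z.re| ≤ r → ‖G z‖ ≤ C * rexp (-b * z.im)) :
    ∃ L : ℂ, ∀ x : ℝ, |x| ≤ r → Tendsto (fun s : ℝ ↦ Q (x + s * I)) atTop (𝓝 L) := by
  have h0 : |(0 : ℝ)| ≤ r := by rwa [abs_zero]
  have hlim := tendsto_limUnder_of_hasDerivAt_of_integrableOn_Ioi
    (fun s hs ↦ hasDerivAt_comp_vertical hQ 0 (hy.trans (mem_Ioi.1 hs)))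
    ((integrableOn_vertical hG hb hy hbound h0 le_rfl).mul_const I)
  refine ⟨limUnder atTop fun s : ℝ ↦ Q ((0 : ℝ) + s * I), fun x hx ↦ ?_⟩
  have hdecay : Tendsto (fun s : ℝ ↦ C * rexp (-b * s) * |x - 0|) atTop (𝓝 0) := by
    have : Tendsto (fun s : ℝ ↦ -b * s) atTop atBot :=
      tendsto_id.const_mul_atTop_of_neg (neg_lt_zero.2 hb)
    simpa using ((Real.tendsto_exp_atBot.comp this).const_mul C).mul_const |x - 0|
  have hdiff : Tendsto (fun s : ℝ ↦ Q (x + s * I) - Q ((0 : ℝ) + s * I)) atTop (𝓝 0) := by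
    refine squeeze_zero_norm' ?_ hdecay
    filter_upwards [eventually_ge_atTop y] with s hs
    exact norm_sub_le_of_im_eq hQ hy hbound hx h0 hs
  simpa using hdiff.add hlim

lemma integral_axis (hQ : ∀ z : ℂ, 0 < z.im → HasDerivAt Q (G z) z) {L₀ L₁ : ℂ}
    (hint : IntegrableOn (fun t : ℝ ↦ G (t * I)) (Ioi 0))
    (h0 : Tendsto (fun t : ℝ ↦ Q (t * I)) (𝓝[>] 0) (𝓝 L₀))
    (htop : Tendsto (fun t : ℝ ↦ Q (t * I)) atTop (𝓝 L₁)) :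
    ∫ t in Ioi (0 : ℝ), G (t * I) * I = L₁ - L₀ := by
  have hderiv (t : ℝ) (ht : t ∈ Ioi (0 : ℝ)) :
      HasDerivAt (fun t : ℝ ↦ Q (t * I)) (G (t * I) * I) t := by
    simpa using hasDerivAt_comp_vertical hQ 0 ht
  have := integral_Ioi_deriv_mul_eq_sub (v := 1) (v' := 0) hderiv
    (fun t _ ↦ hasDerivAt_const t 1) (by simpa [IntegrableOn, Pi.mul_def] using hint.mul_const I)
    (by simpa using h0) (by simpa using htop)
  simpa using this

end VerticalLine

/-- The weight-two inversion `z ↦ ε z² k(-1 / z)` of a function `k` on the upper half-plane. -/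
noncomputable def inversion (ε : ℂ) (k : ℂ → ℂ) (z : ℂ) : ℂ := ε * z ^ 2 * k (-1 / z)

/-- The functional equations and growth conditions on `k` which make `radialProfile ε k` a Fourier
eigenfunction in dimension eight with eigenvalue `ε`. -/
structure IsEigenKernel (ε : ℂ) (k : ℂ → ℂ) : Prop where
  eq_one_or_neg_one : ε = 1 ∨ ε = -1
  differentiableOn : DifferentiableOn ℂ k upperHalfPlaneSet
  map_add_one : ∀ z : ℂ, 0 < z.im → k (z + 1) = ε * k z
  inversion_second_difference : ∀ z : ℂ, 0 < z.im →
    inversion ε k (z + 1) + inversion ε k (z - 1) - 2 * inversion ε k z = 2 * k z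
  exists_norm_le : ∃ C : ℝ, ∀ z : ℂ, 1 / 2 ≤ z.im → ‖k z‖ ≤ C * rexp (-π * z.im)
  exists_norm_inversion_le : ∃ C : ℝ, ∀ z : ℂ, 1 ≤ z.im → |z.re| ≤ 1 →
    ‖inversion ε k z‖ ≤ C * (1 + z.im ^ 2) * rexp (2 * π * z.im)

/-- The weight of the Gaussian superposition obtained from `k` by the substitution
`z = σ - 1 / w` along the vertical ray `w = x + s i`, where `dz = dw / w ^ 2`. -/
noncomputable def inversionWeight (k : ℂ → ℂ) (x s : ℝ) : ℂ :=
  k (x + s * I) * ((x + s * I : ℂ)⁻¹) ^ 4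

/-- The circular arc traced by `z = σ - 1 / w` along the vertical ray `w = x + s i`; it ends
at the cusp `σ` as `s → ∞`. -/
noncomputable def inversionCurve (x σ s : ℝ) : ℂ := σ - 1 / (x + s * I)

/-- The part of Viazovska's contour integral along the segment between `0` and `i`. -/
noncomputable def centralArc (k : ℂ → ℂ) : ℂ → ℂ :=
  gaussianSuperposition 1 (inversionWeight k 0) (inversionCurve 0 0)

/-- The part of Viazovska's contour integral along the ray from `i` to `i∞`. -/
noncomputable def verticalRay (k : ℂ → ℂ) : ℂ → ℂ :=
  gaussianSuperposition 1 (fun s ↦ k (s * I)) fun s ↦ s * I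

/-- The part of Viazovska's contour integral along the arc between `-1` and `i`. -/
noncomputable def leftArc (k : ℂ → ℂ) : ℂ → ℂ :=
  gaussianSuperposition (1 / 2) (inversionWeight k (-1 / 2)) (inversionCurve (-1 / 2) (-1))

/-- The part of Viazovska's contour integral along the arc between `1` and `i`. -/
noncomputable def rightArc (k : ℂ → ℂ) : ℂ → ℂ :=
  gaussianSuperposition (1 / 2) (inversionWeight k (1 / 2)) (inversionCurve (1 / 2) 1)

/-- The holomorphic function of `u = ‖x‖²` defining the radial `ε`-eigenfunction of the Fourier
transform attached to the kernel `k`. -/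
noncomputable def radialProfile (ε : ℂ) (k : ℂ → ℂ) (u : ℂ) : ℂ :=
  2 * I * (ε * centralArc k u + verticalRay k u) - I * ε * (leftArc k u + rightArc k u)

lemma ne_zero_of_im_pos {w : ℂ} (hw : 0 < w.im) : w ≠ 0 := by
  rintro rfl
  exact lt_irrefl _ hw

lemma im_neg_inv_pos {w : ℂ} (hw : 0 < w.im) : 0 < (-1 / w).im := by
  have : (-1 / w).im = w.im / normSq w := by
    rw [neg_div, neg_im, one_div, inv_im, neg_div, neg_neg]
  rw [this]
  exact div_pos hw (normSq_pos.2 (ne_zero_of_im_pos hw))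

lemma norm_inv_pow_four_le {w : ℂ} (hw : 1 / 2 ≤ w.im) : ‖w⁻¹ ^ 4‖ ≤ 16 := by
  have hnorm : 1 / 2 ≤ ‖w‖ := hw.trans ((le_abs_self _).trans (abs_im_le_norm w))
  have hinv : ‖w‖⁻¹ ≤ 2 := by
    rw [inv_le_comm₀ (by linarith) two_pos]
    linarith
  calc ‖w⁻¹ ^ 4‖ = ‖w‖⁻¹ ^ 4 := by rw [norm_pow, norm_inv]
    _ ≤ 2 ^ 4 := by gcongr
    _ = 16 := by norm_num

section Admissible

variable {k : ℂ → ℂ} {C : ℝ}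

lemma isAdmissible_inversion (hk : DifferentiableOn ℂ k upperHalfPlaneSet)
    (hC : ∀ z : ℂ, 1 / 2 ≤ z.im → ‖k z‖ ≤ C * rexp (-π * z.im)) {x σ a : ℝ} (hx : |x| ≤ 1 / 2)
    (hσ : |σ| ≤ 1) (ha : 1 / 2 ≤ a) (hs : ∀ s, a < s → s ≤ s ^ 2 + x ^ 2) :
    IsAdmissible a (C * 16) (inversionWeight k x) (inversionCurve x σ) := by
  have hpos {s : ℝ} (hs : s ∈ Ioi a) : 1 / 2 < s := ha.trans_lt hs
  have hne (s : ℝ) (hs : s ∈ Ioi a) : (x + s * I : ℂ) ≠ 0 :=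
    ne_zero_of_im_pos (by simpa using one_half_pos.trans (hpos hs))
  have hline : ContinuousOn (fun s : ℝ ↦ (x + s * I : ℂ)) (Ioi a) := by fun_prop
  have him (s : ℝ) : (inversionCurve x σ s).im = s / (s ^ 2 + x ^ 2) := by
    simp [inversionCurve, normSq_apply]; ring
  have hre (s : ℝ) : (inversionCurve x σ s).re = σ - x / (s ^ 2 + x ^ 2) := by
    simp [inversionCurve, normSq_apply]; ring
  refine ⟨ha, ?_, continuousOn_const.sub (continuousOn_const.div hline hne), ?_, ?_, ?_, ?_⟩
  · refine (hk.continuousOn.comp hline fun s hs ↦ ?_).mul ((hline.inv₀ hne).pow 4)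
    simpa using one_half_pos.trans (hpos hs)
  all_goals intro s hs'
  all_goals have hs0 := hpos hs'
  · have hk_le : ‖k (x + s * I)‖ ≤ C * rexp (-π * s) := by
      simpa using hC (x + s * I) (by simpa using hs0.le)
    calc ‖inversionWeight k x s‖ = ‖k (x + s * I)‖ * ‖(x + s * I : ℂ)⁻¹ ^ 4‖ := norm_mul _ _
      _ ≤ C * rexp (-π * s) * 16 :=
          mul_le_mul hk_le (norm_inv_pow_four_le (by simpa using hs0.le)) (norm_nonneg _)
            ((norm_nonneg _).trans hk_le)
      _ = C * 16 * rexp (-π * s) := by ring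
  · rw [him, div_le_div_iff₀ (by positivity) (by positivity)]
    nlinarith [abs_le.1 hx]
  · rw [him, div_le_iff₀ (by positivity)]
    nlinarith [hs s hs']
  · have hquot : |x / (s ^ 2 + x ^ 2)| ≤ 1 := by
      rw [abs_div, abs_of_pos (by positivity : 0 < s ^ 2 + x ^ 2), div_le_one (by positivity)]
      linarith [hs s hs']
    rw [hre]
    linarith [abs_sub σ (x / (s ^ 2 + x ^ 2))]

lemma isAdmissible_vertical (hk : DifferentiableOn ℂ k upperHalfPlaneSet)
    (hC : ∀ z : ℂ, 1 / 2 ≤ z.im → ‖k z‖ ≤ C * rexp (-π * z.im)) :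
    IsAdmissible 1 C (fun s ↦ k (s * I)) fun s ↦ s * I := by
  refine ⟨by norm_num, hk.continuousOn.comp (by fun_prop) fun s hs ↦ ?_, by fun_prop, ?_, ?_, ?_,
    ?_⟩
  · simpa using one_pos.trans (mem_Ioi.1 hs)
  all_goals intro s hs
  all_goals have hs1 := mem_Ioi.1 hs
  · simpa using hC (s * I) (by simp only [im_ofReal_mul, I_im]; linarith)
  · simp only [im_ofReal_mul, I_im, mul_one]
    rw [div_le_iff₀ (by positivity)]
    nlinarith
  · simp
  · simp

end Admissible

lemma gaussianSuperposition_congr {a : ℝ} {c z c' z' : ℝ → ℂ} (hc : EqOn c c' (Ioi a))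
    (hz : EqOn z z' (Ioi a)) (u : ℂ) :
    gaussianSuperposition a c z u = gaussianSuperposition a c' z' u :=
  setIntegral_congr_fun measurableSet_Ioi fun s hs ↦ by simp only [hc hs, hz hs]

lemma gaussianSuperposition_const_mul (a : ℝ) (e : ℂ) (c z : ℝ → ℂ) (u : ℂ) :
    gaussianSuperposition a (fun s ↦ e * c s) z u = e * gaussianSuperposition a c z u := by
  simp_rw [gaussianSuperposition, mul_assoc, integral_const_mul]

lemma neg_one_div_inversionCurve {x s σ : ℝ} (hs : 0 < s) (hσ : σ ^ 2 = 1) :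
    -1 / inversionCurve x σ s = inversionCurve (x - σ) (-σ) s := by
  have hne (x : ℝ) : (x + s * I : ℂ) ≠ 0 := ne_zero_of_im_pos (by simpa using hs)
  have hw := hne x
  have hw' := hne (x - σ)
  have hσ' : (σ : ℂ) ^ 2 = 1 := by exact_mod_cast hσ
  have hden : (σ - 1 / (x + s * I) : ℂ) = σ * ((x - σ : ℝ) + s * I) / (x + s * I) := by
    push_cast at hw' ⊢
    field_simp
    linear_combination hσ'
  have hσ0 : (σ : ℂ) ≠ 0 := by rintro h0; simp [h0] at hσ'
  rw [inversionCurve, inversionCurve, hden]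
  push_cast at hw' ⊢
  field_simp
  linear_combination (x + s * I - σ : ℂ) * hσ'

namespace IsEigenKernel

variable {ε : ℂ} {k : ℂ → ℂ}

lemma mul_self_eq_one (h : IsEigenKernel ε k) : ε * ε = 1 :=
  mul_self_eq_one_iff.2 h.eq_one_or_neg_one

lemma norm_eq_one (h : IsEigenKernel ε k) : ‖ε‖ = 1 := by
  rcases h.eq_one_or_neg_one with rfl | rfl <;> simp

lemma exists_isAdmissible_centralArc (h : IsEigenKernel ε k) :
    ∃ C, IsAdmissible 1 C (inversionWeight k 0) (inversionCurve 0 0) := by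
  obtain ⟨C, hC⟩ := h.exists_norm_le
  exact ⟨_, isAdmissible_inversion h.differentiableOn hC (by norm_num) (by norm_num) (by norm_num)
    fun s hs ↦ by nlinarith⟩

lemma exists_isAdmissible_verticalRay (h : IsEigenKernel ε k) :
    ∃ C, IsAdmissible 1 C (fun s ↦ k (s * I)) fun s ↦ s * I := by
  obtain ⟨C, hC⟩ := h.exists_norm_le
  exact ⟨_, isAdmissible_vertical h.differentiableOn hC⟩

lemma exists_isAdmissible_sideArc (h : IsEigenKernel ε k) {x σ : ℝ} (hx : |x| = 1 / 2)
    (hσ : |σ| = 1) :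
    ∃ C, IsAdmissible (1 / 2) C (inversionWeight k x) (inversionCurve x σ) := by
  obtain ⟨C, hC⟩ := h.exists_norm_le
  refine ⟨_, isAdmissible_inversion h.differentiableOn hC hx.le hσ.le le_rfl fun s _ ↦ ?_⟩
  have : x ^ 2 = (1 / 2) ^ 2 := by rw [← sq_abs, hx]
  nlinarith [sq_nonneg (s - 1 / 2)]

lemma exists_isAdmissible_leftArc (h : IsEigenKernel ε k) :
    ∃ C, IsAdmissible (1 / 2) C (inversionWeight k (-1 / 2)) (inversionCurve (-1 / 2) (-1)) :=
  h.exists_isAdmissible_sideArc (by norm_num [abs_div]) (by norm_num)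

lemma exists_isAdmissible_rightArc (h : IsEigenKernel ε k) :
    ∃ C, IsAdmissible (1 / 2) C (inversionWeight k (1 / 2)) (inversionCurve (1 / 2) 1) :=
  h.exists_isAdmissible_sideArc (by norm_num [abs_div]) (by norm_num)

lemma differentiableOn_radialProfile (h : IsEigenKernel ε k) :
    DifferentiableOn ℂ (radialProfile ε k) {u | -1 / 2 < u.re} := by
  obtain ⟨_, hcentral⟩ := h.exists_isAdmissible_centralArc
  obtain ⟨_, hvertical⟩ := h.exists_isAdmissible_verticalRay
  obtain ⟨_, hleft⟩ := h.exists_isAdmissible_leftArc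
  obtain ⟨_, hright⟩ := h.exists_isAdmissible_rightArc
  exact (((hcentral.differentiableOn.const_mul ε).add hvertical.differentiableOn).const_mul _).sub
    ((hleft.differentiableOn.add hright.differentiableOn).const_mul _)

lemma inversionWeight_mul_pow_four (h : IsEigenKernel ε k) {x s σ : ℝ} (hs : 0 < s)
    (hσ : σ = 1 ∨ σ = -1) :
    inversionWeight k x s * (I * (inversionCurve x σ s)⁻¹) ^ 4 =
      ε * inversionWeight k (x - σ) s := by
  have hne (x : ℝ) : (x + s * I : ℂ) ≠ 0 := ne_zero_of_im_pos (by simpa using hs)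
  have hw := hne x
  have hw' := hne (x - σ)
  have hk : k (x + s * I) = ε * k ((x - σ : ℝ) + s * I) := by
    rcases hσ with rfl | rfl
    · rw [← h.map_add_one _ (by simpa using hs)]
      push_cast; ring_nf
    · have := h.map_add_one (x + s * I) (by simpa using hs)
      rw [show (((x - -1 : ℝ) : ℂ) + s * I) = x + s * I + 1 by push_cast; ring, this, ← mul_assoc,
        h.mul_self_eq_one, one_mul]
  have hinv : (inversionCurve x σ s)⁻¹ = -inversionCurve (x - σ) (-σ) s := by
    have hσ2 : σ ^ 2 = 1 := by rcases hσ with rfl | rfl <;> norm_num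
    rw [← neg_one_div_inversionCurve hs hσ2, neg_div, neg_neg, one_div]
  have hcurve : inversionCurve (x - σ) (-σ) s = -σ * (x + s * I) / ((x - σ : ℝ) + s * I) := by
    have hσ' : (σ : ℂ) ^ 2 = 1 := by rcases hσ with rfl | rfl <;> simp
    rw [inversionCurve]
    push_cast at hw' ⊢
    field_simp
    linear_combination hσ'
  have hσ4 : (σ : ℂ) ^ 4 = 1 := by rcases hσ with rfl | rfl <;> norm_num
  rw [inversionWeight, inversionWeight, hinv, hcurve, hk, mul_pow I, I_pow_four]
  field_simp
  linear_combination (ε * k ((x - σ : ℝ) + s * I)) * hσ4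

section Fourier

variable {E : Type*} [NormedAddCommGroup E] [InnerProductSpace ℝ E] [FiniteDimensional ℝ E]
  [MeasurableSpace E] [BorelSpace E]

lemma fourier_centralArc (h : IsEigenKernel ε k) (hE : Module.finrank ℝ E = 8) (y : E) :
    𝓕 (fun x : E ↦ centralArc k ((‖x‖ ^ 2 : ℝ) : ℂ)) y = verticalRay k ((‖y‖ ^ 2 : ℝ) : ℂ) := by
  obtain ⟨_, hadm⟩ := h.exists_isAdmissible_centralArc
  refine (hadm.fourier_gaussianSuperposition (n := 4) hE y).trans
    (gaussianSuperposition_congr (fun s hs ↦ ?_) (fun s hs ↦ ?_) _)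
  all_goals have hs0 : (s : ℂ) ≠ 0 := ofReal_ne_zero.2 (one_pos.trans (mem_Ioi.1 hs)).ne'
  · simp only [inversionWeight, inversionCurve, ofReal_zero, zero_add, zero_sub, one_div, inv_neg,
      inv_inv, mul_neg, (by decide : Even 4).neg_pow, mul_inv, mul_pow, inv_pow, I_pow_four]
    field_simp
  · simp [inversionCurve]
    field_simp
    exact I_sq.symm

lemma fourier_verticalRay (h : IsEigenKernel ε k) (hE : Module.finrank ℝ E = 8) (y : E) :
    𝓕 (fun x : E ↦ verticalRay k ((‖x‖ ^ 2 : ℝ) : ℂ)) y = centralArc k ((‖y‖ ^ 2 : ℝ) : ℂ) := by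
  obtain ⟨_, hadm⟩ := h.exists_isAdmissible_verticalRay
  refine (hadm.fourier_gaussianSuperposition (n := 4) hE y).trans
    (gaussianSuperposition_congr (fun s _ ↦ ?_) (fun s _ ↦ ?_) _)
  · simp [inversionWeight, mul_pow, (by decide : Even 4).neg_pow]
  · simp [inversionCurve, neg_div]

lemma fourier_sideArc (h : IsEigenKernel ε k) (hE : Module.finrank ℝ E = 8) {x σ : ℝ}
    (hx : |x| = 1 / 2) (hσ : σ = 1 ∨ σ = -1) (y : E) :
    𝓕 (fun v : E ↦ gaussianSuperposition (1 / 2) (inversionWeight k x) (inversionCurve x σ)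
      ((‖v‖ ^ 2 : ℝ) : ℂ)) y =
    ε * gaussianSuperposition (1 / 2) (inversionWeight k (x - σ)) (inversionCurve (x - σ) (-σ))
      ((‖y‖ ^ 2 : ℝ) : ℂ) := by
  have hσ1 : |σ| = 1 := by rcases hσ with rfl | rfl <;> norm_num
  obtain ⟨_, hadm⟩ := h.exists_isAdmissible_sideArc hx hσ1
  rw [hadm.fourier_gaussianSuperposition (n := 4) hE y, ← gaussianSuperposition_const_mul]
  refine gaussianSuperposition_congr (fun s hs ↦ ?_) (fun s hs ↦ ?_) _
  · exact h.inversionWeight_mul_pow_four (one_half_pos.trans (mem_Ioi.1 hs)) hσ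
  · exact neg_one_div_inversionCurve (one_half_pos.trans (mem_Ioi.1 hs))
      (by rcases hσ with rfl | rfl <;> norm_num)

lemma fourier_leftArc (h : IsEigenKernel ε k) (hE : Module.finrank ℝ E = 8) (y : E) :
    𝓕 (fun x : E ↦ leftArc k ((‖x‖ ^ 2 : ℝ) : ℂ)) y = ε * rightArc k ((‖y‖ ^ 2 : ℝ) : ℂ) := by
  have := h.fourier_sideArc hE (x := -1 / 2) (by norm_num [abs_div]) (Or.inr rfl) y
  rwa [show (-1 / 2 : ℝ) - -1 = 1 / 2 by norm_num, neg_neg] at this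

lemma fourier_rightArc (h : IsEigenKernel ε k) (hE : Module.finrank ℝ E = 8) (y : E) :
    𝓕 (fun x : E ↦ rightArc k ((‖x‖ ^ 2 : ℝ) : ℂ)) y = ε * leftArc k ((‖y‖ ^ 2 : ℝ) : ℂ) := by
  have := h.fourier_sideArc hE (x := 1 / 2) (by norm_num [abs_div]) (Or.inl rfl) y
  rwa [show (1 / 2 : ℝ) - 1 = -1 / 2 by norm_num] at this

theorem exists_schwartzMap_fourier_eq (h : IsEigenKernel ε k) (hE : Module.finrank ℝ E = 8) :
    ∃ S : 𝓢(E, ℂ), (∀ x, S x = radialProfile ε k ((‖x‖ ^ 2 : ℝ) : ℂ)) ∧ 𝓕 S = ε • S := by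
  obtain ⟨_, hcentral⟩ := h.exists_isAdmissible_centralArc
  obtain ⟨_, hvertical⟩ := h.exists_isAdmissible_verticalRay
  obtain ⟨_, hleft⟩ := h.exists_isAdmissible_leftArc
  obtain ⟨_, hright⟩ := h.exists_isAdmissible_rightArc
  obtain ⟨Sc, hSc⟩ := hcentral.exists_schwartzMap (E := E)
  obtain ⟨Sv, hSv⟩ := hvertical.exists_schwartzMap (E := E)
  obtain ⟨Sl, hSl⟩ := hleft.exists_schwartzMap (E := E)
  obtain ⟨Sr, hSr⟩ := hright.exists_schwartzMap (E := E)
  have hFc : 𝓕 Sc = Sv := by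
    ext y; rw [SchwartzMap.fourier_coe, funext hSc, hSv]; exact h.fourier_centralArc hE y
  have hFv : 𝓕 Sv = Sc := by
    ext y; rw [SchwartzMap.fourier_coe, funext hSv, hSc]; exact h.fourier_verticalRay hE y
  have hFl : 𝓕 Sl = ε • Sr := by
    ext y
    rw [SchwartzMap.fourier_coe, funext hSl, smul_apply, hSr]
    exact h.fourier_leftArc hE y
  have hFr : 𝓕 Sr = ε • Sl := by
    ext y
    rw [SchwartzMap.fourier_coe, funext hSr, smul_apply, hSl]
    exact h.fourier_rightArc hE y
  refine ⟨(2 * I) • (ε • Sc + Sv) + (-(I * ε)) • (Sl + Sr), fun x ↦ ?_, ?_⟩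
  · simp only [add_apply, smul_apply, hSc, hSv, hSl, hSr, smul_eq_mul,
      radialProfile, centralArc, verticalRay, leftArc, rightArc]
    ring
  · simp only [FourierTransform.fourier_add, FourierTransform.fourier_smul, hFc, hFv, hFl, hFr]
    ext x
    simp only [add_apply, smul_apply, smul_eq_mul]
    linear_combination (-2 * I * Sc x) * h.mul_self_eq_one

end Fourier

end IsEigenKernel

/-! ### The contour integral as a Laplace transform -/

lemma integral_Ioi_vertical {G Q : ℂ → ℂ} {L : ℂ} {x t : ℝ}
    (hQ : ∀ z : ℂ, 0 < z.im → HasDerivAt Q (G z) z) (ht : 0 < t)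
    (hint : IntegrableOn (fun s : ℝ ↦ G (x + s * I)) (Ioi t))
    (hlim : Tendsto (fun s : ℝ ↦ Q (x + s * I)) atTop (𝓝 L)) :
    ∫ s in Ioi t, G (x + s * I) * I = L - Q (x + t * I) :=
  integral_Ioi_of_hasDerivAt_of_tendsto'
    (fun _ hs ↦ hasDerivAt_comp_vertical hQ x (ht.trans_le (mem_Ici.1 hs))) (hint.mul_const I) hlim

/-- The integrand whose integral along the imaginary axis is the Laplace transform of
`t ↦ inversion ε k (t i)` at `π u`. -/
noncomputable def axisIntegrand (ε : ℂ) (k : ℂ → ℂ) (u : ℝ) (z : ℂ) : ℂ :=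
  inversion ε k z * cexp (π * I * u * z)

/-- The pullback of the differential `axisIntegrand ε k u z dz` along `z = -1 / w`. -/
noncomputable def cuspIntegrand (ε : ℂ) (k : ℂ → ℂ) (u : ℝ) (w : ℂ) : ℂ :=
  ε * (k w * w⁻¹ ^ 4 * cexp (π * I * u * (-1 / w)))

section Integrands

variable {ε : ℂ} {k Q : ℂ → ℂ} {u : ℝ}

lemma axisIntegrand_neg_one_div_mul {w : ℂ} (hw : w ≠ 0) :
    axisIntegrand ε k u (-1 / w) * (w ^ 2)⁻¹ = cuspIntegrand ε k u w := by
  have hinvol : -1 / (-1 / w) = w := by field_simp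
  rw [axisIntegrand, cuspIntegrand, inversion, hinvol]
  field_simp

lemma hasDerivAt_comp_neg_one_div
    (hQ : ∀ z : ℂ, 0 < z.im → HasDerivAt Q (axisIntegrand ε k u z) z) (w : ℂ) (hw : 0 < w.im) :
    HasDerivAt (fun w ↦ Q (-1 / w)) (cuspIntegrand ε k u w) w := by
  have hw0 := ne_zero_of_im_pos hw
  have hinv : HasDerivAt (fun w : ℂ ↦ -1 / w) (w ^ 2)⁻¹ w := by
    simpa [div_eq_mul_inv] using (hasDerivAt_inv hw0).const_mul (-1)
  rw [← axisIntegrand_neg_one_div_mul hw0]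
  exact (hQ _ (im_neg_inv_pos hw)).comp w hinv

lemma differentiableOn_inversion (hk : DifferentiableOn ℂ k upperHalfPlaneSet) :
    DifferentiableOn ℂ (inversion ε k) upperHalfPlaneSet := by
  have hinv : DifferentiableOn ℂ (fun z : ℂ ↦ -1 / z) upperHalfPlaneSet :=
    (differentiableOn_const _).div differentiableOn_id fun z hz ↦ ne_zero_of_im_pos hz
  exact ((differentiableOn_id.pow 2).const_mul ε).mul
    (hk.comp hinv fun z hz ↦ im_neg_inv_pos hz)

lemma differentiableOn_axisIntegrand (hk : DifferentiableOn ℂ k upperHalfPlaneSet) :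
    DifferentiableOn ℂ (axisIntegrand ε k u) upperHalfPlaneSet :=
  (differentiableOn_inversion hk).mul (by fun_prop)

lemma continuousOn_cuspIntegrand (hk : ContinuousOn k upperHalfPlaneSet) :
    ContinuousOn (cuspIntegrand ε k u) upperHalfPlaneSet := by
  have hne (w : ℂ) (hw : w ∈ upperHalfPlaneSet) : w ≠ 0 := ne_zero_of_im_pos hw
  exact continuousOn_const.mul ((hk.mul ((continuousOn_id.inv₀ hne).pow 4)).mul
    (continuousOn_const.mul (continuousOn_const.div continuousOn_id hne)).cexp)

lemma norm_cexp_pi_mul_I_mul_ofReal_mul (u : ℝ) (z : ℂ) :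
    ‖cexp (π * I * u * z)‖ = rexp (-(π * u * z.im)) := by
  rw [norm_cexp_pi_mul_I_mul]
  simp [mul_assoc]

lemma norm_cexp_pi_mul_I_mul_ofReal_mul_le_one (hu : 0 ≤ u) {z : ℂ} (hz : 0 ≤ z.im) :
    ‖cexp (π * I * u * z)‖ ≤ 1 := by
  rw [norm_cexp_pi_mul_I_mul_ofReal_mul, Real.exp_le_one_iff, neg_nonpos]
  positivity

lemma mul_gaussianSuperposition_inversion (ε : ℂ) (k : ℂ → ℂ) (u a x σ : ℝ) :
    I * ε * gaussianSuperposition a (inversionWeight k x) (inversionCurve x σ) u =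
      cexp (π * I * u * σ) * ∫ s in Ioi a, cuspIntegrand ε k u (x + s * I) * I := by
  rw [gaussianSuperposition, ← integral_const_mul, ← integral_const_mul]
  congr 1 with s
  have hexp : cexp (π * I * u * inversionCurve x σ s) =
      cexp (π * I * u * σ) * cexp (π * I * u * (-1 / (x + s * I))) := by
    rw [← Complex.exp_add, inversionCurve]
    ring_nf
  rw [inversionWeight, cuspIntegrand, hexp]
  ring

lemma cexp_pi_mul_I_mul_ofReal_mul_I (u t : ℝ) :
    cexp (π * I * u * (t * I)) = cexp (-(π * u * t : ℝ)) := by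
  congr 1
  push_cast
  linear_combination (π * u * t : ℂ) * I_mul_I

lemma neg_one_div_ofReal_mul_I (t : ℝ) : -1 / (t * I) = (t⁻¹ : ℝ) * I := by
  simp [div_eq_mul_inv, mul_comm]

lemma one_add_sq_le_mul_exp {δ y : ℝ} (hδ : 0 < δ) (hy : 0 ≤ y) :
    1 + y ^ 2 ≤ (1 + 2 / δ ^ 2) * rexp (δ * y) := by
  have hone : 1 ≤ rexp (δ * y) := Real.one_le_exp (by positivity)
  have hsq : y ^ 2 ≤ 2 / δ ^ 2 * rexp (δ * y) := by
    have := pow_le_factorial_mul_exp (by positivity : 0 ≤ δ * y) 2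
    rw [div_mul_eq_mul_div, le_div_iff₀ (by positivity)]
    norm_num [Nat.factorial] at this
    linarith [mul_pow δ y 2]
  linarith

lemma exp_neg_add_exp_sub_two (u : ℝ) :
    cexp (-(π * I * u)) + cexp (π * I * u) - 2 = -4 * (Real.sin (π * u / 2) ^ 2 : ℝ) := by
  have hexp : cexp (-(π * I * u)) + cexp (π * I * u) = 2 * (Real.cos (π * u) : ℝ) := by
    rw [ofReal_cos, two_cos, add_comm]
    push_cast
    ring_nf
  have hcos : Real.cos (π * u) = 1 - 2 * Real.sin (π * u / 2) ^ 2 := by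
    rw [← Real.cos_two_mul_eq_one_sub, mul_div_cancel₀ _ two_ne_zero]
  rw [hexp, hcos]
  push_cast
  ring

end Integrands

namespace IsEigenKernel

variable {ε : ℂ} {k : ℂ → ℂ} {u : ℝ}

lemma exists_norm_axisIntegrand_le (h : IsEigenKernel ε k) (hu : 2 < u) :
    ∃ C : ℝ, ∀ z : ℂ, 1 ≤ z.im → |z.re| ≤ 1 →
      ‖axisIntegrand ε k u z‖ ≤ C * rexp (-(π * (u - 2) / 2) * z.im) := by
  obtain ⟨C, hC⟩ := h.exists_norm_inversion_le
  have hδ : 0 < π * (u - 2) / 2 := by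
    have := sub_pos.2 hu
    positivity
  set δ : ℝ := π * (u - 2) / 2 with hδ_def
  refine ⟨C * (1 + 2 / δ ^ 2), fun z hz hz' ↦ ?_⟩
  have hC0 : 0 ≤ C :=
    nonneg_of_mul_nonneg_left (nonneg_of_mul_nonneg_left ((norm_nonneg _).trans (hC z hz hz'))
      (Real.exp_pos _)) (by positivity)
  calc ‖axisIntegrand ε k u z‖ = ‖inversion ε k z‖ * rexp (-(π * u * z.im)) := by
        rw [axisIntegrand, norm_mul, norm_cexp_pi_mul_I_mul_ofReal_mul]
    _ ≤ C * ((1 + 2 / δ ^ 2) * rexp (δ * z.im)) * rexp (2 * π * z.im) *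
          rexp (-(π * u * z.im)) := by
        gcongr
        refine (hC z hz hz').trans ?_
        gcongr
        exact one_add_sq_le_mul_exp hδ (zero_le_one.trans hz)
    _ = C * (1 + 2 / δ ^ 2) *
          (rexp (δ * z.im) * rexp (2 * π * z.im) * rexp (-(π * u * z.im))) := by ring
    _ = C * (1 + 2 / δ ^ 2) * rexp (-δ * z.im) := by
        rw [← Real.exp_add, ← Real.exp_add, hδ_def]
        ring_nf

lemma exists_norm_cuspIntegrand_le (h : IsEigenKernel ε k) (hu : 0 ≤ u) :
    ∃ C : ℝ, ∀ w : ℂ, 1 / 2 ≤ w.im → ‖cuspIntegrand ε k u w‖ ≤ C * rexp (-π * w.im) := by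
  obtain ⟨C, hC⟩ := h.exists_norm_le
  refine ⟨C * 16, fun w hw ↦ ?_⟩
  have hpos := (im_neg_inv_pos (one_half_pos.trans_le hw)).le
  have hk := hC w hw
  have := (norm_nonneg _).trans hk
  calc ‖cuspIntegrand ε k u w‖ = ‖k w‖ * ‖w⁻¹ ^ 4‖ * ‖cexp (π * I * u * (-1 / w))‖ := by
        rw [cuspIntegrand, norm_mul, h.norm_eq_one, one_mul, norm_mul, norm_mul]
    _ ≤ C * rexp (-π * w.im) * 16 * 1 := by
        gcongr
        exacts [norm_inv_pow_four_le hw, norm_cexp_pi_mul_I_mul_ofReal_mul_le_one hu hpos]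
    _ = C * 16 * rexp (-π * w.im) := by ring

lemma exists_norm_axisIntegrand_axis_le (h : IsEigenKernel ε k) (hu : 0 ≤ u) :
    ∃ C : ℝ, ∀ t ∈ Ioc (0 : ℝ) 1, ‖axisIntegrand ε k u (t * I)‖ ≤ C := by
  obtain ⟨C, hC⟩ := h.exists_norm_le
  refine ⟨C, fun t ht ↦ ?_⟩
  have hinv : 1 ≤ t⁻¹ := (one_le_inv₀ ht.1).2 ht.2
  have hk : ‖k ((t⁻¹ : ℝ) * I)‖ ≤ C * rexp (-π * t⁻¹) := by
    simpa using hC ((t⁻¹ : ℝ) * I) (by rw [im_ofReal_mul, I_im]; linarith)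
  have hC0 : 0 ≤ C := nonneg_of_mul_nonneg_left ((norm_nonneg _).trans hk) (Real.exp_pos _)
  calc ‖axisIntegrand ε k u (t * I)‖
      = t ^ 2 * ‖k ((t⁻¹ : ℝ) * I)‖ * ‖cexp (π * I * u * (t * I))‖ := by
        rw [axisIntegrand, inversion, neg_one_div_ofReal_mul_I, norm_mul, norm_mul, norm_mul,
          h.norm_eq_one, one_mul, norm_pow, norm_mul, norm_I, mul_one, norm_real,
          Real.norm_of_nonneg ht.1.le]
    _ ≤ 1 * (C * rexp (-π * t⁻¹)) * 1 := by
        gcongr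
        · exact pow_le_one₀ ht.1.le ht.2
        · exact norm_cexp_pi_mul_I_mul_ofReal_mul_le_one hu (by simpa using ht.1.le)
    _ ≤ C := by
        rw [one_mul, mul_one]
        refine mul_le_of_le_one_right hC0 (Real.exp_le_one_iff.2 ?_)
        nlinarith [Real.pi_pos]

lemma integrableOn_axisIntegrand (h : IsEigenKernel ε k) (hu : 2 < u) :
    IntegrableOn (fun t : ℝ ↦ axisIntegrand ε k u (t * I)) (Ioi 0) := by
  obtain ⟨C₀, hC₀⟩ := h.exists_norm_axisIntegrand_axis_le (two_pos.le.trans hu.le)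
  obtain ⟨C₁, hC₁⟩ := h.exists_norm_axisIntegrand_le hu
  have hcont := (differentiableOn_axisIntegrand (ε := ε) (u := u) h.differentiableOn).continuousOn
  have hδ : 0 < π * (u - 2) / 2 := by
    have := sub_pos.2 hu
    positivity
  rw [← Ioc_union_Ioi_eq_Ioi (zero_le_one (α := ℝ))]
  refine IntegrableOn.union ?_ ?_
  · refine IntegrableOn.of_bound measure_Ioc_lt_top
      ((hcont.comp (by fun_prop) fun t ht ↦ ?_).aestronglyMeasurable measurableSet_Ioc) C₀ ?_
    · simpa using ht.1
    · filter_upwards [ae_restrict_mem measurableSet_Ioc] with t ht using hC₀ t ht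
  · simpa using integrableOn_vertical hcont hδ one_pos hC₁ (x := 0) (by simp) le_rfl

/-- Contour shifting, recorded through a primitive `Q` of the integrand: `L₁` and `L₀` are its
limits at `i∞` and at the cusp `0`. -/
lemma exists_primitive (h : IsEigenKernel ε k) (hu : 2 < u) :
    ∃ (Q : ℂ → ℂ) (L₀ L₁ : ℂ),
      (∀ x : ℝ, |x| ≤ 1 → IntegrableOn (fun s : ℝ ↦ axisIntegrand ε k u (x + s * I)) (Ioi 1) ∧
        ∫ s in Ioi (1 : ℝ), axisIntegrand ε k u (x + s * I) * I = L₁ - Q (x + I)) ∧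
      (∀ x t : ℝ, |x| ≤ 1 → 1 / 2 ≤ t →
        ∫ s in Ioi t, cuspIntegrand ε k u (x + s * I) * I = L₀ - Q (-1 / (x + t * I))) ∧
      ∫ t in Ioi (0 : ℝ), axisIntegrand ε k u (t * I) * I = L₁ - L₀ := by
  have hF := differentiableOn_axisIntegrand (ε := ε) (u := u) h.differentiableOn
  have hG := continuousOn_cuspIntegrand (ε := ε) (u := u) h.differentiableOn.continuousOn
  obtain ⟨Q, hQ⟩ := exists_hasDerivAt_of_differentiableOn_upperHalfPlaneSet hF
  have hQ' := hasDerivAt_comp_neg_one_div hQ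
  obtain ⟨C₀, hC₀⟩ := h.exists_norm_cuspIntegrand_le (two_pos.le.trans hu.le)
  obtain ⟨C₁, hC₁⟩ := h.exists_norm_axisIntegrand_le hu
  replace hC₀ (w : ℂ) (hw : 1 / 2 ≤ w.im) (_ : |w.re| ≤ 1) := hC₀ w hw
  have hδ : 0 < π * (u - 2) / 2 := by
    have := sub_pos.2 hu
    positivity
  obtain ⟨L₀, hL₀⟩ :=
    exists_tendsto_vertical hQ' hG Real.pi_pos zero_le_one one_half_pos hC₀
  obtain ⟨L₁, hL₁⟩ := exists_tendsto_vertical hQ hF.continuousOn hδ zero_le_one one_pos hC₁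
  have hcusp : Tendsto (fun t : ℝ ↦ Q (t * I)) (𝓝[>] 0) (𝓝 L₀) := by
    refine ((hL₀ 0 (by simp)).comp tendsto_inv_nhdsGT_zero).congr fun t ↦ ?_
    rw [Function.comp_apply, ofReal_zero, zero_add, neg_one_div_ofReal_mul_I, inv_inv]
  refine ⟨Q, L₀, L₁, fun x hx ↦ ?_, fun x t hx ht ↦ ?_, ?_⟩
  · have hint := integrableOn_vertical hF.continuousOn hδ one_pos hC₁ hx le_rfl
    exact ⟨hint, by simpa using integral_Ioi_vertical hQ one_pos hint (hL₁ x hx)⟩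
  · exact integral_Ioi_vertical hQ' (one_half_pos.trans_le ht)
      (integrableOn_vertical hG Real.pi_pos one_half_pos hC₀ hx ht) (hL₀ x hx)
  · exact integral_axis hQ (h.integrableOn_axisIntegrand hu) hcusp (by simpa using hL₁ 0 (by simp))

lemma two_mul_verticalRay_integrand (h : IsEigenKernel ε k) (u : ℝ) {s : ℝ} (hs : 0 < s) :
    2 * (k (s * I) * cexp (π * I * u * (s * I))) =
      cexp (-(π * I * u)) * axisIntegrand ε k u (1 + s * I) +
        cexp (π * I * u) * axisIntegrand ε k u (-1 + s * I) - 2 * axisIntegrand ε k u (s * I) := by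
  have hdiff := h.inversion_second_difference (s * I) (by simpa using hs)
  have hright : cexp (-(π * I * u)) * cexp (π * I * u * (s * I + 1)) =
      cexp (π * I * u * (s * I)) := by
    rw [← Complex.exp_add]; ring_nf
  have hleft : cexp (π * I * u) * cexp (π * I * u * (s * I - 1)) =
      cexp (π * I * u * (s * I)) := by
    rw [← Complex.exp_add]; ring_nf
  rw [add_comm 1, neg_add_eq_sub]
  simp only [axisIntegrand]
  linear_combination (-cexp (π * I * u * (s * I))) * hdiff -
    inversion ε k (s * I + 1) * hright - inversion ε k (s * I - 1) * hleft

lemma two_mul_verticalRay (h : IsEigenKernel ε k)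
    (hint : ∀ x : ℝ, |x| ≤ 1 →
      IntegrableOn (fun s : ℝ ↦ axisIntegrand ε k u (x + s * I)) (Ioi 1)) :
    2 * I * verticalRay k u =
      cexp (-(π * I * u)) * (∫ s in Ioi (1 : ℝ), axisIntegrand ε k u ((1 : ℝ) + s * I) * I) +
        cexp (π * I * u) * (∫ s in Ioi (1 : ℝ), axisIntegrand ε k u ((-1 : ℝ) + s * I) * I) -
        2 * ∫ s in Ioi (1 : ℝ), axisIntegrand ε k u ((0 : ℝ) + s * I) * I := by
  have hright := ((hint 1 (by simp)).mul_const I).const_mul (cexp (-(π * I * u)))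
  have hleft := ((hint (-1) (by simp)).mul_const I).const_mul (cexp (π * I * u))
  have hcenter := ((hint 0 (by simp)).mul_const I).const_mul 2
  simp_rw [verticalRay, gaussianSuperposition, ← integral_const_mul]
  rw [← integral_add hright hleft]
  refine Eq.trans ?_ (integral_sub (hright.add hleft) hcenter)
  refine setIntegral_congr_fun measurableSet_Ioi fun s hs ↦ ?_
  simp only [ofReal_one, ofReal_neg, ofReal_zero, zero_add]
  linear_combination I * h.two_mul_verticalRay_integrand u (one_pos.trans (mem_Ioi.1 hs))

theorem radialProfile_eq_integral (h : IsEigenKernel ε k) (hu : 2 < u) :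
    radialProfile ε k u = -4 * (Real.sin (π * u / 2) ^ 2 : ℝ) * I *
      ∫ t in Ioi (0 : ℝ), inversion ε k (t * I) * cexp (-(π * u * t : ℝ)) := by
  obtain ⟨Q, L₀, L₁, hray, hcusp, haxis⟩ := h.exists_primitive hu
  have haxis' : (∫ t in Ioi (0 : ℝ), inversion ε k (t * I) * cexp (-(π * u * t : ℝ))) * I =
      L₁ - L₀ := by
    rw [← haxis, ← integral_mul_const]
    congr 1 with t
    rw [← cexp_pi_mul_I_mul_ofReal_mul_I, axisIntegrand]
  have hleft : I * ε * leftArc k u = cexp (-(π * I * u)) * (L₀ - Q (1 + I)) := by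
    have hpt : -1 / (((-1 / 2 : ℝ) : ℂ) + (1 / 2 : ℝ) * I) = 1 + I := by
      rw [div_eq_iff (ne_zero_of_im_pos (by norm_num))]
      push_cast
      linear_combination (-1 / 2 : ℂ) * I_mul_I
    rw [leftArc, mul_gaussianSuperposition_inversion,
      hcusp (-1 / 2) (1 / 2) (by norm_num [abs_div]) le_rfl, hpt]
    simp
  have hright : I * ε * rightArc k u = cexp (π * I * u) * (L₀ - Q (-1 + I)) := by
    have hpt : -1 / (((1 / 2 : ℝ) : ℂ) + (1 / 2 : ℝ) * I) = -1 + I := by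
      rw [div_eq_iff (ne_zero_of_im_pos (by norm_num))]
      push_cast
      linear_combination (-1 / 2 : ℂ) * I_mul_I
    rw [rightArc, mul_gaussianSuperposition_inversion,
      hcusp (1 / 2) (1 / 2) (by norm_num [abs_div]) le_rfl, hpt]
    simp
  have hcentral : I * ε * centralArc k u = L₀ - Q I := by
    rw [centralArc, mul_gaussianSuperposition_inversion, hcusp 0 1 (by simp) (by norm_num)]
    simp [neg_div]
  have hvertical := h.two_mul_verticalRay fun x hx ↦ (hray x hx).1
  rw [(hray 1 (by simp)).2, (hray (-1) (by simp)).2, (hray 0 (by simp)).2] at hvertical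
  push_cast at hvertical
  rw [zero_add] at hvertical
  rw [mul_assoc _ I, mul_comm I, haxis', ← exp_neg_add_exp_sub_two, radialProfile]
  linear_combination 2 * hcentral + hvertical - hleft - hright

lemma integrableOn_inversion_mul_exp (h : IsEigenKernel ε k) (hu : 2 < u) :
    IntegrableOn (fun t : ℝ ↦ inversion ε k (t * I) * cexp (-(π * u * t : ℝ))) (Ioi 0) := by
  refine (h.integrableOn_axisIntegrand hu).congr_fun (fun t _ ↦ ?_) measurableSet_Ioi
  simp only [axisIntegrand, cexp_pi_mul_I_mul_ofReal_mul_I]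

end IsEigenKernel

/-! ### The quasimodular kernel `φ₀` -/

/-- The Lambert-type series `∑_{n ≥ 1} σ_k(n) rⁿ`, in a real or a complex variable. -/
noncomputable def sigmaSeries {𝕜 : Type*} [NormedField 𝕜] (k : ℕ) (r : 𝕜) : 𝕜 :=
  ∑' n : ℕ, (sigma k (n + 1) : 𝕜) * r ^ (n + 1)

section SigmaSeries

variable {𝕜 : Type*} [RCLike 𝕜]

lemma summable_norm_sigma_mul_pow (k : ℕ) {r : 𝕜} (hr : ‖r‖ < 1) :
    Summable fun n : ℕ ↦ ‖(sigma k (n + 1) : 𝕜) * r ^ (n + 1)‖ := by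
  have hpow := (summable_nat_add_iff 1).2
    (summable_pow_mul_geometric_of_norm_lt_one (R := ℝ) (k + 1) (r := ‖r‖) (by rwa [norm_norm]))
  refine Summable.of_nonneg_of_le (fun n ↦ norm_nonneg _) (fun n ↦ ?_) hpow
  rw [norm_mul, norm_pow, RCLike.norm_natCast]
  gcongr
  exact_mod_cast ArithmeticFunction.sigma_le_pow_succ k (n + 1)

lemma norm_sigmaSeries_le (k : ℕ) {r : 𝕜} {ρ : ℝ} (hρ : 0 < ρ) (hρ₁ : ρ < 1) (hr : ‖r‖ ≤ ρ) :
    ‖sigmaSeries k r‖ ≤ sigmaSeries k ρ / ρ * ‖r‖ := by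
  have hsum := summable_norm_sigma_mul_pow k (hr.trans_lt hρ₁)
  have hsumρ : Summable fun n : ℕ ↦ (sigma k (n + 1) : ℝ) * ρ ^ (n + 1) :=
    (summable_norm_sigma_mul_pow (𝕜 := ℝ) k
      (by rwa [Real.norm_of_nonneg hρ.le])).of_norm
  rw [div_mul_eq_mul_div, mul_div_assoc, sigmaSeries, sigmaSeries, ← tsum_mul_right]
  refine (norm_tsum_le_tsum_norm hsum).trans (hsum.tsum_le_tsum (fun n ↦ ?_) (hsumρ.mul_right _))
  calc ‖(sigma k (n + 1) : 𝕜) * r ^ (n + 1)‖ = sigma k (n + 1) * (‖r‖ ^ n * ‖r‖) := by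
        rw [norm_mul, norm_pow, RCLike.norm_natCast, pow_succ]
    _ ≤ sigma k (n + 1) * (ρ ^ n * ‖r‖) := by gcongr
    _ = sigma k (n + 1) * ρ ^ (n + 1) * (‖r‖ / ρ) := by
        rw [pow_succ]
        field_simp

end SigmaSeries

lemma one_sub_sum_le_prod_one_sub {ι : Type*} {s : Finset ι} {f : ι → ℝ}
    (h0 : ∀ i ∈ s, 0 ≤ f i) (h1 : ∀ i ∈ s, f i ≤ 1) :
    1 - ∑ i ∈ s, f i ≤ ∏ i ∈ s, (1 - f i) := by
  induction s using Finset.cons_induction with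
  | empty => simp
  | cons i s hi ih =>
    rw [Finset.forall_mem_cons] at h0 h1
    have hle : ∏ i ∈ s, (1 - f i) ≤ 1 := Finset.prod_le_one
      (fun j hj ↦ sub_nonneg.2 (h1.2 j hj)) fun j hj ↦ sub_le_self 1 (h0.2 j hj)
    rw [Finset.sum_cons, Finset.prod_cons]
    nlinarith [ih h0.2 h1.2]

lemma one_sub_div_le_prod_one_sub_pow {r : ℝ} (h0 : 0 ≤ r) (h1 : r < 1) (N : ℕ) :
    1 - r / (1 - r) ≤ ∏ n ∈ Finset.range N, (1 - r ^ (n + 1)) := by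
  have hgeom : HasSum (fun n : ℕ ↦ r ^ (n + 1)) (r / (1 - r)) := by
    simpa [pow_succ', div_eq_mul_inv] using (hasSum_geometric_of_lt_one h0 h1).mul_left r
  calc 1 - r / (1 - r) ≤ 1 - ∑ n ∈ Finset.range N, r ^ (n + 1) :=
        sub_le_sub_left (sum_le_hasSum _ (fun n _ ↦ by positivity) hgeom) 1
    _ ≤ ∏ n ∈ Finset.range N, (1 - r ^ (n + 1)) := one_sub_sum_le_prod_one_sub
        (fun n _ ↦ by positivity) fun n _ ↦ pow_le_one₀ h0 h1.le

/-- The nome `q = exp(2πiz)`. -/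
noncomputable def nome (z : ℂ) : ℂ := cexp (2 * π * I * z)

lemma nome_ne_zero (z : ℂ) : nome z ≠ 0 := exp_ne_zero _

lemma nome_add_one (z : ℂ) : nome (z + 1) = nome z := by
  rw [nome, nome, mul_add, mul_one, exp_periodic]

lemma norm_nome (z : ℂ) : ‖nome z‖ = rexp (-(2 * π * z.im)) := by
  rw [nome, norm_exp]
  simp

lemma inv_norm_nome (z : ℂ) : ‖nome z‖⁻¹ = rexp (2 * π * z.im) := by
  rw [norm_nome, Real.exp_neg, inv_inv]

lemma norm_nome_lt_one {z : ℂ} (hz : 0 < z.im) : ‖nome z‖ < 1 := by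
  rw [norm_nome, Real.exp_lt_one_iff]
  nlinarith [mul_pos Real.pi_pos hz]

lemma norm_nome_le {z : ℂ} (hz : 1 / 2 ≤ z.im) : ‖nome z‖ ≤ 1 / 8 := by
  have he : (2 : ℝ) ^ 3 ≤ rexp 1 ^ 3 := by gcongr; linarith [Real.add_one_le_exp (1 : ℝ)]
  rw [norm_nome, Real.exp_neg, one_div]
  refine inv_anti₀ (by norm_num) ?_
  calc (8 : ℝ) ≤ rexp 1 ^ 3 := by linarith
    _ = rexp 3 := by rw [← Real.exp_nat_mul]; norm_num
    _ ≤ rexp (2 * π * z.im) := Real.exp_le_exp.2 (by nlinarith [Real.pi_gt_three])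

/-- The quasimodular Eisenstein series of weight two, as a function of a complex variable. -/
noncomputable def E₂ (z : ℂ) : ℂ := EisensteinSeries.E2 (ofComplex z)

/-- The normalised Eisenstein series of weight four, as a function of a complex variable. -/
noncomputable def E₄ (z : ℂ) : ℂ := ModularForm.E (k := 4) (by norm_num) (ofComplex z)

/-- The normalised Eisenstein series of weight six, as a function of a complex variable. -/
noncomputable def E₆ (z : ℂ) : ℂ := ModularForm.E (k := 6) (by norm_num) (ofComplex z)

/-- The modular discriminant, normalised to have leading coefficient one, as a function of a
complex variable. -/
noncomputable def Δ (z : ℂ) : ℂ := ModularForm.discriminant (ofComplex z)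

section ModularForms

variable {z : ℂ}

lemma differentiableOn_E₂ : DifferentiableOn ℂ E₂ upperHalfPlaneSet :=
  UpperHalfPlane.mdifferentiable_iff.1 E2_mdifferentiable

lemma differentiableOn_E₄ : DifferentiableOn ℂ E₄ upperHalfPlaneSet :=
  UpperHalfPlane.mdifferentiable_iff.1 (ModularForm.E (k := 4) (by norm_num)).holo'

lemma differentiableOn_E₆ : DifferentiableOn ℂ E₆ upperHalfPlaneSet :=
  UpperHalfPlane.mdifferentiable_iff.1 (ModularForm.E (k := 6) (by norm_num)).holo'

lemma Δ_ne_zero (z : ℂ) : Δ z ≠ 0 := ModularForm.discriminant_ne_zero _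

lemma differentiableOn_Δ : DifferentiableOn ℂ Δ upperHalfPlaneSet := by
  refine DifferentiableOn.congr (f := fun z ↦ ModularForm.eta z ^ 24) (fun z hz ↦ ?_)
    fun z hz ↦ by rw [Δ, ofComplex_apply_of_im_pos hz]; rfl
  exact ((ModularForm.differentiableAt_eta_of_mem_upperHalfPlaneSet hz).pow
    24).differentiableWithinAt

lemma tsum_pnat_sigma_eq_sigmaSeries (k : ℕ) (q : ℂ) :
    ∑' n : ℕ+, (sigma k n : ℂ) * q ^ (n : ℕ) = sigmaSeries k q :=
  tsum_pnat_eq_tsum_succ (f := fun n : ℕ ↦ (sigma k n : ℂ) * q ^ n)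

lemma bernoulli_six : bernoulli 6 = 1 / 42 := by
  have h5 : bernoulli' 5 = 0 := bernoulli'_eq_zero_of_odd (by decide) (by norm_num)
  rw [bernoulli_eq_bernoulli'_of_ne_one (by norm_num), bernoulli'_def]
  norm_num [Finset.sum_range_succ, Nat.choose, h5]

lemma E₂_eq_sigmaSeries (hz : 0 < z.im) : E₂ z = 1 - 24 * sigmaSeries 1 (nome z) := by
  rw [E₂, ofComplex_apply_of_im_pos hz, EisensteinSeries.E2_eq_tsum_cexp,
    ← tsum_pnat_sigma_eq_sigmaSeries]
  rfl

lemma E₄_eq_sigmaSeries (hz : 0 < z.im) : E₄ z = 1 + 240 * sigmaSeries 3 (nome z) := by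
  rw [E₄, ofComplex_apply_of_im_pos hz,
    EisensteinSeries.q_expansion_bernoulli (by norm_num) (by decide),
    bernoulli_eq_bernoulli'_of_ne_one (by norm_num), bernoulli'_four,
    ← tsum_pnat_sigma_eq_sigmaSeries]
  simp only [nome, zpow_natCast]
  push_cast
  norm_num

lemma E₆_eq_sigmaSeries (hz : 0 < z.im) : E₆ z = 1 - 504 * sigmaSeries 5 (nome z) := by
  rw [E₆, ofComplex_apply_of_im_pos hz,
    EisensteinSeries.q_expansion_bernoulli (by norm_num) (by decide), bernoulli_six,
    ← tsum_pnat_sigma_eq_sigmaSeries]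
  simp only [nome, zpow_natCast]
  push_cast
  norm_num

lemma Δ_eq_nome_mul_tprod (hz : 0 < z.im) :
    Δ z = nome z * (∏' n : ℕ, (1 - nome z ^ (n + 1))) ^ 24 := by
  rw [← (ModularForm.multipliable_one_sub_pow (norm_nome_lt_one hz)).tprod_pow, Δ,
    ofComplex_apply_of_im_pos hz, ModularForm.discriminant_eq_q_prod]
  simp [ModularForm.eta_q, Function.Periodic.qParam, nome]

lemma E₂_add_one (hz : 0 < z.im) : E₂ (z + 1) = E₂ z := by
  rw [E₂_eq_sigmaSeries hz, E₂_eq_sigmaSeries (by simpa), nome_add_one]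

lemma E₄_add_one (hz : 0 < z.im) : E₄ (z + 1) = E₄ z := by
  rw [E₄_eq_sigmaSeries hz, E₄_eq_sigmaSeries (by simpa), nome_add_one]

lemma E₆_add_one (hz : 0 < z.im) : E₆ (z + 1) = E₆ z := by
  rw [E₆_eq_sigmaSeries hz, E₆_eq_sigmaSeries (by simpa), nome_add_one]

lemma Δ_add_one (hz : 0 < z.im) : Δ (z + 1) = Δ z := by
  rw [Δ_eq_nome_mul_tprod hz, Δ_eq_nome_mul_tprod (by simpa), nome_add_one]

lemma ofComplex_neg_one_div (hz : 0 < z.im) :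
    ofComplex (-1 / z) = ModularGroup.S • (⟨z, hz⟩ : UpperHalfPlane) := by
  rw [ofComplex_apply_of_im_pos (im_neg_inv_pos hz), UpperHalfPlane.modular_S_smul]
  ext
  simp [neg_div, inv_neg]

lemma Δ_neg_one_div (hz : 0 < z.im) : Δ (-1 / z) = z ^ 12 * Δ z := by
  have hS := congrFun ModularForm.discriminant_S_invariant (⟨z, hz⟩ : UpperHalfPlane)
  rw [ModularForm.SL_slash_apply, ModularGroup.denom_S] at hS
  rw [Δ, ofComplex_neg_one_div hz, Δ, ofComplex_apply_of_im_pos hz, ← hS, mul_left_comm,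
    ← zpow_natCast, ← zpow_add₀ (ne_zero_of_im_pos hz)]
  simp

lemma E₂_neg_one_div (hz : 0 < z.im) : E₂ (-1 / z) = z ^ 2 * E₂ z - 6 * I / π * z := by
  have hz0 := ne_zero_of_im_pos hz
  have hS := congrFun (EisensteinSeries.E2_slash_action ModularGroup.S)
    (⟨z, hz⟩ : UpperHalfPlane)
  rw [ModularForm.SL_slash_apply, ModularGroup.denom_S, zpow_neg] at hS
  simp only [Pi.sub_apply, Pi.smul_apply, EisensteinSeries.D2_S, riemannZeta_two,
    smul_eq_mul] at hS
  rw [E₂, ofComplex_neg_one_div hz, E₂, ofComplex_apply_of_im_pos hz]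
  have hpow : z ^ (2 : ℤ) = z ^ 2 := by norm_cast
  rw [hpow] at hS
  field_simp at hS ⊢
  linear_combination hS

lemma eisenstein_neg_one_div {k : ℕ} (hk : 3 ≤ k) (hz : 0 < z.im) :
    ModularForm.E hk (ofComplex (-1 / z)) = z ^ k * ModularForm.E hk (ofComplex z) := by
  have hS := SlashInvariantForm.slash_action_eqn'' (ModularForm.E hk) (γ := ModularGroup.S)
    (MonoidHom.mem_range.2 ⟨ModularGroup.S, rfl⟩) (⟨z, hz⟩ : UpperHalfPlane)
  rw [ofComplex_neg_one_div hz, ofComplex_apply_of_im_pos hz]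
  rw [ModularGroup.denom_S] at hS
  simpa using hS

lemma E₄_neg_one_div (hz : 0 < z.im) : E₄ (-1 / z) = z ^ 4 * E₄ z :=
  eisenstein_neg_one_div _ hz

lemma E₆_neg_one_div (hz : 0 < z.im) : E₆ (-1 / z) = z ^ 6 * E₆ z :=
  eisenstein_neg_one_div _ hz

lemma norm_nome_mul_le_norm_Δ (hz : 1 / 2 ≤ z.im) : ‖nome z‖ * (6 / 7) ^ 24 ≤ ‖Δ z‖ := by
  have hq := norm_nome_le hz
  have hq1 : ‖nome z‖ < 1 := by linarith
  rw [Δ_eq_nome_mul_tprod (by linarith), norm_mul, norm_pow]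
  gcongr
  have hlim := (ModularForm.multipliable_one_sub_pow hq1).hasProd.tendsto_prod_nat.norm
  refine ge_of_tendsto' hlim fun N ↦ ?_
  calc (6 / 7 : ℝ) ≤ 1 - ‖nome z‖ / (1 - ‖nome z‖) := by
        rw [le_sub_comm, div_le_iff₀ (by linarith)]
        linarith
    _ ≤ ∏ n ∈ Finset.range N, (1 - ‖nome z‖ ^ (n + 1)) :=
        one_sub_div_le_prod_one_sub_pow (norm_nonneg _) hq1 N
    _ ≤ ∏ n ∈ Finset.range N, ‖1 - nome z ^ (n + 1)‖ := by
        refine Finset.prod_le_prod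
          (fun n _ ↦ sub_nonneg.2 (pow_le_one₀ (norm_nonneg _) hq1.le)) fun n _ ↦ ?_
        simpa using norm_sub_norm_le (1 : ℂ) (nome z ^ (n + 1))
    _ = ‖∏ n ∈ Finset.range N, (1 - nome z ^ (n + 1))‖ := (norm_prod _ _).symm

lemma exists_inv_norm_Δ_le :
    ∃ C, 0 ≤ C ∧ ∀ z : ℂ, 1 / 2 ≤ z.im → ‖Δ z‖⁻¹ ≤ C * ‖nome z‖⁻¹ := by
  refine ⟨((6 / 7) ^ 24)⁻¹, by positivity, fun z hz ↦ ?_⟩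
  have hq := norm_pos_iff.2 (nome_ne_zero z)
  rw [← mul_inv, mul_comm]
  exact inv_anti₀ (by positivity) (norm_nome_mul_le_norm_Δ hz)

lemma exists_norm_sigmaSeries_nome_le (k : ℕ) :
    ∃ C, 0 ≤ C ∧ ∀ z : ℂ, 1 / 2 ≤ z.im → ‖sigmaSeries k (nome z)‖ ≤ C * ‖nome z‖ :=
  ⟨sigmaSeries k (1 / 8 : ℝ) / (1 / 8),
    div_nonneg (tsum_nonneg fun n ↦ by positivity) (by norm_num),
    fun _ hz ↦ norm_sigmaSeries_le k (by norm_num) (by norm_num) (norm_nome_le hz)⟩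

end ModularForms

/-- The form `E₂E₄ - E₆`, a multiple of the derivative of `E₄`; it vanishes at the cusp. -/
noncomputable def E₂E₄SubE₆ (z : ℂ) : ℂ := E₂ z * E₄ z - E₆ z

/-- Viazovska's quasimodular kernel `φ₀ = (E₂E₄ - E₆)² / Δ`, of weight zero and depth two. -/
noncomputable def φ₀ (z : ℂ) : ℂ := E₂E₄SubE₆ z ^ 2 / Δ z

/-- The weight `-2` companion of `φ₀`, the linear term of its transformation law. -/
noncomputable def φ₂ (z : ℂ) : ℂ := E₄ z * E₂E₄SubE₆ z / Δ z

/-- The weight `-4` companion of `φ₀`, the constant term of its transformation law. -/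
noncomputable def φ₄ (z : ℂ) : ℂ := E₄ z ^ 2 / Δ z

section QuasimodularKernel

variable {z : ℂ}

lemma E₂E₄SubE₆_eq_sigmaSeries (hz : 0 < z.im) :
    E₂E₄SubE₆ z = -24 * sigmaSeries 1 (nome z) + 240 * sigmaSeries 3 (nome z)
      - 5760 * (sigmaSeries 1 (nome z) * sigmaSeries 3 (nome z))
      + 504 * sigmaSeries 5 (nome z) := by
  rw [E₂E₄SubE₆, E₂_eq_sigmaSeries hz, E₄_eq_sigmaSeries hz, E₆_eq_sigmaSeries hz]
  ring

lemma exists_norm_E₂E₄SubE₆_le :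
    ∃ C, 0 ≤ C ∧ ∀ z : ℂ, 1 / 2 ≤ z.im → ‖E₂E₄SubE₆ z‖ ≤ C * ‖nome z‖ := by
  obtain ⟨a, ha, h1⟩ := exists_norm_sigmaSeries_nome_le 1
  obtain ⟨b, hb, h3⟩ := exists_norm_sigmaSeries_nome_le 3
  obtain ⟨c, hc, h5⟩ := exists_norm_sigmaSeries_nome_le 5
  refine ⟨24 * a + 240 * b + 5760 * (a * b) + 504 * c, by positivity, fun z hz ↦ ?_⟩
  rw [E₂E₄SubE₆_eq_sigmaSeries (by linarith)]
  specialize h1 z hz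
  specialize h3 z hz
  specialize h5 z hz
  set q := ‖nome z‖
  set s₁ := sigmaSeries 1 (nome z)
  set s₃ := sigmaSeries 3 (nome z)
  set s₅ := sigmaSeries 5 (nome z)
  have hq : q ≤ 1 := (norm_nome_le hz).trans (by norm_num)
  have h13 : ‖s₁‖ * ‖s₃‖ ≤ a * b * q := by
    calc ‖s₁‖ * ‖s₃‖ ≤ (a * q) * (b * 1) := by gcongr; exact h3.trans (by gcongr)
      _ = a * b * q := by ring
  calc _ ≤ ‖-24 * s₁‖ + ‖240 * s₃‖ + ‖5760 * (s₁ * s₃)‖ + ‖504 * s₅‖ :=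
        (norm_add_le _ _).trans (add_le_add_left ((norm_sub_le _ _).trans
          (add_le_add_left (norm_add_le _ _) _)) _)
    _ = 24 * ‖s₁‖ + 240 * ‖s₃‖ + 5760 * (‖s₁‖ * ‖s₃‖) + 504 * ‖s₅‖ := by
        simp only [norm_mul, norm_neg, norm_ofNat]
    _ ≤ 24 * (a * q) + 240 * (b * q) + 5760 * (a * b * q) + 504 * (c * q) := by gcongr
    _ = _ := by ring

lemma exists_norm_E₄_le : ∃ C, 0 ≤ C ∧ ∀ z : ℂ, 1 / 2 ≤ z.im → ‖E₄ z‖ ≤ C := by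
  obtain ⟨b, hb, h3⟩ := exists_norm_sigmaSeries_nome_le 3
  refine ⟨1 + 240 * b, by positivity, fun z hz ↦ ?_⟩
  rw [E₄_eq_sigmaSeries (by linarith)]
  have hq := norm_nome_le hz
  calc ‖1 + 240 * sigmaSeries 3 (nome z)‖ ≤ 1 + 240 * ‖sigmaSeries 3 (nome z)‖ := by
        simpa using norm_add_le 1 (240 * sigmaSeries 3 (nome z))
    _ ≤ 1 + 240 * (b * 1) := by
        gcongr
        exact (h3 z hz).trans (by gcongr; linarith)
    _ = 1 + 240 * b := by rw [mul_one]

lemma exists_norm_φ₀_le : ∃ C, 0 ≤ C ∧ ∀ z : ℂ, 1 / 2 ≤ z.im → ‖φ₀ z‖ ≤ C * ‖nome z‖ := by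
  obtain ⟨n, -, hN⟩ := exists_norm_E₂E₄SubE₆_le
  obtain ⟨d, hd, hΔ⟩ := exists_inv_norm_Δ_le
  refine ⟨n ^ 2 * d, by positivity, fun z hz ↦ ?_⟩
  have hq := norm_pos_iff.2 (nome_ne_zero z)
  rw [φ₀, norm_div, norm_pow, div_eq_mul_inv]
  calc _ ≤ (n * ‖nome z‖) ^ 2 * (d * ‖nome z‖⁻¹) := by gcongr; exacts [hN z hz, hΔ z hz]
    _ = _ := by field_simp

lemma exists_norm_φ₂_le : ∃ C, 0 ≤ C ∧ ∀ z : ℂ, 1 / 2 ≤ z.im → ‖φ₂ z‖ ≤ C := by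
  obtain ⟨n, hn, hN⟩ := exists_norm_E₂E₄SubE₆_le
  obtain ⟨e, he, hE⟩ := exists_norm_E₄_le
  obtain ⟨d, hd, hΔ⟩ := exists_inv_norm_Δ_le
  refine ⟨e * n * d, by positivity, fun z hz ↦ ?_⟩
  have hq := norm_pos_iff.2 (nome_ne_zero z)
  rw [φ₂, norm_div, norm_mul, div_eq_mul_inv]
  calc _ ≤ e * (n * ‖nome z‖) * (d * ‖nome z‖⁻¹) := by
        gcongr
        exacts [hE z hz, hN z hz, hΔ z hz]
    _ = _ := by field_simp

lemma exists_norm_φ₄_le : ∃ C, 0 ≤ C ∧ ∀ z : ℂ, 1 / 2 ≤ z.im → ‖φ₄ z‖ ≤ C * ‖nome z‖⁻¹ := by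
  obtain ⟨e, -, hE⟩ := exists_norm_E₄_le
  obtain ⟨d, hd, hΔ⟩ := exists_inv_norm_Δ_le
  refine ⟨e ^ 2 * d, by positivity, fun z hz ↦ ?_⟩
  rw [φ₄, norm_div, norm_pow, div_eq_mul_inv, mul_assoc]
  gcongr
  exacts [hE z hz, hΔ z hz]

lemma φ₀_add_one (hz : 0 < z.im) : φ₀ (z + 1) = φ₀ z := by
  rw [φ₀, φ₀, E₂E₄SubE₆, E₂E₄SubE₆, E₂_add_one hz, E₄_add_one hz, E₆_add_one hz, Δ_add_one hz]

lemma φ₂_add_one (hz : 0 < z.im) : φ₂ (z + 1) = φ₂ z := by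
  rw [φ₂, φ₂, E₂E₄SubE₆, E₂E₄SubE₆, E₂_add_one hz, E₄_add_one hz, E₆_add_one hz, Δ_add_one hz]

lemma φ₄_add_one (hz : 0 < z.im) : φ₄ (z + 1) = φ₄ z := by
  rw [φ₄, φ₄, E₄_add_one hz, Δ_add_one hz]

lemma differentiableOn_φ₀ : DifferentiableOn ℂ φ₀ upperHalfPlaneSet :=
  (((differentiableOn_E₂.mul differentiableOn_E₄).sub differentiableOn_E₆).pow 2).div
    differentiableOn_Δ fun z _ ↦ Δ_ne_zero z

lemma inversion_φ₀ (hz : 0 < z.im) :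
    inversion 1 φ₀ z = z ^ 2 * φ₀ z - 12 * I / π * z * φ₂ z - 36 / π ^ 2 * φ₄ z := by
  have hz0 := ne_zero_of_im_pos hz
  have hΔ := Δ_ne_zero z
  rw [inversion, φ₀, φ₀, φ₂, φ₄, E₂E₄SubE₆, E₂E₄SubE₆, E₂_neg_one_div hz, E₄_neg_one_div hz,
    E₆_neg_one_div hz, Δ_neg_one_div hz]
  field_simp
  linear_combination 36 * E₄ z ^ 2 * I_sq

lemma inversion_second_difference_φ₀ (hz : 0 < z.im) :
    inversion 1 φ₀ (z + 1) + inversion 1 φ₀ (z - 1) - 2 * inversion 1 φ₀ z = 2 * φ₀ z := by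
  have hz₁ : 0 < (z + 1).im := by simpa
  have hz₂ : 0 < (z - 1).im := by simpa
  have h₀ := φ₀_add_one hz₂
  have h₂ := φ₂_add_one hz₂
  have h₄ := φ₄_add_one hz₂
  rw [sub_add_cancel] at h₀ h₂ h₄
  rw [inversion_φ₀ hz, inversion_φ₀ hz₁, inversion_φ₀ hz₂, φ₀_add_one hz, φ₂_add_one hz,
    φ₄_add_one hz, ← h₀, ← h₂, ← h₄]
  ring

lemma norm_sq_le_one_add_im_sq (hz : |z.re| ≤ 1) : ‖z‖ ^ 2 ≤ 1 + z.im ^ 2 := by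
  rw [Complex.sq_norm, normSq_apply]
  nlinarith [abs_le.1 hz, abs_nonneg z.re]

lemma exists_norm_inversion_φ₀_le :
    ∃ C, ∀ z : ℂ, 1 ≤ z.im → |z.re| ≤ 1 →
      ‖inversion 1 φ₀ z‖ ≤ C * (1 + z.im ^ 2) * rexp (2 * π * z.im) := by
  obtain ⟨a, ha, h₀⟩ := exists_norm_φ₀_le
  obtain ⟨b, hb, h₂⟩ := exists_norm_φ₂_le
  obtain ⟨c, -, h₄⟩ := exists_norm_φ₄_le
  refine ⟨a + 4 * b + 4 * c, fun z hz hre ↦ ?_⟩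
  have hhalf : 1 / 2 ≤ z.im := by linarith
  have hπ : 3 < π := Real.pi_gt_three
  set X := rexp (2 * π * z.im)
  set Y := 1 + z.im ^ 2
  have hX : 1 ≤ X := Real.one_le_exp (by nlinarith)
  have hY : 1 ≤ Y := by linarith [sq_nonneg z.im]
  have hnorm : ‖z‖ ^ 2 ≤ Y := norm_sq_le_one_add_im_sq hre
  have hnorm₁ : ‖z‖ ≤ Y := by
    have him := hz.trans ((le_abs_self _).trans (abs_im_le_norm z))
    nlinarith
  have h₀X : ‖φ₀ z‖ ≤ a * X := (h₀ z hhalf).trans (by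
    gcongr
    exact ((norm_nome_le hhalf).trans (by norm_num)).trans hX)
  have h₂X : ‖φ₂ z‖ ≤ b * X := (h₂ z hhalf).trans (le_mul_of_one_le_right hb hX)
  have h₄X : ‖φ₄ z‖ ≤ c * X := by simpa only [inv_norm_nome] using h₄ z hhalf
  have hlin : 12 / π ≤ 4 := by rw [div_le_iff₀ (by linarith)]; linarith
  have hconst : 36 / π ^ 2 ≤ 4 := by rw [div_le_iff₀ (by positivity)]; nlinarith
  calc ‖inversion 1 φ₀ z‖
      ≤ ‖z ^ 2 * φ₀ z‖ + ‖12 * I / π * z * φ₂ z‖ + ‖36 / π ^ 2 * φ₄ z‖ := by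
        rw [inversion_φ₀ (by linarith)]
        exact (norm_sub_le _ _).trans (add_le_add_left (norm_sub_le _ _) _)
    _ = ‖z‖ ^ 2 * ‖φ₀ z‖ + 12 / π * ‖z‖ * ‖φ₂ z‖ + 36 / π ^ 2 * ‖φ₄ z‖ := by
        simp [abs_of_pos Real.pi_pos]
    _ ≤ Y * (a * X) + 4 * Y * (b * X) + 4 * Y * (c * X) := by
        gcongr
        linarith
    _ = (a + 4 * b + 4 * c) * Y * X := by ring

theorem isEigenKernel_φ₀ : IsEigenKernel 1 φ₀ where
  eq_one_or_neg_one := Or.inl rfl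
  differentiableOn := differentiableOn_φ₀
  map_add_one z hz := by rw [φ₀_add_one hz, one_mul]
  inversion_second_difference z hz := inversion_second_difference_φ₀ hz
  exists_norm_le := by
    obtain ⟨C, hC, h⟩ := exists_norm_φ₀_le
    refine ⟨C, fun z hz ↦ (h z hz).trans ?_⟩
    rw [norm_nome]
    gcongr
    nlinarith [Real.pi_pos]
  exists_norm_inversion_le := exists_norm_inversion_φ₀_le

end QuasimodularKernel

/-! ### The theta kernel `ψ_S` -/

/-- The Jacobi thetanull `θ₂(z) = ∑ exp(πi(n + 1/2)²z)`. -/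
noncomputable def θ₂ (z : ℂ) : ℂ := cexp (π * I * z / 4) * jacobiTheta₂ (z / 2) z

/-- The fourth power of the thetanull `θ₂`, a modular form of weight two. -/
noncomputable def H₂ (z : ℂ) : ℂ := θ₂ z ^ 4

/-- The fourth power of the thetanull `θ₃`, a modular form of weight two. -/
noncomputable def H₃ (z : ℂ) : ℂ := jacobiTheta z ^ 4

/-- The fourth power of the thetanull `θ₄(z) = θ₃(z + 1)`, a modular form of weight two. -/
noncomputable def H₄ (z : ℂ) : ℂ := jacobiTheta (z + 1) ^ 4

/-- Viazovska's kernel `ψ_I`, of weight `-2` for the congruence subgroup `Γ(2)`. -/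
noncomputable def ψI (z : ℂ) : ℂ :=
  ((H₃ z + H₄ z) * H₃ z ^ 2 * H₄ z ^ 2 + (H₄ z - H₂ z) * H₂ z ^ 2 * H₄ z ^ 2) / (2 * Δ z)

/-- Viazovska's kernel `ψ_S`, the image of `ψ_I` under the inversion `z ↦ -1 / z`. -/
noncomputable def ψS (z : ℂ) : ℂ :=
  H₂ z ^ 2 * (H₂ z * (H₃ z ^ 2 + H₄ z ^ 2) + H₃ z ^ 3 - H₄ z ^ 3) / (2 * Δ z)

/-- The square root `exp(-πy)` of the nome at the point `iy` of the imaginary axis. -/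
noncomputable def axisNome (y : ℝ) : ℝ := rexp (-π * y)

lemma axisNome_pos (y : ℝ) : 0 < axisNome y := Real.exp_pos _

lemma axisNome_lt_one {y : ℝ} (hy : 0 < y) : axisNome y < 1 := by
  rw [axisNome, Real.exp_lt_one_iff]
  nlinarith [Real.pi_pos]

lemma norm_nome_eq_axisNome_sq (z : ℂ) : ‖nome z‖ = axisNome z.im ^ 2 := by
  rw [norm_nome, axisNome, ← Real.exp_nat_mul]
  congr 1
  push_cast
  ring

lemma axisNome_le {y : ℝ} (hy : 1 / 2 ≤ y) : axisNome y ≤ 3 / 8 := by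
  have hq := norm_nome_le (z := y * I) (by simpa using hy)
  rw [norm_nome_eq_axisNome_sq, im_ofReal_mul, I_im, mul_one] at hq
  nlinarith [axisNome_pos y]

section ThetaFunctions

variable {z : ℂ}

lemma cexp_pi_mul_I_mul_sq_add_self (n : ℤ) : cexp (π * I * (n ^ 2 + n)) = 1 := by
  obtain ⟨m, hm⟩ := Int.even_mul_succ_self n
  have hcast : (n : ℂ) * (n + 1) = m + m := by exact_mod_cast hm
  rw [exp_eq_one_iff]
  exact ⟨m, by linear_combination π * I * hcast⟩

lemma cexp_pi_mul_I_mul_sq (n : ℤ) : cexp (π * I * n ^ 2) = cexp (π * I * n) := by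
  rw [exp_eq_exp_iff_exp_sub_eq_one, ← mul_sub, ← cexp_pi_mul_I_mul_sq_add_self (-n)]
  push_cast
  ring_nf

lemma θ₂_add_one (z : ℂ) : θ₂ (z + 1) = cexp (π * I / 4) * θ₂ z := by
  have hθ : jacobiTheta₂ ((z + 1) / 2) (z + 1) = jacobiTheta₂ (z / 2) z := by
    refine tsum_congr fun n ↦ ?_
    have hexp : 2 * π * I * n * ((z + 1) / 2) + π * I * n ^ 2 * (z + 1) =
        2 * π * I * n * (z / 2) + π * I * n ^ 2 * z + π * I * (n ^ 2 + n) := by ring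
    rw [jacobiTheta₂_term, jacobiTheta₂_term, hexp, exp_add, cexp_pi_mul_I_mul_sq_add_self,
      mul_one]
  rw [θ₂, θ₂, hθ, ← mul_assoc, ← exp_add]
  congr 2
  ring

lemma H₂_add_one (z : ℂ) : H₂ (z + 1) = -H₂ z := by
  have hexp : cexp (π * I / 4) ^ 4 = -1 := by
    rw [← exp_nat_mul, ← exp_pi_mul_I]
    congr 1
    push_cast
    ring
  rw [H₂, H₂, θ₂_add_one, mul_pow, hexp, neg_one_mul]

lemma H₃_add_one (z : ℂ) : H₃ (z + 1) = H₄ z := rfl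

lemma H₄_add_one (z : ℂ) : H₄ (z + 1) = H₃ z := by
  rw [H₄, H₃, ← jacobiTheta_two_add z]
  ring_nf

lemma jacobiTheta_add_one (z : ℂ) : jacobiTheta (z + 1) = jacobiTheta₂ (1 / 2) z := by
  rw [jacobiTheta_eq_jacobiTheta₂]
  refine tsum_congr fun n ↦ ?_
  rw [jacobiTheta₂_term, jacobiTheta₂_term, mul_zero, zero_add, mul_add, mul_one, exp_add,
    cexp_pi_mul_I_mul_sq, ← exp_add]
  ring_nf

lemma cpow_one_half_pow_four (z : ℂ) : ((-I * z) ^ (1 / 2 : ℂ)) ^ 4 = -z ^ 2 := by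
  have hexp : ((4 : ℕ) : ℂ) * (1 / 2) = (2 : ℕ) := by norm_num
  rw [← cpow_nat_mul, hexp, cpow_natCast, mul_pow, neg_sq, I_sq, neg_one_mul]

lemma cpow_one_half_ne_zero (hz : z ≠ 0) : (-I * z) ^ (1 / 2 : ℂ) ≠ 0 := by
  simp [cpow_eq_zero_iff, hz]

lemma jacobiTheta_neg_one_div (hz : 0 < z.im) :
    jacobiTheta (-1 / z) = (-I * z) ^ (1 / 2 : ℂ) * jacobiTheta z := by
  have hc := cpow_one_half_ne_zero (ne_zero_of_im_pos hz)
  have hθ := jacobiTheta₂_functional_equation 0 z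
  simp only [zero_div, ← jacobiTheta_eq_jacobiTheta₂, ne_eq, OfNat.ofNat_ne_zero,
    not_false_eq_true, zero_pow, mul_zero, exp_zero, mul_one] at hθ
  rw [hθ, ← mul_assoc, mul_one_div_cancel hc, one_mul]

lemma jacobiTheta_neg_one_div_add_one (hz : 0 < z.im) :
    jacobiTheta (-1 / z + 1) = (-I * z) ^ (1 / 2 : ℂ) * θ₂ z := by
  have hz0 := ne_zero_of_im_pos hz
  have hc := cpow_one_half_ne_zero hz0
  have hθ := jacobiTheta₂_functional_equation (z / 2) z
  have hexp : -π * I * (z / 2) ^ 2 / z = -(π * I * z / 4) := by field_simp; ring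
  have hhalf : z / 2 / z = 1 / 2 := by field_simp
  rw [hhalf, ← jacobiTheta_add_one, hexp, exp_neg] at hθ
  rw [θ₂, hθ]
  generalize (-I * z) ^ (1 / 2 : ℂ) = c at *
  field_simp

lemma H₄_neg_one_div (hz : 0 < z.im) : H₄ (-1 / z) = -z ^ 2 * H₂ z := by
  rw [H₄, jacobiTheta_neg_one_div_add_one hz, mul_pow, cpow_one_half_pow_four, H₂]

lemma H₃_neg_one_div (hz : 0 < z.im) : H₃ (-1 / z) = -z ^ 2 * H₃ z := by
  rw [H₃, jacobiTheta_neg_one_div hz, mul_pow, cpow_one_half_pow_four, H₃]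

lemma H₂_neg_one_div (hz : 0 < z.im) : H₂ (-1 / z) = -z ^ 2 * H₄ z := by
  have hz0 := ne_zero_of_im_pos hz
  have hinvol : -1 / (-1 / z) = z := by field_simp
  have h := H₄_neg_one_div (im_neg_inv_pos hz)
  rw [hinvol] at h
  rw [h]
  field_simp

lemma differentiableOn_H₂ : DifferentiableOn ℂ H₂ upperHalfPlaneSet := by
  intro z hz
  have hθ : DifferentiableAt ℂ (fun w : ℂ ↦ jacobiTheta₂ (w / 2) w) z :=
    (hasFDerivAt_jacobiTheta₂ (z / 2) hz).differentiableAt.comp z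
      (f := fun w : ℂ ↦ (w / 2, w)) (by fun_prop)
  exact ((DifferentiableAt.mul (by fun_prop) hθ).pow 4).differentiableWithinAt

lemma differentiableOn_H₃ : DifferentiableOn ℂ H₃ upperHalfPlaneSet := fun _ hz ↦
  ((differentiableAt_jacobiTheta hz).pow 4).differentiableWithinAt

lemma differentiableOn_H₄ : DifferentiableOn ℂ H₄ upperHalfPlaneSet :=
  differentiableOn_H₃.comp (by fun_prop) fun _ hz ↦ by simpa [upperHalfPlaneSet] using hz

lemma hasSum_θ₂ (hz : 0 < z.im) :
    HasSum (fun n : ℕ ↦ 2 * cexp (π * I * ((n : ℂ) ^ 2 + n + 1 / 4) * z)) (θ₂ z) := by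
  refine (((hasSum_jacobiTheta₂_term (z / 2) hz).nat_add_neg_add_one).mul_left
    (cexp (π * I * z / 4))).congr_fun fun n ↦ ?_
  rw [jacobiTheta₂_term, jacobiTheta₂_term, mul_add (cexp _), ← exp_add, ← exp_add, two_mul]
  congr 2 <;> push_cast <;> ring_nf

lemma norm_θ₂_le (hz : 0 < z.im) :
    ‖θ₂ z‖ ≤ 2 * rexp (-π * z.im / 4) / (1 - axisNome z.im ^ 2) := by
  have hlt := axisNome_lt_one hz
  have hgeom := (hasSum_geometric_of_lt_one (sq_nonneg (axisNome z.im))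
    (by nlinarith [axisNome_pos z.im])).mul_left (2 * rexp (-π * z.im / 4))
  rw [← div_eq_mul_inv] at hgeom
  rw [← (hasSum_θ₂ hz).tsum_eq]
  refine tsum_of_norm_bounded hgeom fun n ↦ ?_
  have hre : (π * I * ((n : ℂ) ^ 2 + n + 1 / 4) * z).re = -(π * z.im) * (n ^ 2 + n + 1 / 4) := by
    have hprod : π * I * ((n : ℂ) ^ 2 + n + 1 / 4) * z =
        ((π * (n ^ 2 + n + 1 / 4) : ℝ) : ℂ) * (I * z) := by push_cast; ring
    rw [hprod, re_ofReal_mul, I_mul_re]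
    ring
  have hn : (n : ℝ) ≤ (n : ℝ) ^ 2 := by exact_mod_cast Nat.le_self_pow (by norm_num) n
  rw [norm_mul, norm_ofNat, norm_exp, hre, mul_assoc (2 : ℝ), axisNome, ← pow_mul,
    ← Real.exp_nat_mul, ← Real.exp_add]
  gcongr
  push_cast
  nlinarith [mul_pos Real.pi_pos hz]

lemma norm_H₂_le_div (hz : 0 < z.im) :
    ‖H₂ z‖ ≤ 16 * axisNome z.im / (1 - axisNome z.im ^ 2) ^ 4 := by
  have hexp : rexp (-π * z.im / 4) ^ 4 = axisNome z.im := by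
    rw [axisNome, ← Real.exp_nat_mul]
    congr 1
    push_cast
    ring
  calc ‖H₂ z‖ ≤ (2 * rexp (-π * z.im / 4) / (1 - axisNome z.im ^ 2)) ^ 4 := by
        rw [H₂, norm_pow]
        gcongr
        exact norm_θ₂_le hz
    _ = 16 * axisNome z.im / (1 - axisNome z.im ^ 2) ^ 4 := by
        rw [div_pow, mul_pow, hexp]
        norm_num

lemma norm_H₂_le (hz : 1 / 2 ≤ z.im) : ‖H₂ z‖ ≤ 256 * axisNome z.im := by
  have hp := axisNome_le hz
  have hp0 := axisNome_pos z.im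
  have hden : (1 / 2 : ℝ) ^ 4 ≤ (1 - axisNome z.im ^ 2) ^ 4 := by gcongr; nlinarith
  refine (norm_H₂_le_div (by linarith)).trans ?_
  rw [div_le_iff₀ (by positivity)]
  nlinarith

lemma norm_jacobiTheta_sub_one_le_axisNome (hz : 1 / 2 ≤ z.im) :
    ‖jacobiTheta z - 1‖ ≤ 4 * axisNome z.im := by
  have hp := axisNome_le hz
  have hp0 := axisNome_pos z.im
  refine (norm_jacobiTheta_sub_one_le (by linarith)).trans ?_
  rw [← axisNome]
  gcongr
  rw [div_le_iff₀ (by linarith)]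
  linarith

lemma norm_jacobiTheta_le (hz : 1 / 2 ≤ z.im) : ‖jacobiTheta z‖ ≤ 5 / 2 := by
  have htri := norm_add_le (jacobiTheta z - 1) 1
  rw [sub_add_cancel, norm_one] at htri
  linarith [norm_jacobiTheta_sub_one_le_axisNome hz, axisNome_le hz]

lemma norm_H₃_le (hz : 1 / 2 ≤ z.im) : ‖H₃ z‖ ≤ 40 := by
  rw [H₃, norm_pow]
  exact (pow_le_pow_left₀ (norm_nonneg _) (norm_jacobiTheta_le hz) 4).trans (by norm_num)

lemma norm_H₄_le (hz : 1 / 2 ≤ z.im) : ‖H₄ z‖ ≤ 40 :=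
  norm_H₃_le (z := z + 1) (by simpa using hz)

lemma norm_H₃_sub_H₄_le (hz : 1 / 2 ≤ z.im) : ‖H₃ z - H₄ z‖ ≤ 500 * axisNome z.im := by
  have hz₁ : 1 / 2 ≤ (z + 1).im := by simpa using hz
  have h₃ := norm_jacobiTheta_le hz
  have h₄ := norm_jacobiTheta_le hz₁
  have h₃₁ := norm_jacobiTheta_sub_one_le_axisNome hz
  have h₄₁ := norm_jacobiTheta_sub_one_le_axisNome hz₁
  rw [add_im, one_im, add_zero] at h₄₁
  set s := jacobiTheta z
  set t := jacobiTheta (z + 1)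
  have hsub : ‖s - 1 - (t - 1)‖ ≤ 8 * axisNome z.im := (norm_sub_le _ _).trans (by linarith)
  have hadd : ‖s + t‖ ≤ 5 := (norm_add_le _ _).trans (by linarith)
  have hsq : ‖s ^ 2 + t ^ 2‖ ≤ 25 / 2 := by
    refine (norm_add_le _ _).trans ?_
    rw [norm_pow, norm_pow]
    nlinarith [norm_nonneg s, norm_nonneg t]
  calc ‖H₃ z - H₄ z‖ = ‖s - 1 - (t - 1)‖ * (‖s + t‖ * ‖s ^ 2 + t ^ 2‖) := by
        rw [← norm_mul, ← norm_mul, H₃, H₄]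
        congr 1
        ring
    _ ≤ 8 * axisNome z.im * (5 * (25 / 2)) := by
        gcongr
        exact mul_nonneg (by norm_num) (axisNome_pos _).le
    _ = 500 * axisNome z.im := by ring

end ThetaFunctions

section ThetaKernel

variable {z : ℂ}

lemma inversion_ψS (hz : 0 < z.im) : inversion (-1) ψS z = ψI z := by
  have hz0 := ne_zero_of_im_pos hz
  have hΔ := Δ_ne_zero z
  rw [inversion, ψS, ψI, H₂_neg_one_div hz, H₃_neg_one_div hz, H₄_neg_one_div hz,
    Δ_neg_one_div hz]
  field_simp
  ring

lemma differentiableOn_ψS : DifferentiableOn ℂ ψS upperHalfPlaneSet :=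
  ((differentiableOn_H₂.pow 2).mul (((differentiableOn_H₂.mul ((differentiableOn_H₃.pow 2).add
    (differentiableOn_H₄.pow 2))).add (differentiableOn_H₃.pow 3)).sub
    (differentiableOn_H₄.pow 3))).div (differentiableOn_Δ.const_mul 2)
    fun z _ ↦ mul_ne_zero two_ne_zero (Δ_ne_zero z)

lemma ψS_add_one (hz : 0 < z.im) : ψS (z + 1) = -ψS z := by
  rw [ψS, ψS, H₂_add_one, H₃_add_one, H₄_add_one, Δ_add_one hz]
  ring

lemma ψI_second_difference (hz : 0 < z.im) :
    ψI (z + 1) + ψI (z - 1) - 2 * ψI z = 2 * ψS z := by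
  have hΔ := Δ_add_one (z := z - 1) (by simpa)
  have h₂ := H₂_add_one (z - 1)
  have h₃ := H₃_add_one (z - 1)
  have h₄ := H₄_add_one (z - 1)
  rw [sub_add_cancel] at hΔ h₂ h₃ h₄
  rw [ψI, ψI, ψI, ψS, H₂_add_one, H₃_add_one, H₄_add_one, Δ_add_one hz, ← hΔ, ← h₃, ← h₄,
    ← neg_eq_iff_eq_neg.2 h₂]
  ring

lemma exists_norm_ψS_le : ∃ C, ∀ z : ℂ, 1 / 2 ≤ z.im → ‖ψS z‖ ≤ C * axisNome z.im := by
  obtain ⟨D, -, hΔ⟩ := exists_inv_norm_Δ_le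
  refine ⟨256 ^ 2 * (256 * (40 ^ 2 + 40 ^ 2) + 500 * (40 ^ 2 + 40 * 40 + 40 ^ 2)) * D,
    fun z hz ↦ ?_⟩
  have hp0 := axisNome_pos z.im
  have hinv : ‖2 * Δ z‖⁻¹ ≤ D * (axisNome z.im ^ 2)⁻¹ := by
    rw [← norm_nome_eq_axisNome_sq, norm_mul, norm_ofNat, mul_inv]
    linarith [hΔ z hz, inv_nonneg.2 (norm_nonneg (Δ z))]
  have h₂ := norm_H₂_le hz
  have h₃ := norm_H₃_le hz
  have h₄ := norm_H₄_le hz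
  have h₃₄ := norm_H₃_sub_H₄_le hz
  have hcubes : H₂ z * (H₃ z ^ 2 + H₄ z ^ 2) + H₃ z ^ 3 - H₄ z ^ 3 = H₂ z * (H₃ z ^ 2 + H₄ z ^ 2) +
    (H₃ z - H₄ z) * (H₃ z ^ 2 + H₃ z * H₄ z + H₄ z ^ 2) := by ring
  have hsum : ‖H₂ z * (H₃ z ^ 2 + H₄ z ^ 2) + H₃ z ^ 3 - H₄ z ^ 3‖ ≤
      ‖H₂ z‖ * (‖H₃ z‖ ^ 2 + ‖H₄ z‖ ^ 2) +
        ‖H₃ z - H₄ z‖ * (‖H₃ z‖ ^ 2 + ‖H₃ z‖ * ‖H₄ z‖ + ‖H₄ z‖ ^ 2) := by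
    simp only [hcubes, ← norm_mul, ← norm_pow]
    refine (norm_add_le _ _).trans ?_
    rw [norm_mul, norm_mul]
    gcongr
    exacts [norm_add_le _ _, norm_add₃_le]
  rw [ψS, norm_div, norm_mul, norm_pow, div_eq_mul_inv]
  set p := axisNome z.im
  calc _ ≤ (256 * p) ^ 2 * ((256 * p) * (40 ^ 2 + 40 ^ 2) +
          (500 * p) * (40 ^ 2 + 40 * 40 + 40 ^ 2)) * (D * (p ^ 2)⁻¹) := by
        gcongr
        exact hsum.trans (by gcongr)
    _ = _ := by field_simp

lemma exists_norm_ψI_le :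
    ∃ C, 0 ≤ C ∧ ∀ z : ℂ, 1 / 2 ≤ z.im → ‖ψI z‖ ≤ C * rexp (2 * π * z.im) := by
  obtain ⟨D, hD, hΔ⟩ := exists_inv_norm_Δ_le
  refine ⟨((40 + 40) * 40 ^ 2 * 40 ^ 2 + (40 + 100) * 100 ^ 2 * 40 ^ 2) * D, by positivity,
    fun z hz ↦ ?_⟩
  have hinv : ‖2 * Δ z‖⁻¹ ≤ D * rexp (2 * π * z.im) := by
    rw [← inv_norm_nome, norm_mul, norm_ofNat, mul_inv]
    linarith [hΔ z hz, inv_nonneg.2 (norm_nonneg (Δ z))]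
  have h₂ : ‖H₂ z‖ ≤ 100 := (norm_H₂_le hz).trans (by linarith [axisNome_le hz])
  have h₃ := norm_H₃_le hz
  have h₄ := norm_H₄_le hz
  rw [ψI, norm_div, div_eq_mul_inv, mul_assoc _ D]
  gcongr
  refine (norm_add_le _ _).trans ?_
  simp only [norm_mul, norm_pow]
  gcongr
  exacts [(norm_add_le _ _).trans (by gcongr), (norm_sub_le _ _).trans (by gcongr)]

theorem isEigenKernel_ψS : IsEigenKernel (-1) ψS where
  eq_one_or_neg_one := Or.inr rfl
  differentiableOn := differentiableOn_ψS
  map_add_one z hz := by rw [ψS_add_one hz, neg_one_mul]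
  inversion_second_difference z hz := by
    rw [inversion_ψS hz, inversion_ψS (by simpa), inversion_ψS (by simpa),
      ψI_second_difference hz]
  exists_norm_le := exists_norm_ψS_le
  exists_norm_inversion_le := by
    obtain ⟨C, hC, h⟩ := exists_norm_ψI_le
    refine ⟨C, fun z hz _ ↦ ?_⟩
    rw [inversion_ψS (by linarith)]
    refine (h z (by linarith)).trans ?_
    gcongr
    exact le_mul_of_one_le_right hC (by linarith [sq_nonneg z.im])

end ThetaKernel

/-! ### The kernels on the imaginary axis -/

section EulerProduct

variable {r : ℝ}

lemma hasProd_one_sub_pow (hr : |r| < 1) :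
    HasProd (fun n : ℕ ↦ 1 - r ^ (n + 1)) (∏' n : ℕ, (1 - r ^ (n + 1))) := by
  simp only [sub_eq_add_neg]
  refine (multipliable_one_add_of_summable ?_).hasProd
  simpa using (summable_nat_add_iff 1).2 (summable_geometric_of_abs_lt_one hr).abs

lemma ofReal_tprod_one_sub_pow (hr : |r| < 1) :
    ((∏' n : ℕ, (1 - r ^ (n + 1)) : ℝ) : ℂ) = ∏' n : ℕ, (1 - (r : ℂ) ^ (n + 1)) := by
  have hprod := (hasProd_one_sub_pow hr).map ofRealHom continuous_ofReal
  simpa [Function.comp_def] using hprod.tprod_eq.symm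

lemma tprod_one_sub_pow_nonneg (h0 : 0 ≤ r) (h1 : r < 1) : 0 ≤ ∏' n : ℕ, (1 - r ^ (n + 1)) :=
  ge_of_tendsto' (hasProd_one_sub_pow (abs_lt.2 ⟨by linarith, h1⟩)).tendsto_prod_nat fun _ ↦
    Finset.prod_nonneg fun _ _ ↦ sub_nonneg.2 (pow_le_one₀ h0 h1.le)

lemma tprod_one_sub_pow_le_one (h0 : 0 ≤ r) (h1 : r < 1) : ∏' n : ℕ, (1 - r ^ (n + 1)) ≤ 1 :=
  le_of_tendsto' (hasProd_one_sub_pow (abs_lt.2 ⟨by linarith, h1⟩)).tendsto_prod_nat fun _ ↦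
    Finset.prod_le_one (fun _ _ ↦ sub_nonneg.2 (pow_le_one₀ h0 h1.le))
      fun _ _ ↦ sub_le_self 1 (by positivity)

lemma one_sub_div_le_tprod_one_sub_pow (h0 : 0 ≤ r) (h1 : r < 1) :
    1 - r / (1 - r) ≤ ∏' n : ℕ, (1 - r ^ (n + 1)) :=
  ge_of_tendsto' (hasProd_one_sub_pow (abs_lt.2 ⟨by linarith, h1⟩)).tendsto_prod_nat fun N ↦
    one_sub_div_le_prod_one_sub_pow h0 h1 N

end EulerProduct

section ThetaSeries

/-- The theta series `∑_{n ∈ ℤ} x ^ n²`, giving `θ₃` at `x = exp(πiz)` and `θ₄` at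
`x = -exp(πiz)`. -/
noncomputable def thetaSeries (x : ℝ) : ℝ := 1 + 2 * ∑' n : ℕ, x ^ (n + 1) ^ 2

variable {x : ℝ}

lemma summable_norm_pow_sq (hx : |x| < 1) : Summable fun n : ℕ ↦ ‖x ^ (n + 1) ^ 2‖ := by
  refine .of_nonneg_of_le (fun n ↦ norm_nonneg _) (fun n ↦ ?_)
    (summable_geometric_of_lt_one (abs_nonneg x) hx)
  rw [norm_pow]
  exact pow_le_pow_of_le_one (abs_nonneg x) hx.le (by nlinarith)

lemma abs_thetaSeries_le (hx : |x| < 1) : |thetaSeries x| ≤ thetaSeries |x| := by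
  have hsum := norm_tsum_le_tsum_norm (summable_norm_pow_sq hx)
  simp only [Real.norm_eq_abs, abs_pow] at hsum
  refine (abs_add_le _ _).trans ?_
  rw [abs_one, abs_mul, abs_two, thetaSeries]
  gcongr

lemma one_add_two_mul_le_thetaSeries (h0 : 0 ≤ x) (h1 : x < 1) : 1 + 2 * x ≤ thetaSeries x := by
  have hsum := (summable_norm_pow_sq (by rwa [abs_of_nonneg h0])).of_norm.sum_le_tsum
    (Finset.range 1) fun n _ ↦ by positivity
  simp only [Finset.range_one, Finset.sum_singleton, zero_add, one_pow, pow_one] at hsum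
  rw [thetaSeries]
  gcongr

lemma abs_thetaSeries_sub_le (hx : |x| < 1) :
    |thetaSeries x - (1 + 2 * x)| ≤ 2 * |x| ^ 4 / (1 - |x|) := by
  have htail : thetaSeries x - (1 + 2 * x) = 2 * ∑' n : ℕ, x ^ (n + 1 + 1) ^ 2 := by
    rw [thetaSeries, (summable_norm_pow_sq hx).of_norm.tsum_eq_zero_add]
    simp only [zero_add, one_pow, pow_one]
    ring
  have hgeom := (hasSum_geometric_of_lt_one (abs_nonneg x) hx).mul_left (|x| ^ 4)
  rw [← div_eq_mul_inv] at hgeom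
  rw [htail, abs_mul, abs_two, mul_div_assoc]
  gcongr
  refine tsum_of_norm_bounded (f := fun n : ℕ ↦ x ^ (n + 1 + 1) ^ 2) hgeom fun n ↦ ?_
  rw [Real.norm_eq_abs, abs_pow, ← pow_add]
  exact pow_le_pow_of_le_one (abs_nonneg x) hx.le (by nlinarith)

end ThetaSeries

section ImaginaryAxis

/-- The restriction `t ↦ E₄(it)` to the imaginary axis, as a real function. -/
noncomputable def axisE₄ (t : ℝ) : ℝ := 1 + 240 * sigmaSeries 3 (axisNome t ^ 2)

/-- The restriction of `E₂E₄ - E₆` to the imaginary axis, as a real function. -/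
noncomputable def axisE₂E₄SubE₆ (t : ℝ) : ℝ :=
  -24 * sigmaSeries 1 (axisNome t ^ 2) + 240 * sigmaSeries 3 (axisNome t ^ 2)
    - 5760 * (sigmaSeries 1 (axisNome t ^ 2) * sigmaSeries 3 (axisNome t ^ 2))
    + 504 * sigmaSeries 5 (axisNome t ^ 2)

/-- The restriction `t ↦ Δ(it)` to the imaginary axis, as a real function. -/
noncomputable def axisΔ (t : ℝ) : ℝ :=
  axisNome t ^ 2 * (∏' n : ℕ, (1 - (axisNome t ^ 2) ^ (n + 1))) ^ 24

/-- The restriction `t ↦ φ₀(it)` to the imaginary axis, as a real function. -/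
noncomputable def axisφ₀ (t : ℝ) : ℝ := axisE₂E₄SubE₆ t ^ 2 / axisΔ t

/-- The restriction `t ↦ φ₂(it)` to the imaginary axis, as a real function. -/
noncomputable def axisφ₂ (t : ℝ) : ℝ := axisE₄ t * axisE₂E₄SubE₆ t / axisΔ t

/-- The restriction `t ↦ φ₄(it)` to the imaginary axis, as a real function. -/
noncomputable def axisφ₄ (t : ℝ) : ℝ := axisE₄ t ^ 2 / axisΔ t

/-- The restriction of `inversion 1 φ₀` to the imaginary axis, as a real function. -/
noncomputable def axisInversionφ₀ (t : ℝ) : ℝ :=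
  -t ^ 2 * axisφ₀ t + 12 / π * t * axisφ₂ t - 36 / π ^ 2 * axisφ₄ t

/-- The restriction `t ↦ θ₂(it)` to the imaginary axis, as a real function. -/
noncomputable def axisθ₂ (t : ℝ) : ℝ := ∑' n : ℕ, 2 * rexp (-π * ((n : ℝ) ^ 2 + n + 1 / 4) * t)

/-- The restriction `t ↦ H₂(it)` to the imaginary axis, as a real function. -/
noncomputable def axisH₂ (t : ℝ) : ℝ := axisθ₂ t ^ 4

/-- The restriction `t ↦ H₃(it)` to the imaginary axis, as a real function. -/
noncomputable def axisH₃ (t : ℝ) : ℝ := thetaSeries (axisNome t) ^ 4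

/-- The restriction `t ↦ H₄(it)` to the imaginary axis, as a real function. -/
noncomputable def axisH₄ (t : ℝ) : ℝ := thetaSeries (-axisNome t) ^ 4

/-- The restriction `t ↦ ψ_S(it)` to the imaginary axis, as a real function. -/
noncomputable def axisψS (t : ℝ) : ℝ :=
  axisH₂ t ^ 2 * (axisH₂ t * (axisH₃ t ^ 2 + axisH₄ t ^ 2) + axisH₃ t ^ 3 - axisH₄ t ^ 3) /
    (2 * axisΔ t)

/-- The restriction `t ↦ ψ_I(it)` to the imaginary axis, as a real function. -/
noncomputable def axisψI (t : ℝ) : ℝ :=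
  ((axisH₃ t + axisH₄ t) * axisH₃ t ^ 2 * axisH₄ t ^ 2 +
    (axisH₄ t - axisH₂ t) * axisH₂ t ^ 2 * axisH₄ t ^ 2) / (2 * axisΔ t)

variable {t : ℝ}

lemma im_ofReal_mul_I (t : ℝ) : (t * I).im = t := by simp

lemma im_ofReal_mul_I_pos (ht : 0 < t) : 0 < (t * I).im := by rwa [im_ofReal_mul_I]

lemma nome_mul_I (t : ℝ) : nome (t * I) = (axisNome t ^ 2 : ℝ) := by
  rw [nome, axisNome, ← Real.exp_nat_mul, ofReal_exp]
  congr 1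
  push_cast
  linear_combination 2 * (π : ℂ) * t * I_sq

lemma axisNome_sq_lt_one (ht : 0 < t) : axisNome t ^ 2 < 1 :=
  pow_lt_one₀ (axisNome_pos t).le (axisNome_lt_one ht) two_ne_zero

lemma sigmaSeries_nome_mul_I (k : ℕ) (t : ℝ) :
    sigmaSeries k (nome (t * I)) = (sigmaSeries k (axisNome t ^ 2) : ℝ) := by
  rw [sigmaSeries, sigmaSeries, ofReal_tsum, nome_mul_I]
  push_cast
  rfl

lemma E₄_mul_I (ht : 0 < t) : E₄ (t * I) = axisE₄ t := by
  rw [E₄_eq_sigmaSeries (im_ofReal_mul_I_pos ht), sigmaSeries_nome_mul_I, axisE₄]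
  push_cast
  rfl

lemma E₂E₄SubE₆_mul_I (ht : 0 < t) : E₂E₄SubE₆ (t * I) = axisE₂E₄SubE₆ t := by
  simp only [E₂E₄SubE₆_eq_sigmaSeries (im_ofReal_mul_I_pos ht), sigmaSeries_nome_mul_I,
    axisE₂E₄SubE₆]
  push_cast
  rfl

lemma Δ_mul_I (ht : 0 < t) : Δ (t * I) = axisΔ t := by
  rw [Δ_eq_nome_mul_tprod (im_ofReal_mul_I_pos ht), nome_mul_I, ← ofReal_tprod_one_sub_pow
    (by rw [abs_sq]; exact axisNome_sq_lt_one ht), axisΔ]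
  push_cast
  rfl

lemma axisΔ_pos (ht : 0 < t) : 0 < axisΔ t := by
  have hne : axisΔ t ≠ 0 := by
    rw [← ofReal_ne_zero, ← Δ_mul_I ht]
    exact Δ_ne_zero _
  exact lt_of_le_of_ne (by rw [axisΔ]; positivity) hne.symm

lemma axisΔ_le (ht : 0 < t) : axisΔ t ≤ axisNome t ^ 2 :=
  mul_le_of_le_one_right (sq_nonneg _) <| pow_le_one₀
    (tprod_one_sub_pow_nonneg (sq_nonneg _) (axisNome_sq_lt_one ht))
    (tprod_one_sub_pow_le_one (sq_nonneg _) (axisNome_sq_lt_one ht))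

lemma φ₀_mul_I (ht : 0 < t) : φ₀ (t * I) = axisφ₀ t := by
  rw [φ₀, E₂E₄SubE₆_mul_I ht, Δ_mul_I ht, axisφ₀]
  push_cast
  rfl

lemma φ₂_mul_I (ht : 0 < t) : φ₂ (t * I) = axisφ₂ t := by
  rw [φ₂, E₂E₄SubE₆_mul_I ht, E₄_mul_I ht, Δ_mul_I ht, axisφ₂]
  push_cast
  rfl

lemma φ₄_mul_I (ht : 0 < t) : φ₄ (t * I) = axisφ₄ t := by
  rw [φ₄, E₄_mul_I ht, Δ_mul_I ht, axisφ₄]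
  push_cast
  rfl

lemma inversion_φ₀_mul_I (ht : 0 < t) : inversion 1 φ₀ (t * I) = axisInversionφ₀ t := by
  rw [inversion_φ₀ (im_ofReal_mul_I_pos ht), φ₀_mul_I ht, φ₂_mul_I ht, φ₄_mul_I ht,
    axisInversionφ₀]
  push_cast
  linear_combination (t ^ 2 * axisφ₀ t - 12 / π * t * axisφ₂ t : ℂ) * I_sq

lemma hasSum_axisθ₂ (ht : 0 < t) :
    HasSum (fun n : ℕ ↦ ((2 * rexp (-π * ((n : ℝ) ^ 2 + n + 1 / 4) * t) : ℝ) : ℂ))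
      (θ₂ (t * I)) := by
  refine (hasSum_θ₂ (im_ofReal_mul_I_pos ht)).congr_fun fun n ↦ ?_
  rw [ofReal_mul, ofReal_exp]
  push_cast
  congr 2
  linear_combination -(π * ((n : ℂ) ^ 2 + n + 1 / 4) * t : ℂ) * I_sq

lemma two_mul_exp_le_axisθ₂ (ht : 0 < t) : 2 * rexp (-π * t / 4) ≤ axisθ₂ t := by
  have hsum := (summable_ofReal.1 (hasSum_axisθ₂ ht).summable).sum_le_tsum (Finset.range 1)
    fun n _ ↦ by positivity
  rw [Finset.sum_range_one] at hsum
  refine le_of_eq_of_le ?_ hsum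
  push_cast
  ring_nf

lemma H₂_mul_I (ht : 0 < t) : H₂ (t * I) = axisH₂ t := by
  rw [H₂, ← (hasSum_axisθ₂ ht).tsum_eq, ← ofReal_tsum, axisH₂, ofReal_pow]
  rfl

lemma jacobiTheta_mul_I (ht : 0 < t) : jacobiTheta (t * I) = thetaSeries (axisNome t) := by
  rw [jacobiTheta_eq_tsum_nat (im_ofReal_mul_I_pos ht), thetaSeries]
  push_cast
  congr 3
  ext n
  rw [axisNome, ofReal_exp, ← Complex.exp_nat_mul]
  congr 1
  push_cast
  linear_combination π * t * ((n : ℂ) + 1) ^ 2 * I_sq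

lemma jacobiTheta_mul_I_add_one (ht : 0 < t) :
    jacobiTheta (t * I + 1) = thetaSeries (-axisNome t) := by
  have hnome : -(axisNome t : ℂ) = cexp (π * I * (t * I + 1)) := by
    rw [mul_add, Complex.exp_add, mul_one, exp_pi_mul_I, axisNome, ofReal_exp, mul_neg_one]
    congr 2
    push_cast
    linear_combination -(π * t : ℂ) * I_sq
  rw [jacobiTheta_eq_tsum_nat (by simpa), thetaSeries]
  push_cast
  congr 3
  ext n
  rw [hnome, ← Complex.exp_nat_mul]
  congr 1
  push_cast
  ring

lemma H₃_mul_I (ht : 0 < t) : H₃ (t * I) = axisH₃ t := by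
  rw [H₃, jacobiTheta_mul_I ht, axisH₃, ofReal_pow]

lemma H₄_mul_I (ht : 0 < t) : H₄ (t * I) = axisH₄ t := by
  rw [H₄, jacobiTheta_mul_I_add_one ht, axisH₄, ofReal_pow]

lemma ψS_mul_I (ht : 0 < t) : ψS (t * I) = axisψS t := by
  rw [ψS, H₂_mul_I ht, H₃_mul_I ht, H₄_mul_I ht, Δ_mul_I ht, axisψS]
  push_cast
  rfl

lemma ψI_mul_I (ht : 0 < t) : ψI (t * I) = axisψI t := by
  rw [ψI, H₂_mul_I ht, H₃_mul_I ht, H₄_mul_I ht, Δ_mul_I ht, axisψI]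
  push_cast
  rfl

lemma le_axisH₂ (ht : 0 < t) : 16 * axisNome t ≤ axisH₂ t :=
  calc 16 * axisNome t = (2 * rexp (-π * t / 4)) ^ 4 := by
        rw [mul_pow, ← Real.exp_nat_mul, axisNome]
        push_cast
        ring_nf
    _ ≤ axisH₂ t := pow_le_pow_left₀ (by positivity) (two_mul_exp_le_axisθ₂ ht) 4

lemma axisH₂_pos (ht : 0 < t) : 0 < axisH₂ t := by linarith [le_axisH₂ ht, axisNome_pos t]

lemma axisH₂_le_div (ht : 0 < t) :
    axisH₂ t ≤ 16 * axisNome t / (1 - axisNome t ^ 2) ^ 4 := by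
  have hnorm := norm_H₂_le_div (im_ofReal_mul_I_pos ht)
  rw [H₂_mul_I ht, im_ofReal_mul_I, norm_real] at hnorm
  exact (le_abs_self _).trans hnorm

lemma axisH₄_eq (ht : 0 < t) : axisH₄ t = t⁻¹ ^ 2 * axisH₂ t⁻¹ := by
  have hinv : 0 < t⁻¹ := inv_pos.2 ht
  have h := H₄_neg_one_div (im_ofReal_mul_I_pos hinv)
  rw [neg_one_div_ofReal_mul_I, inv_inv, H₄_mul_I ht, H₂_mul_I hinv, mul_pow, I_sq] at h
  rw [← ofReal_inj, h]
  push_cast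
  ring

lemma axisH₄_pos (ht : 0 < t) : 0 < axisH₄ t := by
  have := axisH₂_pos (inv_pos.2 ht)
  rw [axisH₄_eq ht]
  positivity

lemma axisH₄_le_axisH₃ (ht : 0 < t) : axisH₄ t ≤ axisH₃ t := by
  have habs : |-axisNome t| = axisNome t := by rw [abs_neg, abs_of_pos (axisNome_pos t)]
  have hle := abs_thetaSeries_le (x := -axisNome t) (habs.trans_lt (axisNome_lt_one ht))
  rw [habs] at hle
  rw [axisH₃, axisH₄, ← Even.pow_abs (by decide) (thetaSeries (-axisNome t))]
  gcongr

lemma axisInversionφ₀_eq (ht : 0 < t) : axisInversionφ₀ t = -t ^ 2 * axisφ₀ t⁻¹ := by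
  have h := inversion_φ₀_mul_I ht
  rw [inversion, neg_one_div_ofReal_mul_I, φ₀_mul_I (inv_pos.2 ht), mul_pow, I_sq] at h
  rw [← ofReal_inj, ← h]
  push_cast
  ring

lemma axisψI_eq (ht : 0 < t) : axisψI t = t ^ 2 * axisψS t⁻¹ := by
  have h := inversion_ψS (im_ofReal_mul_I_pos ht)
  rw [inversion, neg_one_div_ofReal_mul_I, ψS_mul_I (inv_pos.2 ht), ψI_mul_I ht, mul_pow,
    I_sq] at h
  rw [← ofReal_inj, ← h]
  push_cast
  ring

lemma axisψS_pos (ht : 0 < t) : 0 < axisψS t := by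
  have h2 := axisH₂_pos ht
  have h4 := axisH₄_pos ht
  have hΔ := axisΔ_pos ht
  have hcube : axisH₄ t ^ 3 ≤ axisH₃ t ^ 3 := by
    gcongr
    exact axisH₄_le_axisH₃ ht
  have hprod : 0 < axisH₂ t * (axisH₃ t ^ 2 + axisH₄ t ^ 2) := by positivity
  exact div_pos (mul_pos (by positivity) (by linarith)) (by positivity)

lemma axisψI_pos (ht : 0 < t) : 0 < axisψI t := by
  rw [axisψI_eq ht]
  exact mul_pos (by positivity) (axisψS_pos (inv_pos.2 ht))

lemma axisφ₀_nonneg (ht : 0 < t) : 0 ≤ axisφ₀ t := div_nonneg (sq_nonneg _) (axisΔ_pos ht).le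

lemma axisInversionφ₀_nonpos (ht : 0 < t) : axisInversionφ₀ t ≤ 0 := by
  have := axisφ₀_nonneg (inv_pos.2 ht)
  rw [axisInversionφ₀_eq ht, neg_mul]
  exact neg_nonpos.2 (by positivity)

lemma axisInversionφ₀_sub_neg (ht : 0 < t) :
    axisInversionφ₀ t - 36 / π ^ 2 * axisψI t < 0 := by
  have hψ : 0 < 36 / π ^ 2 * axisψI t := mul_pos (by positivity) (axisψI_pos ht)
  linarith [axisInversionφ₀_nonpos ht]

end ImaginaryAxis

/-! ### Numerical bounds on the imaginary axis -/

section SigmaSeriesBounds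

variable {q : ℝ}

lemma summable_sigma_mul_pow (k : ℕ) (h0 : 0 ≤ q) (h1 : q < 1) :
    Summable fun n : ℕ ↦ (sigma k (n + 1) : ℝ) * q ^ (n + 1) := by
  have hq : ‖q‖ < 1 := by rwa [Real.norm_of_nonneg h0]
  exact (summable_norm_sigma_mul_pow k hq).of_norm

lemma sum_range_two_sigma_mul_pow (k : ℕ) (q : ℝ) :
    ∑ n ∈ Finset.range 2, (sigma k (n + 1) : ℝ) * q ^ (n + 1) = q + (1 + 2 ^ k) * q ^ 2 := by
  have hσ : sigma k 2 = 1 + 2 ^ k := by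
    rw [ArithmeticFunction.sigma_apply, Nat.Prime.divisors Nat.prime_two]
    simp
  simp [Finset.sum_range_succ, hσ]

lemma le_sigmaSeries (k : ℕ) (h0 : 0 ≤ q) (h1 : q < 1) :
    q + (1 + 2 ^ k) * q ^ 2 ≤ sigmaSeries k q := by
  rw [← sum_range_two_sigma_mul_pow]
  exact (summable_sigma_mul_pow k h0 h1).sum_le_tsum _ fun n _ ↦ by positivity

lemma add_three_pow_six_le (n : ℕ) : (n + 3) ^ 6 ≤ 27 ^ (n + 2) := by
  induction n with
  | zero => norm_num
  | succ n ih =>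
    have hratio : (n + 1 + 3) ^ 6 ≤ 27 * (n + 3) ^ 6 := by
      have h := Nat.pow_le_pow_left (by lia : 3 * (n + 1 + 3) ≤ 4 * (n + 3)) 6
      rw [mul_pow, mul_pow] at h
      lia
    calc (n + 1 + 3) ^ 6 ≤ 27 * (n + 3) ^ 6 := hratio
      _ ≤ 27 * 27 ^ (n + 2) := by gcongr
      _ = 27 ^ (n + 1 + 2) := by ring

lemma sigma_add_three_le {k : ℕ} (hk : k ≤ 5) (n : ℕ) :
    (sigma k (n + 2 + 1) : ℝ) ≤ 27 ^ (n + 2) := by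
  have h : sigma k (n + 2 + 1) ≤ 27 ^ (n + 2) := calc
    sigma k (n + 2 + 1) ≤ (n + 3) ^ (k + 1) := ArithmeticFunction.sigma_le_pow_succ k _
    _ ≤ (n + 3) ^ 6 := Nat.pow_le_pow_right (by lia) (by lia)
    _ ≤ 27 ^ (n + 2) := add_three_pow_six_le n
  exact_mod_cast h

lemma sigmaSeries_le {k : ℕ} (hk : k ≤ 5) (h0 : 0 ≤ q) (h1 : q ≤ 1 / 529) :
    sigmaSeries k q ≤ q + (1 + 2 ^ k) * q ^ 2 + 770 * q ^ 3 := by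
  have hs := summable_sigma_mul_pow k h0 (by linarith)
  have hgeom := (hasSum_geometric_of_lt_one (by positivity : 0 ≤ 27 * q)
    (by linarith)).mul_left (729 * q ^ 3)
  have htail : ∑' n : ℕ, (sigma k (n + 2 + 1) : ℝ) * q ^ (n + 2 + 1) ≤
      729 * q ^ 3 * (1 - 27 * q)⁻¹ := by
    rw [← hgeom.tsum_eq]
    refine ((summable_nat_add_iff 2).2 hs).tsum_le_tsum (fun n ↦ ?_) hgeom.summable
    calc (sigma k (n + 2 + 1) : ℝ) * q ^ (n + 2 + 1) ≤ 27 ^ (n + 2) * q ^ (n + 2 + 1) := by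
          gcongr
          exact sigma_add_three_le hk n
      _ = 729 * q ^ 3 * (27 * q) ^ n := by ring
  have hcoeff : 729 * q ^ 3 * (1 - 27 * q)⁻¹ ≤ 770 * q ^ 3 := by
    rw [← div_eq_mul_inv, div_le_iff₀ (by linarith)]
    nlinarith [pow_nonneg h0 3]
  rw [sigmaSeries, ← hs.sum_add_tsum_nat_add 2, sum_range_two_sigma_mul_pow]
  linarith

end SigmaSeriesBounds

section ModularBounds

variable {t : ℝ}

lemma le_exp_pi : 23 ≤ rexp π := by
  have h3 : (20 : ℝ) ≤ rexp 1 ^ 3 :=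
    le_trans (by norm_num) (pow_le_pow_left₀ (by norm_num) Real.exp_one_gt_d9.le 3)
  have hfrac : (1.15 : ℝ) ≤ rexp (π - 3) := by
    have := Real.quadratic_le_exp_of_nonneg (by linarith [Real.pi_gt_three] : 0 ≤ π - 3)
    nlinarith [Real.pi_gt_d4]
  calc (23 : ℝ) = 20 * 1.15 := by norm_num
    _ ≤ rexp 1 ^ 3 * rexp (π - 3) := by gcongr
    _ = rexp π := by
        rw [← Real.exp_nat_mul, ← Real.exp_add]
        push_cast
        ring_nf

lemma axisNome_le_of_one_le (ht : 1 ≤ t) : axisNome t ≤ 1 / 23 := by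
  rw [axisNome, neg_mul, Real.exp_neg, one_div]
  gcongr
  exact le_exp_pi.trans (Real.exp_le_exp.2 (le_mul_of_one_le_right Real.pi_pos.le ht))

lemma axisNome_pow_succ_le (ht : 1 ≤ t) (n : ℕ) :
    axisNome t ^ (n + 1) ≤ 1 / 23 * axisNome t ^ n := by
  have := axisNome_pos t
  rw [pow_succ']
  gcongr
  exact axisNome_le_of_one_le ht

lemma axisNome_sq_pos (t : ℝ) : 0 < axisNome t ^ 2 := pow_pos (axisNome_pos t) 2

lemma axisNome_sq_le (ht : 1 ≤ t) : axisNome t ^ 2 ≤ 1 / 529 :=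
  calc axisNome t ^ 2 ≤ (1 / 23) ^ 2 :=
        pow_le_pow_left₀ (axisNome_pos t).le (axisNome_le_of_one_le ht) 2
    _ = 1 / 529 := by norm_num

lemma axisNome_pow_four (t : ℝ) : axisNome t ^ 4 = (axisNome t ^ 2) ^ 2 := by ring

lemma one_sub_mul_le_one_sub_pow (n : ℕ) {x : ℝ} (hx : x ≤ 1) : 1 - n * x ≤ (1 - x) ^ n := by
  have := one_add_mul_le_pow (by linarith : -2 ≤ -x) n
  simpa [sub_eq_add_neg] using this

lemma le_axisΔ (ht : 1 ≤ t) :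
    axisNome t ^ 2 * (1 - 24 * axisNome t ^ 2 - 25 * axisNome t ^ 4) ≤ axisΔ t := by
  have hq0 := axisNome_sq_pos t
  have hq := axisNome_sq_le ht
  rw [axisΔ, axisNome_pow_four]
  set q := axisNome t ^ 2
  have hdiv : q / (1 - q) ≤ q + 1.01 * q ^ 2 := by
    rw [div_le_iff₀ (by linarith)]
    nlinarith
  have hbase : 0 ≤ 1 - q / (1 - q) := by nlinarith
  have hlin : 1 - 24 * q - 25 * q ^ 2 ≤ 1 - (24 : ℕ) * (q / (1 - q)) := by
    push_cast
    nlinarith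
  calc q * (1 - 24 * q - 25 * q ^ 2) ≤ q * (1 - (24 : ℕ) * (q / (1 - q))) :=
        mul_le_mul_of_nonneg_left hlin hq0.le
    _ ≤ q * (1 - q / (1 - q)) ^ 24 := by
        gcongr
        exact one_sub_mul_le_one_sub_pow 24 (by linarith)
    _ ≤ q * (∏' n : ℕ, (1 - q ^ (n + 1))) ^ 24 := by
        gcongr
        exact one_sub_div_le_tprod_one_sub_pow hq0.le (by linarith)

lemma mul_axisNome_sq_le_axisΔ (ht : 1 ≤ t) : 0.9545 * axisNome t ^ 2 ≤ axisΔ t := by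
  refine le_trans ?_ (le_axisΔ ht)
  rw [mul_comm, axisNome_pow_four]
  gcongr
  nlinarith [axisNome_sq_pos t, axisNome_sq_le ht]

lemma le_axisE₄ (ht : 1 ≤ t) : 1 + 240 * axisNome t ^ 2 ≤ axisE₄ t := by
  have h := le_sigmaSeries 3 (axisNome_sq_pos t).le (axisNome_sq_lt_one (by linarith))
  rw [axisE₄]
  nlinarith

lemma axisE₄_le (ht : 1 ≤ t) :
    axisE₄ t ≤ 1 + 240 * axisNome t ^ 2 + 2510 * axisNome t ^ 4 := by
  have h := sigmaSeries_le (k := 3) (by norm_num) (axisNome_sq_pos t).le (axisNome_sq_le ht)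
  rw [axisE₄, axisNome_pow_four]
  nlinarith [mul_le_mul_of_nonneg_right (axisNome_sq_le ht) (sq_nonneg (axisNome t ^ 2))]

lemma axisE₂E₄SubE₆_mem_Icc (ht : 1 ≤ t) :
    axisE₂E₄SubE₆ t ∈ Icc (720 * axisNome t ^ 2) (747 * axisNome t ^ 2) := by
  have hq0 := axisNome_sq_pos t
  have hq := axisNome_sq_le ht
  rw [axisE₂E₄SubE₆]
  set q := axisNome t ^ 2
  have hlo (k : ℕ) := le_sigmaSeries k hq0.le (by linarith)
  have hhi (k : ℕ) (hk : k ≤ 5) := sigmaSeries_le hk hq0.le hq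
  have lo₁ := hlo 1
  have lo₃ := hlo 3
  have lo₅ := hlo 5
  have hi₁ := hhi 1 (by norm_num)
  have hi₃ := hhi 3 (by norm_num)
  have hi₅ := hhi 5 (by norm_num)
  norm_num only at lo₁ lo₃ lo₅ hi₁ hi₃ hi₅
  have hq2 : q ^ 2 ≤ 1 / 529 * q := by nlinarith
  have hq3 : q ^ 3 ≤ 1 / 529 * q ^ 2 := by nlinarith [pow_pos hq0 2]
  have hprod_lo : q * q ≤ sigmaSeries 1 q * sigmaSeries 3 q :=
    mul_le_mul (by nlinarith) (by nlinarith) hq0.le (by nlinarith)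
  have hprod_hi : sigmaSeries 1 q * sigmaSeries 3 q ≤ (1.02 * q) * (1.03 * q) :=
    mul_le_mul (by linarith) (by linarith) (by nlinarith) (by positivity)
  constructor <;> nlinarith

lemma axisφ₀_le (ht : 1 ≤ t) : axisφ₀ t ≤ 586000 * axisNome t ^ 2 := by
  obtain ⟨hlo, hhi⟩ := axisE₂E₄SubE₆_mem_Icc ht
  have hq0 := axisNome_sq_pos t
  rw [axisφ₀, div_le_iff₀ (axisΔ_pos (by linarith))]
  calc axisE₂E₄SubE₆ t ^ 2 ≤ (747 * axisNome t ^ 2) ^ 2 := pow_le_pow_left₀ (by linarith) hhi 2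
    _ ≤ 586000 * axisNome t ^ 2 * (0.9545 * axisNome t ^ 2) := by nlinarith
    _ ≤ 586000 * axisNome t ^ 2 * axisΔ t := by
        gcongr
        exact mul_axisNome_sq_le_axisΔ ht

lemma le_axisφ₂ (ht : 1 ≤ t) : 720 * (1 + 240 * axisNome t ^ 2) ≤ axisφ₂ t := by
  obtain ⟨hlo, -⟩ := axisE₂E₄SubE₆_mem_Icc ht
  have hE := le_axisE₄ ht
  have ht0 : 0 < t := by linarith
  have hq0 := axisNome_sq_pos t
  rw [axisφ₂, le_div_iff₀ (axisΔ_pos ht0)]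
  calc 720 * (1 + 240 * axisNome t ^ 2) * axisΔ t
      ≤ 720 * (1 + 240 * axisNome t ^ 2) * axisNome t ^ 2 := by
        gcongr
        exact axisΔ_le ht0
    _ = (1 + 240 * axisNome t ^ 2) * (720 * axisNome t ^ 2) := by ring
    _ ≤ axisE₄ t * axisE₂E₄SubE₆ t := by
        gcongr
        linarith

lemma axisφ₂_le (ht : 1 ≤ t) : axisφ₂ t ≤ 1200 := by
  obtain ⟨hlo, hhi⟩ := axisE₂E₄SubE₆_mem_Icc ht
  have hq0 := axisNome_sq_pos t
  have hE : axisE₄ t ≤ 1.5 := by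
    have h := axisE₄_le ht
    rw [axisNome_pow_four] at h
    nlinarith [axisNome_sq_le ht]
  rw [axisφ₂, div_le_iff₀ (axisΔ_pos (by linarith))]
  calc axisE₄ t * axisE₂E₄SubE₆ t ≤ 1.5 * (747 * axisNome t ^ 2) := by
        gcongr
        linarith
    _ ≤ 1200 * (0.9545 * axisNome t ^ 2) := by linarith
    _ ≤ 1200 * axisΔ t := by
        gcongr
        exact mul_axisNome_sq_le_axisΔ ht

lemma le_axisφ₄ (ht : 1 ≤ t) : 1 / axisNome t ^ 2 ≤ axisφ₄ t := by
  have ht0 : 0 < t := by linarith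
  have hE : 1 ≤ axisE₄ t := by linarith [le_axisE₄ ht, axisNome_sq_pos t]
  exact div_le_div₀ (by positivity) (one_le_pow₀ hE) (axisΔ_pos ht0) (axisΔ_le ht0)

lemma axisφ₄_le (ht : 1 ≤ t) :
    axisφ₄ t ≤ 1 / axisNome t ^ 2 + 504 + 82000 * axisNome t ^ 2 := by
  have hq0 := axisNome_sq_pos t
  have hq := axisNome_sq_le ht
  have hΔ := le_axisΔ ht
  have hlo := le_axisE₄ ht
  have hhi := axisE₄_le ht
  rw [axisφ₄, div_le_iff₀ (axisΔ_pos (by linarith))]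
  rw [axisNome_pow_four] at hΔ hhi
  set q := axisNome t ^ 2
  have hq3 : q ^ 3 ≤ 1 / 529 * q ^ 2 := by nlinarith [pow_pos hq0 2]
  have hq4 : q ^ 4 ≤ 1 / 529 * q ^ 3 := by nlinarith [pow_pos hq0 3]
  calc axisE₄ t ^ 2 ≤ (1 + 240 * q + 2510 * q ^ 2) ^ 2 := pow_le_pow_left₀ (by linarith) hhi 2
    _ ≤ (1 + 504 * q + 82000 * q ^ 2) * (1 - 24 * q - 25 * q ^ 2) := by
        nlinarith [pow_pos hq0 2]
    _ = (1 / q + 504 + 82000 * q) * (q * (1 - 24 * q - 25 * q ^ 2)) := by field_simp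
    _ ≤ (1 / q + 504 + 82000 * q) * axisΔ t := by gcongr

end ModularBounds

section ThetaBounds

variable {t : ℝ}

lemma axisNome_pow_chain (ht : 1 ≤ t) :
    axisNome t ^ 2 ≤ 1 / 23 * axisNome t ∧ axisNome t ^ 3 ≤ 1 / 23 * axisNome t ^ 2 ∧
    axisNome t ^ 4 ≤ 1 / 23 * axisNome t ^ 3 ∧ axisNome t ^ 5 ≤ 1 / 23 * axisNome t ^ 4 ∧
    axisNome t ^ 6 ≤ 1 / 23 * axisNome t ^ 5 ∧ axisNome t ^ 7 ≤ 1 / 23 * axisNome t ^ 6 ∧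
    axisNome t ^ 8 ≤ 1 / 23 * axisNome t ^ 7 ∧ axisNome t ^ 9 ≤ 1 / 23 * axisNome t ^ 8 ∧
    0 < axisNome t ^ 9 := by
  have h := axisNome_pow_succ_le ht
  exact ⟨by simpa only [pow_one] using h 1, h 2, h 3, h 4, h 5, h 6, h 7, h 8,
    pow_pos (axisNome_pos t) 9⟩

lemma abs_thetaSeries_axisNome_sub_le (ht : 1 ≤ t) {x : ℝ} (hx : |x| = axisNome t) :
    |thetaSeries x - (1 + 2 * x)| ≤ 2.1 * axisNome t ^ 4 := by
  have hp := axisNome_le_of_one_le ht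
  have hθ := abs_thetaSeries_sub_le (x := x) (by linarith)
  rw [hx] at hθ
  refine hθ.trans ?_
  rw [div_le_iff₀ (by linarith)]
  nlinarith [pow_pos (axisNome_pos t) 4]

lemma one_add_le_thetaSeries (ht : 1 ≤ t) :
    1 + 2 * axisNome t ≤ thetaSeries (axisNome t) :=
  one_add_two_mul_le_thetaSeries (axisNome_pos t).le (axisNome_lt_one (by linarith))

lemma thetaSeries_le (ht : 1 ≤ t) :
    thetaSeries (axisNome t) ≤ 1 + 2 * axisNome t + 2.1 * axisNome t ^ 4 := by
  linarith [le_of_abs_le (abs_thetaSeries_axisNome_sub_le ht (abs_of_pos (axisNome_pos t)))]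

lemma thetaSeries_neg_mem_Icc (ht : 1 ≤ t) :
    thetaSeries (-axisNome t) ∈ Icc (1 - 2 * axisNome t - 2.1 * axisNome t ^ 4)
      (1 - 2 * axisNome t + 2.1 * axisNome t ^ 4) := by
  have h := abs_le.1 (abs_thetaSeries_axisNome_sub_le ht (x := -axisNome t)
    (by rw [abs_neg, abs_of_pos (axisNome_pos t)]))
  constructor <;> linarith

lemma add_pow_four_le {x e : ℝ} (hx : 0 ≤ x) (hx₁ : x ≤ 1.1) (he : 0 ≤ e) (he₁ : e ≤ 0.00001) :
    (x + e) ^ 4 ≤ x ^ 4 + 5.34 * e := by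
  have hx3 : x ^ 3 ≤ 1.1 ^ 3 := pow_le_pow_left₀ hx hx₁ 3
  have hx2 : x ^ 2 * e ≤ 1.1 ^ 2 * 0.00001 := by gcongr
  have he2 : x * e ^ 2 ≤ 1.1 * 0.00001 ^ 2 := by gcongr
  have he3 : e ^ 3 ≤ 0.00001 ^ 3 := pow_le_pow_left₀ he he₁ 3
  calc (x + e) ^ 4 = x ^ 4 + (4 * x ^ 3 + 6 * (x ^ 2 * e) + 4 * (x * e ^ 2) + e ^ 3) * e := by
        ring
    _ ≤ x ^ 4 + 5.34 * e := by
        gcongr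
        linarith

lemma sub_pow_four_ge {x e : ℝ} (hx : 0 ≤ x - e) (hx₁ : x ≤ 1) (he : 0 ≤ e) :
    x ^ 4 - 4 * e ≤ (x - e) ^ 4 := by
  have hx0 : 0 ≤ x := by linarith
  have hy₁ : x - e ≤ 1 := by linarith
  have h1 : x ^ 2 * (x - e) ≤ 1 := mul_le_one₀ (pow_le_one₀ hx0 hx₁) hx hy₁
  have h2 : x * (x - e) ^ 2 ≤ 1 := mul_le_one₀ hx₁ (sq_nonneg _) (pow_le_one₀ hx hy₁)
  have hsum : x ^ 3 + x ^ 2 * (x - e) + x * (x - e) ^ 2 + (x - e) ^ 3 ≤ 4 := by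
    linarith [pow_le_one₀ hx0 hx₁ (n := 3), pow_le_one₀ hx hy₁ (n := 3)]
  calc x ^ 4 - 4 * e
      ≤ x ^ 4 - (x ^ 3 + x ^ 2 * (x - e) + x * (x - e) ^ 2 + (x - e) ^ 3) * e := by gcongr
    _ = (x - e) ^ 4 := by ring

lemma one_sub_pow_eight_le {y : ℝ} (h0 : 0 ≤ y) (h1 : y ≤ 0.01) :
    (1 - y) ^ 8 ≤ 1 - 8 * y + 28 * y ^ 2 := by
  have hy3 : 0 ≤ y ^ 3 := by positivity
  have hy4 : y ^ 4 ≤ 0.01 * y ^ 3 := by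
    rw [pow_succ, mul_comm]
    gcongr
  calc (1 - y) ^ 8 = ((1 - y) ^ 4) ^ 2 := by ring
    _ ≤ (1 - 4 * y + 6 * y ^ 2) ^ 2 := pow_le_pow_left₀ (by positivity) (by linarith) 2
    _ ≤ 1 - 8 * y + 28 * y ^ 2 := by linarith

lemma axisH₃_ge_quartic (ht : 1 ≤ t) : (1 + 2 * axisNome t) ^ 4 ≤ axisH₃ t :=
  pow_le_pow_left₀ (by linarith [axisNome_pos t]) (one_add_le_thetaSeries ht) 4

lemma axisH₃_le_quartic (ht : 1 ≤ t) :
    axisH₃ t ≤ (1 + 2 * axisNome t) ^ 4 + 5.34 * (2.1 * axisNome t ^ 4) := by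
  have hp0 := axisNome_pos t
  have hp := axisNome_le_of_one_le ht
  obtain ⟨hp2, hp3, hp4, -⟩ := axisNome_pow_chain ht
  refine (pow_le_pow_left₀ ?_ (thetaSeries_le ht) 4).trans
    (add_pow_four_le (by linarith) (by linarith) (by positivity) (by linarith))
  linarith [one_add_le_thetaSeries ht]

lemma axisH₄_ge_quartic (ht : 1 ≤ t) :
    (1 - 2 * axisNome t) ^ 4 - 4 * (2.1 * axisNome t ^ 4) ≤ axisH₄ t := by
  have hp0 := axisNome_pos t
  have hp := axisNome_le_of_one_le ht
  obtain ⟨hp2, hp3, hp4, -⟩ := axisNome_pow_chain ht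
  have hbase : 0 ≤ 1 - 2 * axisNome t - 2.1 * axisNome t ^ 4 := by linarith
  exact (sub_pow_four_ge hbase (by linarith) (by positivity)).trans
    (pow_le_pow_left₀ hbase (thetaSeries_neg_mem_Icc ht).1 4)

lemma axisH₄_le_quartic (ht : 1 ≤ t) :
    axisH₄ t ≤ (1 - 2 * axisNome t) ^ 4 + 5.34 * (2.1 * axisNome t ^ 4) := by
  have hp0 := axisNome_pos t
  have hp := axisNome_le_of_one_le ht
  obtain ⟨hp2, hp3, hp4, -⟩ := axisNome_pow_chain ht
  obtain ⟨hlo, hhi⟩ := thetaSeries_neg_mem_Icc ht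
  exact (pow_le_pow_left₀ (by linarith) hhi 4).trans
    (add_pow_four_le (by linarith) (by linarith) (by positivity) (by linarith))

lemma axisH₃_mem_Icc (ht : 1 ≤ t) :
    axisH₃ t ∈ Icc (1 + 8 * axisNome t) (1 + 9.11 * axisNome t) := by
  obtain ⟨hp2, hp3, hp4, -⟩ := axisNome_pow_chain ht
  have hp0 := axisNome_pos t
  have hlo := axisH₃_ge_quartic ht
  have hhi := axisH₃_le_quartic ht
  ring_nf at hlo hhi
  constructor <;> nlinarith [pow_pos hp0 4]

lemma axisH₄_mem_Icc (ht : 1 ≤ t) :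
    axisH₄ t ∈ Icc (1 - 8 * axisNome t) (1 - 8 * axisNome t + 24 * axisNome t ^ 2) := by
  obtain ⟨-, hp3, hp4, -⟩ := axisNome_pow_chain ht
  have hp0 := axisNome_pos t
  have hlo := axisH₄_ge_quartic ht
  have hhi := axisH₄_le_quartic ht
  ring_nf at hlo hhi
  constructor <;> nlinarith [pow_pos hp0 4]

lemma axisH₃_sub_axisH₄_le (ht : 1 ≤ t) : axisH₃ t - axisH₄ t ≤ 16.3 * axisNome t := by
  obtain ⟨hp2, hp3, hp4, -⟩ := axisNome_pow_chain ht
  have hpos := pow_pos (axisNome_pos t) 4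
  have hlo := axisH₄_ge_quartic ht
  have hhi := axisH₃_le_quartic ht
  linarith

lemma axisH₃_add_axisH₄_mem_Icc (ht : 1 ≤ t) :
    axisH₃ t + axisH₄ t ∈
      Icc (2 + 48 * axisNome t ^ 2) (2 + 48 * axisNome t ^ 2 + 60 * axisNome t ^ 4) := by
  have hp4 := pow_pos (axisNome_pos t) 4
  have hlo₃ := axisH₃_ge_quartic ht
  have hhi₃ := axisH₃_le_quartic ht
  have hlo₄ := axisH₄_ge_quartic ht
  have hhi₄ := axisH₄_le_quartic ht
  constructor <;> linarith

lemma axisH₂_le (ht : 1 ≤ t) : axisH₂ t ≤ 16 * axisNome t * (1 + 4.1 * axisNome t ^ 2) := by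
  have hp0 := axisNome_pos t
  have hq := axisNome_sq_le ht
  refine (axisH₂_le_div (by linarith)).trans ?_
  rw [div_le_iff₀ (pow_pos (by linarith) 4), mul_assoc]
  refine le_mul_of_one_le_right (by positivity) ?_
  have hbern := one_sub_mul_le_one_sub_pow 4 (by linarith : axisNome t ^ 2 ≤ 1)
  push_cast at hbern
  calc 1 ≤ (1 + 4.1 * axisNome t ^ 2) * (1 - 4 * axisNome t ^ 2) := by
        nlinarith [axisNome_sq_pos t]
    _ ≤ (1 + 4.1 * axisNome t ^ 2) * (1 - axisNome t ^ 2) ^ 4 := by gcongr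

lemma thetaSeries_mul_thetaSeries_neg_mem_Icc (ht : 1 ≤ t) :
    thetaSeries (axisNome t) * thetaSeries (-axisNome t) ∈
      Icc (1 - (4 * axisNome t ^ 2 + 2.4 * axisNome t ^ 4))
        (1 - (4 * axisNome t ^ 2 - 4.3 * axisNome t ^ 4)) := by
  obtain ⟨hp2, hp3, hp4, hp5, hp6, hp7, hp8, -⟩ := axisNome_pow_chain ht
  have hp0 := axisNome_pos t
  have hp := axisNome_le_of_one_le ht
  have hlo₃ := one_add_le_thetaSeries ht
  have hhi₃ := thetaSeries_le ht
  obtain ⟨hlo₄, hhi₄⟩ := thetaSeries_neg_mem_Icc ht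
  set p := axisNome t
  constructor
  · calc 1 - (4 * p ^ 2 + 2.4 * p ^ 4) ≤ (1 + 2 * p) * (1 - 2 * p - 2.1 * p ^ 4) := by linarith
      _ ≤ thetaSeries p * thetaSeries (-p) := by apply mul_le_mul hlo₃ hlo₄ <;> linarith
  · calc thetaSeries p * thetaSeries (-p)
        ≤ (1 + 2 * p + 2.1 * p ^ 4) * (1 - 2 * p + 2.1 * p ^ 4) := by
          apply mul_le_mul hhi₃ hhi₄ <;> linarith
      _ ≤ 1 - (4 * p ^ 2 - 4.3 * p ^ 4) := by linarith

lemma thetaSeries_mul_thetaSeries_neg_pow_mem_Icc (ht : 1 ≤ t) :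
    (thetaSeries (axisNome t) * thetaSeries (-axisNome t)) ^ 8 ∈
      Icc (1 - 32 * axisNome t ^ 2 - 19.2 * axisNome t ^ 4)
        (1 - 32 * axisNome t ^ 2 + 483 * axisNome t ^ 4) := by
  obtain ⟨hp2, hp3, hp4, -⟩ := axisNome_pow_chain ht
  have hp0 := axisNome_pos t
  have hp := axisNome_le_of_one_le ht
  obtain ⟨hlo, hhi⟩ := thetaSeries_mul_thetaSeries_neg_mem_Icc ht
  set p := axisNome t
  constructor
  · have hbern := one_sub_mul_le_one_sub_pow 8 (by linarith : 4 * p ^ 2 + 2.4 * p ^ 4 ≤ 1)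
    push_cast at hbern
    linarith [pow_le_pow_left₀ (by linarith) hlo 8]
  · have hy0 : 0 ≤ 4 * p ^ 2 - 4.3 * p ^ 4 := by linarith
    have hy2 : (4 * p ^ 2 - 4.3 * p ^ 4) ^ 2 ≤ (4 * p ^ 2) ^ 2 :=
      pow_le_pow_left₀ hy0 (by linarith [pow_pos hp0 4]) 2
    linarith [pow_le_pow_left₀ (by linarith) hhi 8, one_sub_pow_eight_le hy0 (by linarith)]

lemma axisH₃_add_axisH₄_mul_mem_Icc (ht : 1 ≤ t) :
    (axisH₃ t + axisH₄ t) * axisH₃ t ^ 2 * axisH₄ t ^ 2 / 2 ∈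
      Icc (1 - 8 * axisNome t ^ 2 - 790 * axisNome t ^ 4) (1 - 8 * axisNome t ^ 2) := by
  obtain ⟨hp2, hp3, hp4, hp5, hp6, hp7, hp8, hp9, hpos⟩ := axisNome_pow_chain ht
  have hp0 := axisNome_pos t
  have hp := axisNome_le_of_one_le ht
  obtain ⟨hsum_lo, hsum_hi⟩ := axisH₃_add_axisH₄_mem_Icc ht
  obtain ⟨hlo, hhi⟩ := thetaSeries_mul_thetaSeries_neg_pow_mem_Icc ht
  have hpow : (axisH₃ t + axisH₄ t) * axisH₃ t ^ 2 * axisH₄ t ^ 2 / 2 = (axisH₃ t + axisH₄ t) / 2 *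
      (thetaSeries (axisNome t) * thetaSeries (-axisNome t)) ^ 8 := by
    rw [axisH₃, axisH₄]
    ring
  rw [hpow]
  set p := axisNome t
  set w := (thetaSeries p * thetaSeries (-p)) ^ 8
  constructor
  · calc 1 - 8 * p ^ 2 - 790 * p ^ 4 ≤ (1 + 24 * p ^ 2) * (1 - 32 * p ^ 2 - 19.2 * p ^ 4) := by
          linarith
      _ ≤ (axisH₃ t + axisH₄ t) / 2 * w := by apply mul_le_mul (by linarith) hlo <;> linarith
  · calc (axisH₃ t + axisH₄ t) / 2 * w
        ≤ (1 + 24 * p ^ 2 + 30 * p ^ 4) * (1 - 32 * p ^ 2 + 483 * p ^ 4) :=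
          mul_le_mul (by linarith) hhi (by linarith) (by positivity)
      _ ≤ 1 - 8 * p ^ 2 := by linarith

lemma axisH₂_sq_mem_Icc (ht : 1 ≤ t) :
    axisH₂ t ^ 2 ∈
      Icc (256 * axisNome t ^ 2) (256 * axisNome t ^ 2 * (1 + 8.3 * axisNome t ^ 2)) := by
  obtain ⟨-, -, -, hp5, hp6, -⟩ := axisNome_pow_chain ht
  have hp0 := axisNome_pos t
  have ht0 : 0 < t := by linarith
  have hlo := pow_le_pow_left₀ (by positivity) (le_axisH₂ ht0) 2
  have hhi := pow_le_pow_left₀ (axisH₂_pos ht0).le (axisH₂_le ht) 2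
  constructor <;> nlinarith [pow_pos hp0 4]

lemma axisH₄_sq_mem_Icc (ht : 1 ≤ t) :
    axisH₄ t ^ 2 ∈ Icc (1 - 16 * axisNome t)
      (1 - 16 * axisNome t + 112 * axisNome t ^ 2 - 358 * axisNome t ^ 3) := by
  obtain ⟨-, -, hp4, -⟩ := axisNome_pow_chain ht
  have hp0 := axisNome_pos t
  have hp := axisNome_le_of_one_le ht
  obtain ⟨hlo, hhi⟩ := axisH₄_mem_Icc ht
  have hlo2 := pow_le_pow_left₀ (by linarith) hlo 2
  have hhi2 := pow_le_pow_left₀ (by linarith) hhi 2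
  constructor <;> linarith [pow_pos hp0 2, pow_pos hp0 3]

end ThetaBounds

/-! ### Positivity and growth of the kernels -/

section ψBounds

variable {t : ℝ}

lemma le_axisH₄_sub_axisH₂_mul (ht : 1 ≤ t) :
    128 * axisNome t ^ 2 * (1 - 40.2 * axisNome t) ≤
      (axisH₄ t - axisH₂ t) * axisH₂ t ^ 2 * axisH₄ t ^ 2 / 2 := by
  obtain ⟨hp2, hp3, hp4, -⟩ := axisNome_pow_chain ht
  have hp0 := axisNome_pos t
  have hp := axisNome_le_of_one_le ht
  obtain ⟨hH₂sq, hH₂sq'⟩ := axisH₂_sq_mem_Icc ht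
  obtain ⟨hH₄sq, hH₄sq'⟩ := axisH₄_sq_mem_Icc ht
  have hH₂ := axisH₂_le ht
  have hH₄ := (axisH₄_mem_Icc ht).1
  set p := axisNome t
  have hdiff : 1 - 24.14 * p ≤ axisH₄ t - axisH₂ t := by linarith
  have hprod : 256 * p ^ 2 * (1 - 16 * p) ≤ axisH₂ t ^ 2 * axisH₄ t ^ 2 :=
    mul_le_mul hH₂sq hH₄sq (by linarith) (sq_nonneg _)
  have hprod' : axisH₂ t ^ 2 * axisH₄ t ^ 2 ≤ 256 * p ^ 2 := calc
    _ ≤ 256 * p ^ 2 * (1 + 8.3 * p ^ 2) * (1 - 16 * p + 112 * p ^ 2 - 358 * p ^ 3) := by gcongr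
    _ ≤ 256 * p ^ 2 * 1 := by
      rw [mul_assoc]
      gcongr
      linarith [pow_pos hp0 3, pow_pos hp0 5]
    _ = 256 * p ^ 2 := mul_one _
  calc 128 * p ^ 2 * (1 - 40.2 * p)
      ≤ (axisH₂ t ^ 2 * axisH₄ t ^ 2 - 24.14 * p * (axisH₂ t ^ 2 * axisH₄ t ^ 2)) / 2 := by
        linarith [mul_le_mul_of_nonneg_left hprod' hp0.le, pow_pos hp0 3]
    _ = (1 - 24.14 * p) * (axisH₂ t ^ 2 * axisH₄ t ^ 2) / 2 := by ring
    _ ≤ (axisH₄ t - axisH₂ t) * (axisH₂ t ^ 2 * axisH₄ t ^ 2) / 2 := by gcongr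
    _ = _ := by ring

lemma axisH₄_sub_axisH₂_mul_le (ht : 1 ≤ t) :
    (axisH₄ t - axisH₂ t) * axisH₂ t ^ 2 * axisH₄ t ^ 2 / 2 ≤
      128 * axisNome t ^ 2 * (1 - 40 * axisNome t + 530 * axisNome t ^ 2) := by
  obtain ⟨hp2, hp3, hp4, hp5, hp6, hp7, hp8, hp9, hpos⟩ := axisNome_pow_chain ht
  have hp0 := axisNome_pos t
  have hp := axisNome_le_of_one_le ht
  obtain ⟨-, hH₂sq⟩ := axisH₂_sq_mem_Icc ht
  obtain ⟨-, hH₄sq⟩ := axisH₄_sq_mem_Icc ht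
  have hH₂ := le_axisH₂ (one_pos.trans_le ht)
  have hH₄ := (axisH₄_mem_Icc ht).2
  set p := axisNome t
  have hdiff : axisH₄ t - axisH₂ t ≤ 1 - 24 * p + 24 * p ^ 2 := by linarith
  have hdiff0 : 0 ≤ 1 - 24 * p + 24 * p ^ 2 := by nlinarith
  calc (axisH₄ t - axisH₂ t) * axisH₂ t ^ 2 * axisH₄ t ^ 2 / 2
      ≤ (1 - 24 * p + 24 * p ^ 2) * (256 * p ^ 2 * (1 + 8.3 * p ^ 2)) *
        (1 - 16 * p + 112 * p ^ 2 - 358 * p ^ 3) / 2 := by gcongr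
    _ ≤ _ := by ring_nf; linarith

lemma axisψI_eq_div (ht : 0 < t) :
    axisψI t = ((axisH₃ t + axisH₄ t) * axisH₃ t ^ 2 * axisH₄ t ^ 2 / 2 +
      (axisH₄ t - axisH₂ t) * axisH₂ t ^ 2 * axisH₄ t ^ 2 / 2) / axisΔ t := by
  have := (axisΔ_pos ht).ne'
  rw [axisψI]
  field_simp

lemma le_one_div_axisNome_sq (ht : 1 ≤ t) : 529 ≤ 1 / axisNome t ^ 2 := by
  rw [le_div_iff₀ (axisNome_sq_pos t)]
  linarith [axisNome_sq_le ht]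

lemma le_axisψI (ht : 1 ≤ t) : 1 / axisNome t ^ 2 + 100 - 5120 * axisNome t ≤ axisψI t := by
  have ht0 : 0 < t := one_pos.trans_le ht
  obtain ⟨-, hp3, hp4, -⟩ := axisNome_pow_chain ht
  have hp0 := axisNome_pos t
  have hp := axisNome_le_of_one_le ht
  rw [axisψI_eq_div ht0, le_div_iff₀ (axisΔ_pos ht0)]
  calc (1 / axisNome t ^ 2 + 100 - 5120 * axisNome t) * axisΔ t
      ≤ (1 / axisNome t ^ 2 + 100 - 5120 * axisNome t) * axisNome t ^ 2 := by
        gcongr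
        · linarith [le_one_div_axisNome_sq ht]
        · exact axisΔ_le ht0
    _ = 1 + 100 * axisNome t ^ 2 - 5120 * axisNome t ^ 3 := by field_simp
    _ ≤ _ := by
      linarith [(axisH₃_add_axisH₄_mul_mem_Icc ht).1, le_axisH₄_sub_axisH₂_mul ht,
        axisNome_sq_pos t]

lemma axisψI_le (ht : 1 ≤ t) :
    axisψI t ≤ 1 / axisNome t ^ 2 + 190 - 5120 * axisNome t + 71000 * axisNome t ^ 2 := by
  have ht0 : 0 < t := one_pos.trans_le ht
  obtain ⟨-, hp3, hp4, hp5, hp6, hp7, hp8, hp9, hpos⟩ := axisNome_pow_chain ht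
  have hp0 := axisNome_pos t
  have hp := axisNome_le_of_one_le ht
  have hM₁ := (axisH₃_add_axisH₄_mul_mem_Icc ht).2
  have hM₂ := axisH₄_sub_axisH₂_mul_le ht
  rw [axisψI_eq_div ht0, div_le_iff₀ (axisΔ_pos ht0)]
  have hΔ := le_axisΔ ht
  have hinv := le_one_div_axisNome_sq ht
  set p := axisNome t
  calc _ ≤ (1 + 190 * p ^ 2 - 5120 * p ^ 3 + 71000 * p ^ 4) * (1 - 24 * p ^ 2 - 25 * p ^ 4) := by
        ring_nf at hM₁ hM₂ ⊢
        linarith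
    _ = (1 / p ^ 2 + 190 - 5120 * p + 71000 * p ^ 2) *
        (p ^ 2 * (1 - 24 * p ^ 2 - 25 * p ^ 4)) := by field_simp
    _ ≤ _ := by
        gcongr
        nlinarith

lemma le_axisψS (ht : 1 ≤ t) : 7100 * axisNome t ≤ axisψS t := by
  have ht0 : 0 < t := one_pos.trans_le ht
  have hp0 := axisNome_pos t
  have hp := axisNome_le_of_one_le ht
  have hH₂0 := (axisH₂_pos ht0).le
  have hH₂ := le_axisH₂ ht0
  obtain ⟨hH₃, -⟩ := axisH₃_mem_Icc ht
  obtain ⟨hH₄, hH₄'⟩ := axisH₄_mem_Icc ht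
  have hΔ := axisΔ_le ht0
  rw [axisψS, le_div_iff₀ (mul_pos two_pos (axisΔ_pos ht0))]
  set p := axisNome t
  have hsq : 2 ≤ axisH₃ t ^ 2 + axisH₄ t ^ 2 := by
    linarith [pow_le_pow_left₀ (by positivity) hH₃ 2, pow_le_pow_left₀ (by linarith) hH₄ 2,
      sq_nonneg p]
  have hcube : 24 * p ≤ axisH₃ t ^ 3 - axisH₄ t ^ 3 := by
    linarith [pow_le_pow_left₀ (by positivity) hH₃ 3, pow_pos hp0 2, pow_pos hp0 3,
      pow_le_one₀ (axisH₄_pos ht0).le (by nlinarith : axisH₄ t ≤ 1) (n := 3)]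
  have hmul : 16 * p * 2 ≤ axisH₂ t * (axisH₃ t ^ 2 + axisH₄ t ^ 2) := by gcongr
  calc 7100 * p * (2 * axisΔ t) ≤ 7100 * p * (2 * p ^ 2) := by gcongr
    _ ≤ 256 * p ^ 2 * (16 * p * 2 + 24 * p) := by linarith [pow_pos hp0 3]
    _ ≤ axisH₂ t ^ 2 *
        (axisH₂ t * (axisH₃ t ^ 2 + axisH₄ t ^ 2) + axisH₃ t ^ 3 - axisH₄ t ^ 3) := by
        gcongr
        · exact (axisH₂_sq_mem_Icc ht).1
        · linarith

lemma axisH₃_sq_le (ht : 1 ≤ t) :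
    axisH₃ t ^ 2 ≤ 1 + 18.22 * axisNome t + 83 * axisNome t ^ 2 := by
  have hp0 := axisNome_pos t
  obtain ⟨hlo, hhi⟩ := axisH₃_mem_Icc ht
  nlinarith [pow_le_pow_left₀ (by linarith) hhi 2]

lemma axisH₃_sq_add_axisH₄_sq_le (ht : 1 ≤ t) : axisH₃ t ^ 2 + axisH₄ t ^ 2 ≤ 2.47 := by
  obtain ⟨hp2, -⟩ := axisNome_pow_chain ht
  have hp0 := axisNome_pos t
  have hp := axisNome_le_of_one_le ht
  linarith [axisH₃_sq_le ht, (axisH₄_sq_mem_Icc ht).2, pow_pos hp0 3]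

lemma axisH₃_mul_axisH₄_le (ht : 1 ≤ t) : axisH₃ t * axisH₄ t ≤ 1.05 := by
  have hp0 := axisNome_pos t
  have hp := axisNome_le_of_one_le ht
  calc axisH₃ t * axisH₄ t
      ≤ (1 + 9.11 * axisNome t) * (1 - 8 * axisNome t + 24 * axisNome t ^ 2) := by
        gcongr
        · exact (axisH₄_pos (one_pos.trans_le ht)).le
        · exact (axisH₃_mem_Icc ht).2
        · exact (axisH₄_mem_Icc ht).2
    _ ≤ 1.05 := by nlinarith

lemma axisψS_le (ht : 1 ≤ t) : axisψS t ≤ 13500 * axisNome t := by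
  have ht0 : 0 < t := one_pos.trans_le ht
  obtain ⟨hp2, hp3, hp4, -⟩ := axisNome_pow_chain ht
  have hp0 := axisNome_pos t
  have hH₂ := axisH₂_pos ht0
  have hH₃ := (axisH₄_pos ht0).trans_le (axisH₄_le_axisH₃ ht0)
  have hH₄ := axisH₄_pos ht0
  have hsq := axisH₃_sq_add_axisH₄_sq_le ht
  have hmul := axisH₃_mul_axisH₄_le ht
  have hdiff := axisH₃_sub_axisH₄_le ht
  have hH₂le := axisH₂_le ht
  have hΔ := mul_axisNome_sq_le_axisΔ ht
  have hH₂sq := (axisH₂_sq_mem_Icc ht).2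
  rw [axisψS, div_le_iff₀ (mul_pos two_pos (axisΔ_pos ht0))]
  set p := axisNome t
  have hfactor : axisH₂ t * (axisH₃ t ^ 2 + axisH₄ t ^ 2) + axisH₃ t ^ 3 - axisH₄ t ^ 3 ≤
      16.13 * p * 2.47 + 16.3 * p * 3.52 := calc
    _ = axisH₂ t * (axisH₃ t ^ 2 + axisH₄ t ^ 2) +
        (axisH₃ t - axisH₄ t) * (axisH₃ t ^ 2 + axisH₄ t ^ 2 + axisH₃ t * axisH₄ t) := by ring
    _ ≤ _ := by gcongr <;> linarith
  have hfactor0 : 0 ≤ axisH₂ t * (axisH₃ t ^ 2 + axisH₄ t ^ 2) + axisH₃ t ^ 3 - axisH₄ t ^ 3 := by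
    have := pow_le_pow_left₀ hH₄.le (axisH₄_le_axisH₃ ht0) 3
    have := mul_pos hH₂ (add_pos (pow_pos hH₃ 2) (pow_pos hH₄ 2))
    linarith
  calc _ ≤ 260.2 * p ^ 2 * (16.13 * p * 2.47 + 16.3 * p * 3.52) := by
        gcongr
        linarith [pow_pos hp0 2]
    _ ≤ 13500 * p * (2 * (0.9545 * p ^ 2)) := by linarith [pow_pos hp0 3]
    _ ≤ _ := by gcongr

end ψBounds

section Positivity

variable {t : ℝ}

lemma mul_axisNome_sq_le (ht : 1 ≤ t) :
    t * axisNome t ^ 2 ≤ 0.8409 * axisNome t ^ 2 + 0.000301 := by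
  have hq0 := axisNome_sq_pos t
  have hq : axisNome t ^ 2 * rexp (2 * π * (t - 1)) ≤ 1 / 529 := calc
    _ = axisNome 1 ^ 2 := by
      rw [axisNome, axisNome, ← Real.exp_nat_mul, ← Real.exp_nat_mul, ← Real.exp_add]
      congr 1
      push_cast
      ring
    _ ≤ 1 / 529 := axisNome_sq_le le_rfl
  have hexp : 6.283 * (t - 1) + 1 ≤ rexp (2 * π * (t - 1)) := by
    refine le_trans ?_ (Real.add_one_le_exp _)
    exact add_le_add_left (mul_le_mul_of_nonneg_right (by linarith [Real.pi_gt_d4])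
      (sub_nonneg.2 ht)) 1
  linarith [mul_le_mul_of_nonneg_left hexp hq0.le]

lemma thirty_six_div_pi_sq_mem_Icc : 36 / π ^ 2 ∈ Icc 3.6475 3.648 := by
  have hlo := Real.pi_gt_d4
  have hhi := Real.pi_lt_d4
  constructor
  · rw [le_div_iff₀ (by positivity)]
    nlinarith
  · rw [div_le_iff₀ (by positivity)]
    nlinarith

lemma twelve_div_pi_mem_Icc : 12 / π ∈ Icc 3.8197 4 := by
  constructor
  · rw [le_div_iff₀ Real.pi_pos]
    linarith [Real.pi_lt_d4]
  · rw [div_le_iff₀ Real.pi_pos]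
    linarith [Real.pi_gt_three]

lemma exp_two_pi_mul (t : ℝ) : rexp (2 * π * t) = 1 / axisNome t ^ 2 := by
  rw [axisNome, ← Real.exp_nat_mul, one_div, ← Real.exp_neg]
  congr 1
  push_cast
  ring

lemma le_neg_sq_mul_axisφ₀_add (ht : 1 ≤ t) :
    2573 + 167000 * axisNome t ^ 2 ≤ -t ^ 2 * axisφ₀ t + 12 / π * t * axisφ₂ t := by
  have hq0 := axisNome_sq_pos t
  have hφ₂ : 3.8197 * (720 * (1 + 240 * axisNome t ^ 2)) ≤ 12 / π * axisφ₂ t := by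
    gcongr
    · exact twelve_div_pi_mem_Icc.1
    · exact le_axisφ₂ ht
  have hφ₀ : t * axisφ₀ t ≤ t * (586000 * axisNome t ^ 2) := by
    gcongr
    exact axisφ₀_le ht
  have hfactor : 2573 + 167000 * axisNome t ^ 2 ≤ 12 / π * axisφ₂ t - t * axisφ₀ t := by
    linarith [mul_axisNome_sq_le ht]
  calc 2573 + 167000 * axisNome t ^ 2 ≤ t * (12 / π * axisφ₂ t - t * axisφ₀ t) := by
        refine hfactor.trans (le_mul_of_one_le_left ?_ ht)
        linarith
    _ = _ := by ring

lemma axisInversionφ₀_add_pos_of_one_le (ht : 1 ≤ t) :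
    0 < axisInversionφ₀ t + 36 / π ^ 2 * axisψI t := by
  have hp0 := axisNome_pos t
  have hp := axisNome_le_of_one_le ht
  have hp2 := (axisNome_pow_chain ht).1
  have hmain : 36 / π ^ 2 * (axisφ₄ t - axisψI t) ≤
      3.648 * (404 + 5120 * axisNome t + 82000 * axisNome t ^ 2) := by
    refine (mul_le_mul_of_nonneg_left (b := axisφ₄ t - axisψI t) ?_ (by positivity)).trans
      (mul_le_mul_of_nonneg_right thirty_six_div_pi_sq_mem_Icc.2 (by positivity))
    linarith [axisφ₄_le ht, le_axisψI ht]
  rw [axisInversionφ₀]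
  linarith [le_neg_sq_mul_axisφ₀_add ht]

lemma axisInversionφ₀_sub_add_exp_pos_of_one_le (ht : 1 ≤ t) :
    0 < axisInversionφ₀ t - 36 / π ^ 2 * axisψI t + 72 / π ^ 2 * rexp (2 * π * t) := by
  have hp0 := axisNome_pos t
  have hp := axisNome_le_of_one_le ht
  have hp2 := (axisNome_pow_chain ht).1
  have hmain : 36 / π ^ 2 * (axisφ₄ t + axisψI t - 2 * rexp (2 * π * t)) ≤
      3.648 * (694 - 5120 * axisNome t + 153000 * axisNome t ^ 2) := by
    refine (mul_le_mul_of_nonneg_left (b := axisφ₄ t + axisψI t - 2 * rexp (2 * π * t)) ?_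
      (by positivity)).trans
      (mul_le_mul_of_nonneg_right thirty_six_div_pi_sq_mem_Icc.2 (by nlinarith))
    linarith [axisφ₄_le ht, axisψI_le ht, exp_two_pi_mul t]
  rw [axisInversionφ₀, show 72 / π ^ 2 = 2 * (36 / π ^ 2) by ring]
  linarith [le_neg_sq_mul_axisφ₀_add ht]

theorem axisInversionφ₀_add_pos (ht : 0 < t) :
    0 < axisInversionφ₀ t + 36 / π ^ 2 * axisψI t := by
  rcases le_or_gt 1 t with h | h
  · exact axisInversionφ₀_add_pos_of_one_le h
  have hs : 1 ≤ t⁻¹ := (one_le_inv₀ ht).2 h.le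
  have hp0 := axisNome_pos t⁻¹
  have hψ : 3.6475 * (7100 * axisNome t⁻¹) ≤ 36 / π ^ 2 * axisψS t⁻¹ := by
    gcongr
    · exact thirty_six_div_pi_sq_mem_Icc.1
    · exact le_axisψS hs
  have hpos : 0 < t ^ 2 * (36 / π ^ 2 * axisψS t⁻¹ - axisφ₀ t⁻¹) :=
    mul_pos (by positivity) (by linarith [axisφ₀_le hs, (axisNome_pow_chain hs).1])
  rw [axisInversionφ₀_eq ht, axisψI_eq ht]
  linarith

lemma le_exp_nine_point_three : (10300 : ℝ) ≤ rexp 9.3 := calc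
  (10300 : ℝ) ≤ 2.7182818283 ^ 9 * (0.3 + 1) := by norm_num
  _ ≤ rexp 1 ^ 9 * rexp 0.3 := by
    gcongr
    · exact Real.exp_one_gt_d9.le
    · exact Real.add_one_le_exp 0.3
  _ = rexp 9.3 := by
    rw [← Real.exp_nat_mul, ← Real.exp_add]
    norm_num

lemma mul_axisNome_inv_mul_sq_le_exp (ht : 0 < t) :
    10300 * axisNome t⁻¹ * t ^ 2 ≤ rexp (2 * π * t) := by
  have hpi := Real.pi_gt_d4
  have hpoly : 0 ≤ ((2 * π - 2) * t ^ 2 - 7.3 * t + π) / t := by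
    refine div_nonneg ?_ ht.le
    have hlead : 4.283 * t ^ 2 ≤ (2 * π - 2) * t ^ 2 := by
      gcongr
      linarith
    linarith [sq_nonneg (t - 3.65 / 4.283)]
  have hexponent : 9.3 ≤ 2 * π * t - 2 * Real.log t + π * t⁻¹ := calc
    (9.3 : ℝ) ≤ 9.3 + ((2 * π - 2) * t ^ 2 - 7.3 * t + π) / t := by linarith
    _ = 2 * π * t - 2 * (t - 1) + π * t⁻¹ := by field_simp; ring
    _ ≤ _ := by linarith [Real.log_le_sub_one_of_pos ht]
  have hsq : t ^ 2 = rexp (2 * Real.log t) := by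
    rw [two_mul, Real.exp_add, Real.exp_log ht, sq]
  calc 10300 * axisNome t⁻¹ * t ^ 2
      ≤ rexp (2 * π * t - 2 * Real.log t + π * t⁻¹) * axisNome t⁻¹ * t ^ 2 := by
        have := (axisNome_pos t⁻¹).le
        gcongr
        exact le_exp_nine_point_three.trans (Real.exp_le_exp.2 hexponent)
    _ = rexp (2 * π * t) := by
        rw [hsq, axisNome, ← Real.exp_add, ← Real.exp_add]
        ring_nf

theorem axisInversionφ₀_sub_add_exp_pos (ht : 0 < t) :
    0 < axisInversionφ₀ t - 36 / π ^ 2 * axisψI t + 72 / π ^ 2 * rexp (2 * π * t) := by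
  rcases le_or_gt 1 t with h | h
  · exact axisInversionφ₀_sub_add_exp_pos_of_one_le h
  have hs : 1 ≤ t⁻¹ := (one_le_inv₀ ht).2 h.le
  have hp0 := axisNome_pos t⁻¹
  obtain ⟨hc, hc'⟩ := thirty_six_div_pi_sq_mem_Icc
  have hψ : 36 / π ^ 2 * axisψS t⁻¹ ≤ 3.648 * (13500 * axisNome t⁻¹) :=
    mul_le_mul hc' (axisψS_le hs) (axisψS_pos (inv_pos.2 ht)).le (by norm_num)
  have hneg : t ^ 2 * (axisφ₀ t⁻¹ + 36 / π ^ 2 * axisψS t⁻¹) ≤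
      t ^ 2 * (74800 * axisNome t⁻¹) := by
    gcongr
    linarith [axisφ₀_le hs, (axisNome_pow_chain hs).1]
  have hexp : 7.295 * (10300 * axisNome t⁻¹ * t ^ 2) ≤ 72 / π ^ 2 * rexp (2 * π * t) := by
    gcongr
    · linarith [show 72 / π ^ 2 = 2 * (36 / π ^ 2) by ring]
    · exact mul_axisNome_inv_mul_sq_le_exp ht
  have hpos : 0 < t ^ 2 * axisNome t⁻¹ := by positivity
  rw [axisInversionφ₀_eq ht, axisψI_eq ht]
  linarith

end Positivity

section Growth

lemma exists_abs_axisψI_sub_exp_le :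
    ∃ C, ∀ t, 0 < t → |axisψI t - rexp (2 * π * t)| ≤ C := by
  refine ⟨600 + rexp (2 * π), fun t ht ↦ ?_⟩
  have hexp0 := Real.exp_pos (2 * π)
  rcases le_or_gt 1 t with h | h
  · have hp0 := axisNome_pos t
    have hp := axisNome_le_of_one_le h
    rw [exp_two_pi_mul, abs_le]
    constructor <;> linarith [le_axisψI h, axisψI_le h, (axisNome_pow_chain h).1]
  · have hs : 1 ≤ t⁻¹ := (one_le_inv₀ ht).2 h.le
    have hψ0 := axisψI_pos ht
    have hψ : axisψI t ≤ 1 * 600 := by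
      rw [axisψI_eq ht]
      exact mul_le_mul (pow_le_one₀ ht.le h.le)
        (by linarith [axisψS_le hs, axisNome_le_of_one_le hs])
        (axisψS_pos (inv_pos.2 ht)).le zero_le_one
    have hexp : rexp (2 * π * t) ≤ rexp (2 * π) :=
      Real.exp_le_exp.2 (mul_le_of_le_one_right (by positivity) h.le)
    rw [abs_le]
    constructor <;> linarith [Real.exp_pos (2 * π * t)]

lemma exists_axisInversionφ₀_add_exp_le :
    ∃ C, ∀ t, 0 < t → axisInversionφ₀ t + 36 / π ^ 2 * rexp (2 * π * t) ≤ C * (1 + t) := by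
  refine ⟨4800 + 36 / π ^ 2 * rexp (2 * π), fun t ht ↦ ?_⟩
  have hexp0 : 0 < 36 / π ^ 2 * rexp (2 * π) := by positivity
  have hmul0 := mul_pos hexp0 ht
  rcases le_or_gt 1 t with h | h
  · have hφ₂ : 12 / π * t * axisφ₂ t ≤ 4 * t * 1200 := by
      gcongr
      · linarith [le_axisφ₂ h, axisNome_sq_pos t]
      · exact twelve_div_pi_mem_Icc.2
      · exact axisφ₂_le h
    have hφ₀ := mul_nonneg (sq_nonneg t) (axisφ₀_nonneg ht)
    have hφ₄ : 36 / π ^ 2 * rexp (2 * π * t) ≤ 36 / π ^ 2 * axisφ₄ t := by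
      gcongr
      exact (exp_two_pi_mul t).trans_le (le_axisφ₄ h)
    rw [axisInversionφ₀]
    linarith
  · have hexp : 36 / π ^ 2 * rexp (2 * π * t) ≤ 36 / π ^ 2 * rexp (2 * π) :=
      mul_le_mul_of_nonneg_left
        (Real.exp_le_exp.2 (mul_le_of_le_one_right (by positivity) h.le)) (by positivity)
    linarith [axisInversionφ₀_nonpos ht]

end Growth

/-! ### Laplace transforms -/

section Laplace

variable {F : ℝ → ℝ} {a t u : ℝ}

/-- The Laplace transform `∫₀^∞ F(t) e^{-πut} dt`, with the exponent scaled so that `u` plays the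
role of the squared radius. -/
noncomputable def laplace (F : ℝ → ℝ) (u : ℂ) : ℂ :=
  ∫ t in Ioi (0 : ℝ), (F t : ℂ) * cexp (-(π * u * t))

/-- The restriction of `laplace` to the real axis, as a real number. -/
noncomputable def realLaplace (F : ℝ → ℝ) (u : ℝ) : ℝ :=
  ∫ t in Ioi (0 : ℝ), F t * rexp (-(π * u * t))

/-- Continuous functions on `(0, ∞)` growing more slowly than every exponential, a class on which
the Laplace transform is holomorphic in the right half-plane. -/
structure HasSubexponentialGrowth (F : ℝ → ℝ) : Prop where
  continuousOn : ContinuousOn F (Ioi 0)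
  exists_abs_le : ∀ b, 0 < b → ∃ C, ∀ t, 0 < t → |F t| ≤ C * rexp (b * t)

lemma laplace_ofReal (F : ℝ → ℝ) (u : ℝ) : laplace F u = realLaplace F u := by
  rw [laplace, realLaplace, ← integral_complex_ofReal]
  push_cast
  rfl

lemma one_add_le_mul_exp {b t : ℝ} (hb : 0 < b) (ht : 0 ≤ t) :
    1 + t ≤ (1 + b⁻¹) * rexp (b * t) := by
  have hexp := Real.add_one_le_exp (b * t)
  have hbt : 0 ≤ b * t := by positivity
  calc 1 + t = 1 + b⁻¹ * (b * t) := by rw [inv_mul_cancel_left₀ hb.ne']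
    _ ≤ rexp (b * t) + b⁻¹ * rexp (b * t) := by gcongr <;> linarith
    _ = (1 + b⁻¹) * rexp (b * t) := by ring

lemma hasSubexponentialGrowth_of_abs_le {C : ℝ} (hF : ContinuousOn F (Ioi 0))
    (hC : ∀ t, 0 < t → |F t| ≤ C * (1 + t)) : HasSubexponentialGrowth F where
  continuousOn := hF
  exists_abs_le b hb := by
    refine ⟨C * (1 + b⁻¹), fun t ht ↦ (hC t ht).trans ?_⟩
    have hC0 : 0 ≤ C := by linarith [(abs_nonneg _).trans (hC 1 one_pos)]
    rw [mul_assoc]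
    exact mul_le_mul_of_nonneg_left (one_add_le_mul_exp hb ht.le) hC0

namespace HasSubexponentialGrowth

lemma id_mul (h : HasSubexponentialGrowth F) : HasSubexponentialGrowth fun t ↦ t * F t where
  continuousOn := continuousOn_id.mul h.continuousOn
  exists_abs_le b hb := by
    obtain ⟨C, hC⟩ := h.exists_abs_le (b / 2) (half_pos hb)
    refine ⟨(1 + (b / 2)⁻¹) * C, fun t ht ↦ ?_⟩
    calc |t * F t| = t * |F t| := by rw [abs_mul, abs_of_pos ht]
      _ ≤ (1 + (b / 2)⁻¹) * rexp (b / 2 * t) * (C * rexp (b / 2 * t)) := by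
          gcongr
          · linarith [one_add_le_mul_exp (half_pos hb) ht.le]
          · exact hC t ht
      _ = (1 + (b / 2)⁻¹) * C * (rexp (b / 2 * t) * rexp (b / 2 * t)) := by ring
      _ = _ := by rw [← Real.exp_add, ← add_mul, add_halves]

lemma exists_norm_integrand_le (h : HasSubexponentialGrowth F) (ha : 0 < a) :
    ∃ C, ∀ u : ℂ, a ≤ u.re → ∀ t, 0 < t →
      ‖(F t : ℂ) * cexp (-(π * u * t))‖ ≤ C * rexp (-(π * a / 2) * t) := by
  obtain ⟨C, hC⟩ := h.exists_abs_le (π * a / 2) (by positivity)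
  refine ⟨C, fun u hu t ht ↦ ?_⟩
  have hre : (-(π * u * t)).re = -(π * u.re * t) := by simp
  rw [norm_mul, norm_real, norm_exp, hre]
  calc |F t| * rexp (-(π * u.re * t)) ≤ C * rexp (π * a / 2 * t) * rexp (-(π * a * t)) := by
        gcongr
        · exact (abs_nonneg _).trans (hC t ht)
        · exact hC t ht
    _ = _ := by rw [mul_assoc, ← Real.exp_add]; ring_nf

lemma aestronglyMeasurable_integrand (h : HasSubexponentialGrowth F) (u : ℂ) :
    AEStronglyMeasurable (fun t : ℝ ↦ (F t : ℂ) * cexp (-(π * u * t)))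
      (volume.restrict (Ioi 0)) := by
  have := h.continuousOn
  exact ContinuousOn.aestronglyMeasurable (by fun_prop) measurableSet_Ioi

lemma integrableOn_integrand (h : HasSubexponentialGrowth F) {u : ℂ} (hu : 0 < u.re) :
    IntegrableOn (fun t : ℝ ↦ (F t : ℂ) * cexp (-(π * u * t))) (Ioi 0) := by
  obtain ⟨C, hC⟩ := h.exists_norm_integrand_le hu
  refine (integrableOn_const_mul_exp_neg_mul 0 C (b := π * u.re / 2) (by positivity)).mono'
    (h.aestronglyMeasurable_integrand u) ?_
  filter_upwards [ae_restrict_mem measurableSet_Ioi] with t ht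
  exact hC u le_rfl t ht

lemma integrableOn_real_integrand (h : HasSubexponentialGrowth F) (hu : 0 < u) :
    IntegrableOn (fun t ↦ F t * rexp (-(π * u * t))) (Ioi 0) := by
  refine (h.integrableOn_integrand (u := u) hu).re.congr (.of_forall fun t ↦ ?_)
  simp only [← ofReal_mul, ← ofReal_neg, ← ofReal_exp]
  exact ofReal_re _

lemma differentiableOn_laplace (h : HasSubexponentialGrowth F) :
    DifferentiableOn ℂ (laplace F) {u | 0 < u.re} := by
  intro u₀ hu₀
  have hu₀' : 0 < u₀.re / 2 := half_pos hu₀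
  obtain ⟨C, hC⟩ := h.id_mul.exists_norm_integrand_le hu₀'
  have hderiv := hasDerivAt_integral_of_dominated_loc_of_deriv_le (μ := volume.restrict (Ioi 0))
    (F := fun (u : ℂ) (t : ℝ) ↦ (F t : ℂ) * cexp (-(π * u * t)))
    (F' := fun (u : ℂ) (t : ℝ) ↦ -π * (((t * F t : ℝ) : ℂ) * cexp (-(π * u * t))))
    (bound := fun t ↦ π * C * rexp (-(π * (u₀.re / 2) / 2) * t))
    (x₀ := u₀) (s := {u : ℂ | u₀.re / 2 < u.re})
    ((isOpen_lt continuous_const continuous_re).mem_nhds (half_lt_self (mem_ofPred.1 hu₀)))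
    (.of_forall h.aestronglyMeasurable_integrand) (h.integrableOn_integrand hu₀)
    ((h.id_mul.aestronglyMeasurable_integrand u₀).const_mul _)
    ?_ (integrableOn_const_mul_exp_neg_mul 0 _ (by positivity)) ?_
  · exact hderiv.2.differentiableAt.differentiableWithinAt
  · filter_upwards [ae_restrict_mem measurableSet_Ioi] with t ht u hu
    rw [norm_mul, norm_neg, norm_real, Real.norm_of_nonneg Real.pi_pos.le, mul_assoc π C]
    exact mul_le_mul_of_nonneg_left (hC u (le_of_lt hu) t ht) Real.pi_pos.le
  · filter_upwards with t u _
    have : HasDerivAt (fun u : ℂ ↦ -(π * u * t)) (-(π * t)) u := by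
      simpa using (((hasDerivAt_id u).const_mul (π : ℂ)).mul_const (t : ℂ)).fun_neg
    refine (this.cexp.const_mul (F t : ℂ)).congr_deriv ?_
    push_cast
    ring

end HasSubexponentialGrowth

lemma realLaplace_pos (hint : IntegrableOn (fun t ↦ F t * rexp (-(π * u * t))) (Ioi 0))
    (hF : ∀ t, 0 < t → 0 < F t) : 0 < realLaplace F u := by
  have hpos : ∀ t ∈ Ioi (0 : ℝ), 0 < F t * rexp (-(π * u * t)) :=
    fun t ht ↦ mul_pos (hF t ht) (Real.exp_pos _)
  have hsupp : Ioi 0 ⊆ Function.support fun t ↦ F t * rexp (-(π * u * t)) :=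
    fun t ht ↦ (hpos t ht).ne'
  rw [realLaplace, setIntegral_pos_iff_support_of_nonneg_ae _ hint, inter_eq_right.2 hsupp]
  · simp
  · filter_upwards [ae_restrict_mem measurableSet_Ioi] with t ht
    exact (hpos t ht).le

lemma abs_realLaplace_le {C : ℝ} (hC : ∀ t, 0 < t → |F t| ≤ C) (hu : 0 < u) :
    |realLaplace F u| ≤ C / (π * u) := by
  have hrate : 0 < π * u := by positivity
  have hintegral : ∫ t in Ioi (0 : ℝ), C * rexp (-(π * u) * t) = C / (π * u) := by
    rw [integral_const_mul, integral_exp_mul_Ioi (neg_neg_of_pos hrate), mul_zero, Real.exp_zero,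
      neg_div_neg_eq, mul_one_div]
  rw [← hintegral, ← Real.norm_eq_abs]
  refine norm_integral_le_of_norm_le (integrableOn_const_mul_exp_neg_mul 0 C hrate)
    ((ae_restrict_mem measurableSet_Ioi).mono fun t ht ↦ ?_)
  rw [norm_mul, Real.norm_eq_abs, Real.norm_of_nonneg (Real.exp_pos _).le, neg_mul]
  exact mul_le_mul_of_nonneg_right (hC t ht) (Real.exp_pos _).le

lemma integrableOn_exp_mul_exp (hu : a < u) :
    IntegrableOn (fun t ↦ rexp (a * π * t) * rexp (-(π * u * t))) (Ioi 0) := by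
  refine (exp_neg_integrableOn_Ioi 0 (mul_pos Real.pi_pos (sub_pos.2 hu))).congr_fun
    (fun t _ ↦ ?_) measurableSet_Ioi
  simp only [← Real.exp_add]
  ring_nf

lemma realLaplace_exp (hu : a < u) :
    realLaplace (fun t ↦ rexp (a * π * t)) u = 1 / (π * (u - a)) := by
  have hexp (t : ℝ) : rexp (a * π * t) * rexp (-(π * u * t)) = rexp (-(π * (u - a)) * t) := by
    rw [← Real.exp_add]
    ring_nf
  have hrate : 0 < π * (u - a) := mul_pos Real.pi_pos (sub_pos.2 hu)
  simp only [realLaplace, hexp]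
  rw [integral_exp_mul_Ioi (neg_neg_of_pos hrate), mul_zero, Real.exp_zero, neg_div_neg_eq]

lemma eq_of_differentiableOn_of_forall_lt {f g : ℂ → ℂ}
    (hf : DifferentiableOn ℂ f {u | 0 < u.re}) (hg : DifferentiableOn ℂ g {u | 0 < u.re})
    (heq : ∀ u : ℝ, a < u → f u = g u) (hu : 0 < u) : f u = g u := by
  have hopen : IsOpen {u : ℂ | 0 < u.re} := isOpen_lt continuous_const continuous_re
  have hreal : Tendsto ofReal (𝓝[≠] (|a| + 1)) (𝓝[≠] ((|a| + 1 : ℝ) : ℂ)) :=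
    continuous_ofReal.continuousWithinAt.tendsto_nhdsWithin fun _ hv ↦ ofReal_injective.ne hv
  have hnear : ∀ᶠ v : ℝ in 𝓝[≠] (|a| + 1), f v = g v :=
    nhdsWithin_le_nhds ((lt_mem_nhds (by linarith [le_abs_self a])).mono heq)
  exact (hf.analyticOnNhd hopen).eqOn_of_preconnected_of_frequently_eq (hg.analyticOnNhd hopen)
    (convex_halfSpace_re_gt 0).isPreconnected
    (show 0 < ((|a| + 1 : ℝ) : ℂ).re by rw [ofReal_re]; positivity)
    (hreal.frequently hnear.frequently) hu

end Laplace

/-! ### The radial profiles -/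

section AxisRemainder

lemma continuousOn_of_mul_I_eq {f : ℂ → ℂ} {r : ℝ → ℝ}
    (hf : DifferentiableOn ℂ f upperHalfPlaneSet) (hr : ∀ t : ℝ, 0 < t → f (t * I) = r t) :
    ContinuousOn r (Ioi 0) := by
  have haxis : ContinuousOn (fun t : ℝ ↦ (f (t * I)).re) (Ioi 0) :=
    continuous_re.comp_continuousOn
      (hf.continuousOn.comp (by fun_prop) fun _ ht ↦ im_ofReal_mul_I_pos ht)
  exact haxis.congr fun t ht ↦ by simp only [hr t ht, ofReal_re]

lemma continuousOn_axisInversionφ₀ : ContinuousOn axisInversionφ₀ (Ioi 0) :=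
  continuousOn_of_mul_I_eq (differentiableOn_inversion isEigenKernel_φ₀.differentiableOn)
    fun _ ↦ inversion_φ₀_mul_I

lemma inversion_ψS_mul_I {t : ℝ} (ht : 0 < t) : inversion (-1) ψS (t * I) = axisψI t := by
  rw [inversion_ψS (im_ofReal_mul_I_pos ht), ψI_mul_I ht]

lemma continuousOn_axisψI : ContinuousOn axisψI (Ioi 0) :=
  continuousOn_of_mul_I_eq (differentiableOn_inversion isEigenKernel_ψS.differentiableOn)
    fun _ ↦ inversion_ψS_mul_I

/-- The combination `α axisInversionφ₀ + β axisψI` with its only exponentially growing term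
removed. -/
noncomputable def axisRemainder (α β t : ℝ) : ℝ :=
  α * axisInversionφ₀ t + β * axisψI t - (β - 36 / π ^ 2 * α) * rexp (2 * π * t)

lemma exists_abs_axisInversionφ₀_add_exp_le :
    ∃ C, ∀ t, 0 < t → |axisInversionφ₀ t + 36 / π ^ 2 * rexp (2 * π * t)| ≤ C * (1 + t) := by
  obtain ⟨C, hC⟩ := exists_axisInversionφ₀_add_exp_le
  obtain ⟨D, hD⟩ := exists_abs_axisψI_sub_exp_le
  have hD0 : 0 ≤ 36 / π ^ 2 * D :=
    mul_nonneg (by positivity) ((abs_nonneg _).trans (hD 1 one_pos))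
  refine ⟨|C| + 36 / π ^ 2 * D, fun t ht ↦ abs_le.2 ⟨?_, ?_⟩⟩
  · have hψ : 36 / π ^ 2 * (axisψI t - rexp (2 * π * t)) ≤ 36 / π ^ 2 * D := by
      gcongr
      exact (le_abs_self _).trans (hD t ht)
    have hprod : 0 ≤ |C| * (1 + t) + 36 / π ^ 2 * D * t := by positivity
    linarith [axisInversionφ₀_add_pos ht]
  · refine (hC t ht).trans (mul_le_mul_of_nonneg_right ?_ (by positivity))
    linarith [le_abs_self C]

lemma hasSubexponentialGrowth_axisRemainder (α β : ℝ) :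
    HasSubexponentialGrowth (axisRemainder α β) := by
  obtain ⟨C, hC⟩ := exists_abs_axisInversionφ₀_add_exp_le
  obtain ⟨D, hD⟩ := exists_abs_axisψI_sub_exp_le
  have hφ := continuousOn_axisInversionφ₀
  have hψ := continuousOn_axisψI
  refine hasSubexponentialGrowth_of_abs_le (C := |α| * C + |β| * D)
    (by unfold axisRemainder; fun_prop) fun t ht ↦ ?_
  have hD0 := (abs_nonneg _).trans (hD t ht)
  calc |axisRemainder α β t|
      = |α * (axisInversionφ₀ t + 36 / π ^ 2 * rexp (2 * π * t)) +
          β * (axisψI t - rexp (2 * π * t))| := by rw [axisRemainder]; ring_nf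
    _ ≤ |α| * |axisInversionφ₀ t + 36 / π ^ 2 * rexp (2 * π * t)| +
          |β| * |axisψI t - rexp (2 * π * t)| := by
        simpa only [abs_mul] using abs_add_le (α * _) (β * _)
    _ ≤ |α| * (C * (1 + t)) + |β| * (D * (1 + t)) := by
        gcongr
        · exact hC t ht
        · exact (hD t ht).trans (le_mul_of_one_le_right hD0 (by linarith))
    _ = (|α| * C + |β| * D) * (1 + t) := by ring

end AxisRemainder

section Profile

variable {α β u : ℝ}

/-- The combination `α a + β b` of the radial eigenfunctions `a` (with `𝓕 a = a`) and `b` (with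
`𝓕 b = -b`) of Viazovska, as a function of the complexified squared radius, normalised to be real
on `[0, ∞)`. -/
noncomputable def profile (α β : ℝ) (u : ℂ) : ℂ :=
  I / 4 * (α * radialProfile 1 φ₀ u + β * radialProfile (-1) ψS u)

lemma differentiableOn_profile (α β : ℝ) :
    DifferentiableOn ℂ (profile α β) {u | -1 / 2 < u.re} := by
  have := isEigenKernel_φ₀.differentiableOn_radialProfile
  have := isEigenKernel_ψS.differentiableOn_radialProfile
  unfold profile
  fun_prop

lemma integral_mul_exp_eq_realLaplace {f : ℝ → ℂ} {r : ℝ → ℝ}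
    (hr : ∀ t, 0 < t → f t = r t) (u : ℝ) :
    ∫ t in Ioi (0 : ℝ), f t * cexp (-(π * u * t : ℝ)) = realLaplace r u := by
  rw [← laplace_ofReal, laplace]
  refine setIntegral_congr_fun measurableSet_Ioi fun t ht ↦ ?_
  simp only [hr t ht, ofReal_mul]

lemma integrableOn_real_mul_exp {f : ℝ → ℂ} {r : ℝ → ℝ} (hr : ∀ t, 0 < t → f t = r t)
    (hint : IntegrableOn (fun t : ℝ ↦ f t * cexp (-(π * u * t : ℝ))) (Ioi 0)) :
    IntegrableOn (fun t ↦ r t * rexp (-(π * u * t))) (Ioi 0) := by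
  refine IntegrableOn.congr_fun (f := fun t ↦ (f t * cexp (-(π * u * t : ℝ))).re) hint.re
    (fun t ht ↦ ?_) measurableSet_Ioi
  simp only [hr t ht, ← ofReal_neg, ← ofReal_exp, ← ofReal_mul, ofReal_re]

lemma integrableOn_axisInversionφ₀_mul_exp (hu : 2 < u) :
    IntegrableOn (fun t ↦ axisInversionφ₀ t * rexp (-(π * u * t))) (Ioi 0) :=
  integrableOn_real_mul_exp (fun _ ↦ inversion_φ₀_mul_I)
    (isEigenKernel_φ₀.integrableOn_inversion_mul_exp hu)

lemma integrableOn_axisψI_mul_exp (hu : 2 < u) :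
    IntegrableOn (fun t ↦ axisψI t * rexp (-(π * u * t))) (Ioi 0) :=
  integrableOn_real_mul_exp (fun _ ↦ inversion_ψS_mul_I)
    (isEigenKernel_ψS.integrableOn_inversion_mul_exp hu)

lemma integrableOn_combination_mul_exp (α β : ℝ) (hu : 2 < u) :
    IntegrableOn (fun t ↦ (α * axisInversionφ₀ t + β * axisψI t) * rexp (-(π * u * t)))
      (Ioi 0) := by
  refine (((integrableOn_axisInversionφ₀_mul_exp hu).const_mul α).add
    ((integrableOn_axisψI_mul_exp hu).const_mul β)).congr (.of_forall fun t ↦ ?_)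
  simp only [Pi.add_apply]
  ring

lemma realLaplace_combination (α β : ℝ) (hu : 2 < u) :
    realLaplace (fun t ↦ α * axisInversionφ₀ t + β * axisψI t) u =
      α * realLaplace axisInversionφ₀ u + β * realLaplace axisψI u := by
  simp only [realLaplace, add_mul, mul_assoc]
  rw [integral_add, integral_const_mul, integral_const_mul]
  · simpa only [mul_assoc] using (integrableOn_axisInversionφ₀_mul_exp hu).const_mul α
  · simpa only [mul_assoc] using (integrableOn_axisψI_mul_exp hu).const_mul β

lemma profile_eq_of_two_lt (α β : ℝ) (hu : 2 < u) :
    profile α β u = (Real.sin (π * u / 2) ^ 2 *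
      realLaplace (fun t ↦ α * axisInversionφ₀ t + β * axisψI t) u : ℝ) := by
  rw [realLaplace_combination α β hu, profile, isEigenKernel_φ₀.radialProfile_eq_integral hu,
    isEigenKernel_ψS.radialProfile_eq_integral hu,
    integral_mul_exp_eq_realLaplace fun _ ↦ inversion_φ₀_mul_I,
    integral_mul_exp_eq_realLaplace fun _ ↦ inversion_ψS_mul_I]
  push_cast
  linear_combination (-(α * realLaplace axisInversionφ₀ u + β * realLaplace axisψI u) *
    Complex.sin (π * u / 2) ^ 2 : ℂ) * I_sq

lemma realLaplace_axisRemainder (α β : ℝ) (hu : 2 < u) :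
    realLaplace (axisRemainder α β) u =
      realLaplace (fun t ↦ α * axisInversionφ₀ t + β * axisψI t) u -
        (β - 36 / π ^ 2 * α) / (π * (u - 2)) := by
  have hexp := (integrableOn_exp_mul_exp hu).const_mul (β - 36 / π ^ 2 * α)
  rw [← mul_one_div, ← realLaplace_exp hu, realLaplace, realLaplace, realLaplace,
    ← integral_const_mul, ← integral_sub (integrableOn_combination_mul_exp α β hu) hexp]
  simp only [axisRemainder, sub_mul, mul_assoc]

lemma profile_eq (α β : ℝ) (hu : 0 < u) (hu2 : u ≠ 2) :
    profile α β u = (Real.sin (π * u / 2) ^ 2 *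
      ((β - 36 / π ^ 2 * α) / (π * (u - 2)) + realLaplace (axisRemainder α β) u) : ℝ) := by
  have hπ : (π : ℂ) ≠ 0 := ofReal_ne_zero.2 Real.pi_ne_zero
  have hsub {v : ℝ} (hv : v ≠ 2) : (v : ℂ) - 2 ≠ 0 := by exact_mod_cast sub_ne_zero.2 hv
  have hprofile := (differentiableOn_profile α β).mono
    (fun u (hu : 0 < u.re) ↦ show -1 / 2 < u.re by linarith)
  have hlaplace := (hasSubexponentialGrowth_axisRemainder α β).differentiableOn_laplace
  have hcont := eq_of_differentiableOn_of_forall_lt (a := 2)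
    (f := fun u ↦ (u - 2) * profile α β u)
    (g := fun u ↦ Complex.sin (π * u / 2) ^ 2 *
      (((β - 36 / π ^ 2 * α : ℝ) : ℂ) / π + (u - 2) * laplace (axisRemainder α β) u))
    (by fun_prop) (by fun_prop) (fun v hv ↦ ?_) hu
  · simp only [laplace_ofReal] at hcont
    refine mul_left_cancel₀ (hsub hu2) (hcont.trans ?_)
    have := hsub hu2
    push_cast
    field_simp
  · have := hsub hv.ne'
    simp only [profile_eq_of_two_lt α β hv, laplace_ofReal, realLaplace_axisRemainder α β hv]
    push_cast
    field_simp
    ring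

end Profile

section RealProfile

variable {α β u : ℝ}

/-- The real function underlying `profile α β` on the half-line of squared radii. -/
noncomputable def realProfile (α β u : ℝ) : ℝ :=
  (profile α β u).re

lemma realProfile_eq_of_two_lt (α β : ℝ) (hu : 2 < u) :
    realProfile α β u = Real.sin (π * u / 2) ^ 2 *
      realLaplace (fun t ↦ α * axisInversionφ₀ t + β * axisψI t) u := by
  rw [realProfile, profile_eq_of_two_lt α β hu, ofReal_re]

lemma realProfile_eq (α β : ℝ) (hu : 0 < u) (hu2 : u ≠ 2) :
    realProfile α β u = Real.sin (π * u / 2) ^ 2 *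
      ((β - 36 / π ^ 2 * α) / (π * (u - 2)) + realLaplace (axisRemainder α β) u) := by
  rw [realProfile, profile_eq α β hu hu2, ofReal_re]

lemma realProfile_eq_add (α β u : ℝ) :
    realProfile α β u = α * realProfile 1 0 u + β * realProfile 0 1 u := by
  have hprofile : profile α β u = α * profile 1 0 u + β * profile 0 1 u := by
    simp only [profile, ofReal_one, ofReal_zero]
    ring
  simp only [realProfile, hprofile, add_re, re_ofReal_mul]

lemma realProfile_mul (c α β u : ℝ) :
    realProfile (c * α) (c * β) u = c * realProfile α β u := by
  rw [realProfile_eq_add, realProfile_eq_add α β]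
  ring

lemma tendsto_profile (α β : ℝ) (hu : 0 ≤ u) :
    Tendsto (fun v : ℝ ↦ profile α β v) (𝓝[>] u) (𝓝 (profile α β u)) := by
  have hmem : {z : ℂ | -1 / 2 < z.re} ∈ 𝓝 (u : ℂ) :=
    (isOpen_lt continuous_const continuous_re).mem_nhds
      (show -1 / 2 < (u : ℂ).re by rw [ofReal_re]; linarith)
  have hcont := ((differentiableOn_profile α β).continuousOn.continuousAt hmem).tendsto
  exact hcont.comp ((continuous_ofReal.tendsto u).mono_left nhdsWithin_le_nhds)

lemma tendsto_realProfile (α β : ℝ) (hu : 0 ≤ u) :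
    Tendsto (realProfile α β) (𝓝[>] u) (𝓝 (realProfile α β u)) :=
  (continuous_re.tendsto _).comp (tendsto_profile α β hu)

lemma eventually_pos_and_ne (hu : 0 ≤ u) (a : ℝ) : ∀ᶠ v in 𝓝[>] u, 0 < v ∧ v ≠ a := by
  have hne : ∀ᶠ v in 𝓝[>] u, v ≠ a := by
    rcases eq_or_ne u a with rfl | h
    · filter_upwards [self_mem_nhdsWithin] with v hv using ne_of_gt hv
    · exact eventually_ne_nhdsWithin h
  filter_upwards [self_mem_nhdsWithin, hne] with v hv hva using ⟨hu.trans_lt hv, hva⟩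

lemma ofReal_realProfile (α β : ℝ) (hu : 0 ≤ u) : (realProfile α β u : ℂ) = profile α β u := by
  have him : (profile α β u).im = 0 := by
    refine tendsto_nhds_unique ((continuous_im.tendsto _).comp (tendsto_profile α β hu))
      (tendsto_const_nhds.congr' ?_)
    filter_upwards [eventually_pos_and_ne hu 2] with v hv
    rw [Function.comp_apply, profile_eq α β hv.1 hv.2, ofReal_im]
  exact Complex.ext (ofReal_re _) (by rw [ofReal_im, him])

lemma exists_abs_realLaplace_axisRemainder_le :
    ∃ C, ∀ u, 0 < u → |realLaplace (axisRemainder 0 1) u| ≤ C / (π * u) := by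
  obtain ⟨C, hC⟩ := exists_abs_axisψI_sub_exp_le
  refine ⟨C, fun u hu ↦ abs_realLaplace_le (fun t ht ↦ ?_) hu⟩
  simpa only [axisRemainder, zero_mul, zero_add, one_mul, mul_zero, sub_zero] using hC t ht

lemma realProfile_zero_one_zero : realProfile 0 1 0 = 0 := by
  obtain ⟨C, hC⟩ := exists_abs_realLaplace_axisRemainder_le
  have hbound : ∀ v : ℝ, 0 < v → v < 1 →
      |realProfile 0 1 v| ≤ π / 4 * v ^ 2 + π * C / 4 * v := fun v hv hv1 ↦ by
    have hsin : |Real.sin (π * v / 2)| ≤ π * v / 2 :=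
      Real.abs_sin_le_abs.trans_eq (abs_of_pos (by positivity))
    have hpole : |1 / (π * (v - 2))| ≤ 1 / π := by
      rw [abs_div, abs_one, abs_mul, abs_of_pos Real.pi_pos, abs_of_neg (by linarith)]
      exact one_div_le_one_div_of_le Real.pi_pos
        (le_mul_of_one_le_right Real.pi_pos.le (by linarith))
    rw [realProfile_eq 0 1 hv (by linarith), mul_zero, sub_zero, abs_mul, abs_pow]
    calc |Real.sin (π * v / 2)| ^ 2 * |1 / (π * (v - 2)) + realLaplace (axisRemainder 0 1) v|
        ≤ (π * v / 2) ^ 2 * (1 / π + C / (π * v)) := by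
          gcongr
          exact (abs_add_le _ _).trans (add_le_add hpole (hC v hv))
      _ = π / 4 * v ^ 2 + π * C / 4 * v := by field_simp; ring
  have hlim : Tendsto (fun v : ℝ ↦ π / 4 * v ^ 2 + π * C / 4 * v) (𝓝[>] 0) (𝓝 0) := by
    have hcont : Continuous fun v : ℝ ↦ π / 4 * v ^ 2 + π * C / 4 * v := by fun_prop
    simpa using (hcont.tendsto 0).mono_left (nhdsWithin_le_nhds (s := Ioi 0))
  refine tendsto_nhds_unique (tendsto_realProfile 0 1 le_rfl)
    (squeeze_zero_norm' ?_ hlim)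
  filter_upwards [Ioo_mem_nhdsGT one_pos] with v hv using hbound v hv.1 hv.2

variable {E : Type*} [NormedAddCommGroup E] [InnerProductSpace ℝ E] [FiniteDimensional ℝ E]
  [MeasurableSpace E] [BorelSpace E]

lemma exists_schwartzMap_fourier_eq_profile (hE : Module.finrank ℝ E = 8) (α β : ℝ) :
    ∃ S : 𝓢(E, ℂ), (∀ x, S x = profile α β (‖x‖ ^ 2 : ℝ)) ∧
      ∀ y, 𝓕 S y = profile α (-β) (‖y‖ ^ 2 : ℝ) := by
  obtain ⟨A, hA, hFA⟩ := isEigenKernel_φ₀.exists_schwartzMap_fourier_eq hE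
  obtain ⟨B, hB, hFB⟩ := isEigenKernel_ψS.exists_schwartzMap_fourier_eq hE
  refine ⟨(I / 4 * α) • A + (I / 4 * β) • B, fun x ↦ ?_, fun y ↦ ?_⟩
  · simp only [add_apply, smul_apply, hA, hB, profile, smul_eq_mul]
    ring
  · rw [FourierTransform.fourier_add, FourierTransform.fourier_smul,
      FourierTransform.fourier_smul, hFA, hFB]
    simp only [add_apply, smul_apply, hA, hB, profile, smul_eq_mul,
      ofReal_neg]
    ring

theorem exists_schwartzMap_fourier_eq_realProfile (hE : Module.finrank ℝ E = 8) (α β : ℝ) :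
    ∃ g : 𝓢(E, ℝ), (∀ x, g x = realProfile α β (‖x‖ ^ 2)) ∧
      ∀ y, 𝓕 (fun x ↦ (g x : ℂ)) y = realProfile α (-β) (‖y‖ ^ 2) := by
  obtain ⟨S, hS, hFS⟩ := exists_schwartzMap_fourier_eq_profile hE α β
  have hre : ∀ x, SchwartzMap.postcompCLM (𝕜 := ℝ) reCLM S x = realProfile α β (‖x‖ ^ 2) :=
    fun x ↦ congrArg re (hS x)
  refine ⟨SchwartzMap.postcompCLM (𝕜 := ℝ) reCLM S, hre, fun y ↦ ?_⟩
  have hcoe : (fun x ↦ ((SchwartzMap.postcompCLM (𝕜 := ℝ) reCLM S x : ℝ) : ℂ)) = S := by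
    funext x
    rw [hre, ofReal_realProfile α β (by positivity), hS]
  rw [hcoe, ← SchwartzMap.fourier_coe, hFS, ofReal_realProfile α (-β) (by positivity)]

end RealProfile

section MagicProfile

variable {u : ℝ}

/-- The radial profile, in the squared radius, of a positive multiple of Viazovska's optimal
function. -/
noncomputable def magicProfile (u : ℝ) : ℝ :=
  realProfile 1 (-(36 / π ^ 2)) u

/-- The radial profile of the Fourier transform of the function with profile `magicProfile`. -/
noncomputable def magicFourierProfile (u : ℝ) : ℝ :=
  realProfile 1 (36 / π ^ 2) u

lemma sin_sq_pos_of_not_even (hu : 0 < u) (h : ¬∃ n : ℤ, 0 < n ∧ u = 2 * n) :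
    0 < Real.sin (π * u / 2) ^ 2 := by
  refine sq_pos_iff.2 ?_
  contrapose! h
  obtain ⟨n, hn⟩ := Real.sin_eq_zero_iff.1 h
  have hu2 : u = 2 * n := mul_left_cancel₀ Real.pi_ne_zero (by linarith)
  have hn0 : (0 : ℝ) < n := by linarith
  exact ⟨n, by exact_mod_cast hn0, hu2⟩

lemma exists_magicFourierProfile_eq (hu : 0 < u) (hu2 : u ≠ 2) :
    ∃ c, 0 < c ∧ magicFourierProfile u = Real.sin (π * u / 2) ^ 2 * c := by
  refine ⟨_, ?_, realProfile_eq 1 (36 / π ^ 2) hu hu2⟩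
  rw [mul_one, sub_self, zero_div, zero_add]
  refine realLaplace_pos
    ((hasSubexponentialGrowth_axisRemainder _ _).integrableOn_real_integrand hu) fun t ht ↦ ?_
  simpa only [axisRemainder, one_mul, mul_one, sub_self, zero_mul, sub_zero] using
    axisInversionφ₀_add_pos ht

lemma magicFourierProfile_nonneg (hu : 0 ≤ u) : 0 ≤ magicFourierProfile u := by
  refine ge_of_tendsto (tendsto_realProfile 1 (36 / π ^ 2) hu) ?_
  filter_upwards [eventually_pos_and_ne hu 2] with v hv
  obtain ⟨c, hc, hv⟩ := exists_magicFourierProfile_eq hv.1 hv.2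
  rw [← magicFourierProfile, hv]
  positivity

lemma exists_magicProfile_eq_of_lt_two (hu : 0 < u) (hu2 : u < 2) :
    ∃ c, 0 < c ∧ magicProfile u = Real.sin (π * u / 2) ^ 2 * c := by
  refine ⟨_, add_pos ?_ ?_, realProfile_eq 1 (-(36 / π ^ 2)) hu hu2.ne⟩
  · refine div_pos_of_neg_of_neg ?_ (mul_neg_of_pos_of_neg Real.pi_pos (by linarith))
    have : 0 < 36 / π ^ 2 := by positivity
    linarith
  · refine realLaplace_pos
      ((hasSubexponentialGrowth_axisRemainder _ _).integrableOn_real_integrand hu) fun t ht ↦ ?_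
    refine (axisInversionφ₀_sub_add_exp_pos ht).trans_eq ?_
    rw [axisRemainder]
    ring

lemma exists_magicProfile_eq_of_two_lt (hu : 2 < u) :
    ∃ c, 0 < c ∧ magicProfile u = -(Real.sin (π * u / 2) ^ 2 * c) := by
  refine ⟨_, realLaplace_pos (integrableOn_combination_mul_exp (-1) (36 / π ^ 2) hu)
    fun t ht ↦ ?_, ?_⟩
  · linarith [axisInversionφ₀_sub_neg ht]
  · rw [← realProfile_eq_of_two_lt (-1) (36 / π ^ 2) hu, ← neg_one_mul (realProfile _ _ u),
      ← realProfile_mul, neg_one_mul, neg_one_mul, neg_neg, magicProfile]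

lemma magicProfile_nonpos (hu : 2 ≤ u) : magicProfile u ≤ 0 := by
  refine le_of_tendsto (tendsto_realProfile 1 (-(36 / π ^ 2)) (by linarith)) ?_
  filter_upwards [self_mem_nhdsWithin] with v hv
  obtain ⟨c, hc, hv⟩ := exists_magicProfile_eq_of_two_lt (hu.trans_lt hv)
  rw [← magicProfile, hv, neg_nonpos]
  positivity

lemma magicProfile_zero : magicProfile 0 = magicFourierProfile 0 := by
  rw [magicProfile, magicFourierProfile, realProfile_eq_add, realProfile_eq_add 1 (36 / π ^ 2),
    realProfile_zero_one_zero, mul_zero, mul_zero]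

lemma magicProfile_ne_zero (hu : 0 < u) (h : ¬∃ n : ℤ, 0 < n ∧ u = 2 * n) :
    magicProfile u ≠ 0 := by
  have hsin := sin_sq_pos_of_not_even hu h
  rcases lt_trichotomy u 2 with hu2 | rfl | hu2
  · obtain ⟨c, hc, hval⟩ := exists_magicProfile_eq_of_lt_two hu hu2
    exact hval ▸ (mul_pos hsin hc).ne'
  · exact absurd ⟨1, by norm_num⟩ h
  · obtain ⟨c, hc, hval⟩ := exists_magicProfile_eq_of_two_lt hu2
    exact hval ▸ neg_ne_zero.2 (mul_pos hsin hc).ne'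

lemma magicFourierProfile_pos (hu : 0 < u) (h : ¬∃ n : ℤ, 0 < n ∧ u = 2 * n) :
    0 < magicFourierProfile u := by
  have hu2 : u ≠ 2 := by
    rintro rfl
    exact h ⟨1, by norm_num⟩
  obtain ⟨c, hc, hval⟩ := exists_magicFourierProfile_eq hu hu2
  exact hval ▸ mul_pos (sin_sq_pos_of_not_even hu h) hc

lemma magicFourierProfile_one_pos : 0 < magicFourierProfile 1 := by
  refine magicFourierProfile_pos one_pos ?_
  rintro ⟨n, -, hn⟩
  have : (1 : ℤ) = 2 * n := by exact_mod_cast hn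
  omega

lemma magicFourierProfile_zero_pos : 0 < magicFourierProfile 0 := by
  -- The two profiles agree at `0`, where `magicProfile` is the integral over `ℝ⁸` of the
  -- nonnegative function with profile `magicFourierProfile`.
  obtain ⟨f, hf, hFf⟩ := exists_schwartzMap_fourier_eq_realProfile
    (E := EuclideanSpace ℝ (Fin 8)) finrank_euclideanSpace_fin 1 (36 / π ^ 2)
  have hf0 : ∀ x, 0 ≤ f x := fun x ↦ by
    rw [hf]
    exact magicFourierProfile_nonneg (by positivity)
  have hf1 : f (EuclideanSpace.single 0 1) ≠ 0 := by
    rw [hf, PiLp.norm_single, norm_one, one_pow]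
    exact magicFourierProfile_one_pos.ne'
  have hintegral : ∫ x, f x = magicFourierProfile 0 := by
    have h0 := hFf 0
    rw [Real.fourier_eq] at h0
    simp only [inner_zero_right, neg_zero, AddChar.map_zero_eq_one, one_smul, norm_zero, ne_eq,
      OfNat.ofNat_ne_zero, not_false_eq_true, zero_pow, integral_complex_ofReal] at h0
    rw [← magicProfile_zero]
    exact_mod_cast h0
  rw [← hintegral]
  exact integral_pos_of_integrable_nonneg_nonzero f.continuous f.integrable hf0 hf1

theorem exists_schwartzMap_fourier_eq_magicProfile {E : Type*} [NormedAddCommGroup E]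
    [InnerProductSpace ℝ E] [FiniteDimensional ℝ E] [MeasurableSpace E] [BorelSpace E]
    (hE : Module.finrank ℝ E = 8) (c : ℝ) :
    ∃ g : 𝓢(E, ℝ), (∀ x, g x = c * magicProfile (‖x‖ ^ 2)) ∧
      ∀ y, 𝓕 (fun x ↦ (g x : ℂ)) y = (c * magicFourierProfile (‖y‖ ^ 2) : ℝ) := by
  obtain ⟨g, hg, hFg⟩ :=
    exists_schwartzMap_fourier_eq_realProfile hE (c * 1) (c * -(36 / π ^ 2))
  refine ⟨g, fun x ↦ by rw [hg, realProfile_mul, magicProfile], fun y ↦ ?_⟩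
  rw [hFg, ← mul_neg, neg_neg, realProfile_mul, magicFourierProfile]

end MagicProfile

end Viazovska

/-- **Theorem 3.** There exists a radial Schwartz function `g : ℝ⁸ → ℝ` with `g(x) ≤ 0` for
`‖x‖ ≥ √2`, `ĝ(x) ≥ 0` for all `x`, `g(0) = ĝ(0) = 1`, and moreover `g(x) ≠ 0` and `ĝ(x) ≠ 0`
for every vector `x` with `‖x‖² ∉ 2ℤ_{>0}`. -/
theorem exists_optimal_function :
    ∃ g : SchwartzMap (EuclideanSpace ℝ (Fin 8)) ℝ,
      (∀ x y : EuclideanSpace ℝ (Fin 8), ‖x‖ = ‖y‖ → g x = g y) ∧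
      (∀ x, Real.sqrt 2 ≤ ‖x‖ → g x ≤ 0) ∧
      (∀ x, ∃ c : ℝ, 0 ≤ c ∧ 𝓕 (fun y => (g y : ℂ)) x = c) ∧
      g 0 = 1 ∧ 𝓕 (fun y => (g y : ℂ)) 0 = 1 ∧
      (∀ x, (¬ ∃ n : ℤ, 0 < n ∧ ‖x‖ ^ 2 = 2 * (n : ℝ)) →
        g x ≠ 0 ∧ 𝓕 (fun y => (g y : ℂ)) x ≠ 0) := by
  have hpos := Viazovska.magicFourierProfile_zero_pos
  obtain ⟨g, hg, hFg⟩ := Viazovska.exists_schwartzMap_fourier_eq_magicProfile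
    (E := EuclideanSpace ℝ (Fin 8)) finrank_euclideanSpace_fin (Viazovska.magicFourierProfile 0)⁻¹
  have hg0 : g 0 = 1 := by simp [hg, Viazovska.magicProfile_zero, hpos.ne']
  have hFg0 : 𝓕 (fun y => (g y : ℂ)) 0 = 1 := by simp [hFg, hpos.ne']
  refine ⟨g, fun x y hxy ↦ by rw [hg, hg, hxy], fun x hx ↦ ?_, fun x ↦ ⟨_, ?_, hFg x⟩, hg0, hFg0,
    fun x hx ↦ ?_⟩
  · rw [hg]
    exact mul_nonpos_of_nonneg_of_nonpos (inv_nonneg.2 hpos.le)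
      (Viazovska.magicProfile_nonpos ((Real.sqrt_le_left (norm_nonneg x)).1 hx))
  · exact mul_nonneg (inv_nonneg.2 hpos.le) (Viazovska.magicFourierProfile_nonneg (sq_nonneg _))
  · rcases eq_or_ne x 0 with rfl | hx0
    · exact ⟨hg0 ▸ one_ne_zero, hFg0 ▸ one_ne_zero⟩
    have hsq : 0 < ‖x‖ ^ 2 := by positivity
    rw [hg, hFg, Complex.ofReal_ne_zero]
    exact ⟨mul_ne_zero (inv_ne_zero hpos.ne') (Viazovska.magicProfile_ne_zero hsq hx),
      mul_ne_zero (inv_ne_zero hpos.ne') (Viazovska.magicFourierProfile_pos hsq hx).ne'⟩
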